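/- arXiv:0902.3419 — 3 statements merged into one kernel-verified Lean document; each statement's English description precedes it below -/
import Mathlib

section
/- Under the stated assumptions including non-periodicity, for every odd integer k ≥ 1 the Dirichlet series D_3(s) = Σ_{n≥1} b_k(n) (log n)^{k/2} n^{−s} converges absolutely for Re(s) > ρ and satisfies, for complex w with Re(w) > 0 and |w| sufficiently small, the bound D_3(ρ + w) = O(|w|^{−k−1/2}); in particular D_3(ρ + w) = o(|w|^{−k−1}) as w → 0 within Re(w) > 0. -/
open scoped BigOperators ENNReal
open Filter Asymptotics

noncomputable section

/-- `af P m n` is the number of ordered `m`-tuples `(n₁,…,n_m)` of elements of `P`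
with product `n` (so `af P 0 n = 1` iff `n = 1`). -/
def af (P : Set ℕ) (m n : ℕ) : ℕ :=
  Nat.card {t : Fin m → ℕ // (∀ i, t i ∈ P) ∧ ∏ i, t i = n}

/-- `aTot P n = a(n) = Σ_{m ≥ 0} a_m(n)`. -/
def aTot (P : Set ℕ) (n : ℕ) : ℝ := ∑' m : ℕ, (af P m n : ℝ)

/-- `Acum P N = A(N) = Σ_{1 ≤ n ≤ N} a(n)`. -/
def Acum (P : Set ℕ) (N : ℕ) : ℝ := ∑ n ∈ Finset.Icc 1 N, aTot P n

/-- The Dirichlet series `𝒫(x) = Σ_{n ∈ 𝒫} n^{-x}` at a real point. -/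
def Pval (P : Set ℕ) (x : ℝ) : ℝ := ∑' n : P, ((n : ℕ) : ℝ) ^ (-x)

/-- `𝒫'(x) = -Σ_{n ∈ 𝒫} n^{-x} log n`. -/
def Pderiv1 (P : Set ℕ) (x : ℝ) : ℝ := -∑' n : P, ((n : ℕ) : ℝ) ^ (-x) * Real.log (n : ℕ)

/-- `𝒫''(x) = Σ_{n ∈ 𝒫} n^{-x} (log n)^2`. -/
def Pderiv2 (P : Set ℕ) (x : ℝ) : ℝ := ∑' n : P, ((n : ℕ) : ℝ) ^ (-x) * (Real.log (n : ℕ)) ^ 2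

/-- The abscissa of convergence `κ` of the Dirichlet series of `P`, as an extended real
(`⊥` when `P` is finite). -/
def kappa (P : Set ℕ) : EReal :=
  sInf {x : EReal | ∃ r : ℝ, x = (r : EReal) ∧ Summable (fun n : P => ((n : ℕ) : ℝ) ^ (-r))}

open Classical in
/-- The (possibly infinite) value `𝒫(x) ∈ (0,∞]` of the Dirichlet series at an
extended-real point; at `x = -∞` every term `n^{-x}` is infinite. -/
def PvalE (P : Set ℕ) (x : EReal) : ℝ≥0∞ :=
  if x = ⊥ then ⊤ else ∑' n : P, ENNReal.ofReal (((n : ℕ) : ℝ) ^ (-x.toReal))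

/-- `b_k(n) = Σ_{m ≥ 0} a_m(n) (m - μ log n)^k`. -/
def bCoef (P : Set ℕ) (μ : ℝ) (k n : ℕ) : ℝ :=
  ∑' m : ℕ, (af P m n : ℝ) * ((m : ℝ) - μ * Real.log n) ^ k

/-- `D₃(s) = Σ_{n ≥ 1} b_k(n) (log n)^{k/2} n^{-s}`. -/
def D3 (P : Set ℕ) (μ : ℝ) (k : ℕ) (s : ℂ) : ℂ :=
  ∑' n : ℕ, ((bCoef P μ k n * (Real.log n) ^ ((k : ℝ) / 2) : ℝ) : ℂ) * (n : ℂ) ^ (-s)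

/-- decomposition of lists by first letter -/
def lEq (ι : Type*) : (Unit ⊕ (ι × List ι)) ≃ List ι where
  toFun := fun x => match x with
    | Sum.inl _ => []
    | Sum.inr p => p.1 :: p.2
  invFun := fun l => match l with
    | [] => Sum.inl ()
    | a :: l => Sum.inr (a, l)
  left_inv := by rintro (_ | ⟨a, l⟩) <;> rfl
  right_inv := by rintro (_ | ⟨a, l⟩) <;> rfl

def Lf {ι : Type*} (lam : ι → ℝ) (l : List ι) : ℝ := (l.map lam).sum
def Xf {ι : Type*} (lam : ι → ℝ) (μ : ℝ) (l : List ι) : ℝ := (l.length : ℝ) - μ * Lf lam l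
def Tf {ι : Type*} (lam : ι → ℝ) (μ : ℝ) (k j : ℕ) (s : ℂ) (l : List ι) : ℂ :=
  (Xf lam μ l : ℂ) ^ k * (Lf lam l : ℂ) ^ j * Complex.exp (-s * Lf lam l)
def Hf {ι : Type*} (lam : ι → ℝ) (μ : ℝ) (k j : ℕ) (s : ℂ) : ℂ :=
  ∑' l : List ι, Tf lam μ k j s l
def tf {ι : Type*} (lam : ι → ℝ) (μ : ℝ) (a b : ℕ) (s : ℂ) (i : ι) : ℂ :=
  ((1 - μ * lam i : ℝ) : ℂ) ^ a * (lam i : ℂ) ^ b * Complex.exp (-s * lam i)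
def pf {ι : Type*} (lam : ι → ℝ) (μ : ℝ) (a b : ℕ) (s : ℂ) : ℂ := ∑' i : ι, tf lam μ a b s i

lemma Lf_nil {ι : Type*} (lam : ι → ℝ) : Lf lam [] = 0 := by simp [Lf]
lemma Lf_cons {ι : Type*} (lam : ι → ℝ) (i : ι) (l : List ι) :
    Lf lam (i :: l) = lam i + Lf lam l := by simp [Lf]
lemma Xf_nil {ι : Type*} (lam : ι → ℝ) (μ : ℝ) : Xf lam μ [] = 0 := by simp [Xf, Lf_nil]
lemma Xf_cons {ι : Type*} (lam : ι → ℝ) (μ : ℝ) (i : ι) (l : List ι) :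
    Xf lam μ (i :: l) = (1 - μ * lam i) + Xf lam μ l := by
  simp only [Xf, Lf_cons, List.length_cons]; push_cast; ring

lemma Lf_ge {ι : Type*} (lam : ι → ℝ) (c : ℝ) (h : ∀ i, c ≤ lam i) (l : List ι) :
    c * l.length ≤ Lf lam l := by
  induction l with
  | nil => simp [Lf_nil]
  | cons i l ih => rw [Lf_cons, List.length_cons]; push_cast; linarith [h i]

lemma Lf_nonneg {ι : Type*} (lam : ι → ℝ) (c : ℝ) (hc : 0 < c) (h : ∀ i, c ≤ lam i) (l : List ι) :
    0 ≤ Lf lam l := le_trans (by positivity) (Lf_ge lam c h l)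

lemma abs_Xf_le {ι : Type*} (lam : ι → ℝ) (μ : ℝ) (c : ℝ) (hc : 0 < c) (h : ∀ i, c ≤ lam i)
    (l : List ι) : |Xf lam μ l| ≤ (1 / c + |μ|) * Lf lam l := by
  have h0 := Lf_nonneg lam c hc h l
  have h1 := Lf_ge lam c h l
  have h2 : (l.length : ℝ) ≤ 1 / c * Lf lam l := by
    rw [one_div, inv_mul_eq_div, le_div_iff₀ hc]; linarith
  calc |Xf lam μ l| ≤ |(l.length : ℝ)| + |μ * Lf lam l| := abs_sub _ _
    _ = l.length + |μ| * Lf lam l := by rw [abs_mul, abs_of_nonneg h0, Nat.abs_cast]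
    _ ≤ _ := by linarith

/-- polynomial times exponential -/
lemma pow_le_exp (n : ℕ) (ε : ℝ) (hε : 0 < ε) :
    ∃ C : ℝ, 0 < C ∧ ∀ x : ℝ, 0 ≤ x → x ^ n ≤ C * Real.exp (ε * x) := by
  refine ⟨n.factorial / ε ^ n, by positivity, fun x hx => ?_⟩
  have := Real.pow_div_factorial_le_exp (ε * x) (by positivity) n
  rw [div_le_iff₀ (by positivity), mul_pow] at this
  rw [div_mul_eq_mul_div, le_div_iff₀ (by positivity)]
  linarith

lemma summable_base {ι : Type*} (lam : ι → ℝ) (h : ∀ i, 0 ≤ lam i) (r ρ : ℝ) (hr : r < ρ)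
    (hs : Summable fun i => Real.exp (-r * lam i)) (n : ℕ) :
    Summable fun i => lam i ^ n * Real.exp (-ρ * lam i) := by
  obtain ⟨C, hC, hb⟩ := pow_le_exp n (ρ - r) (by linarith)
  refine Summable.of_nonneg_of_le (fun i => by have := h i; positivity) (fun i => ?_) (hs.mul_left C)
  calc _ ≤ (C * Real.exp ((ρ - r) * lam i)) * Real.exp (-ρ * lam i) := by
        gcongr; exact hb _ (h i)
    _ = _ := by rw [mul_assoc, ← Real.exp_add]; congr 2; ring

lemma list_summable {ι : Type*} (f : ι → ℝ) (hf : ∀ i, 0 ≤ f i) (hs : Summable f)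
    (h1 : ∑' i, f i < 1) : Summable fun l : List ι => (l.map f).prod := by
  have hprod : ∀ l : List ι, 0 ≤ (l.map f).prod := by
    intro l
    apply List.prod_nonneg
    intro a ha
    obtain ⟨i, _, rfl⟩ := List.mem_map.1 ha
    exact hf i
  set q := ∑' i, f i with hq
  have hq0 : 0 ≤ q := tsum_nonneg hf
  let g : List ι → ℝ≥0∞ := fun l => ENNReal.ofReal (l.map f).prod
  have hqE : ∑' i, ENNReal.ofReal (f i) = ENNReal.ofReal q :=
    (ENNReal.ofReal_tsum_of_nonneg hf hs).symm
  let T : ℕ → ℝ≥0∞ := fun M => ∑' l : List ι, if l.length < M then g l else 0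
  have hT : ∀ M, T (M + 1) = 1 + ENNReal.ofReal q * T M := by
    intro M
    simp only [T]
    rw [← (lEq ι).tsum_eq, Summable.tsum_sum ENNReal.summable ENNReal.summable]
    congr 1
    · simp [lEq, g]
    · rw [ENNReal.tsum_prod', ← hqE, ← ENNReal.tsum_mul_right]
      congr 1; ext i
      rw [← ENNReal.tsum_mul_left]
      congr 1; ext l
      simp only [lEq, Equiv.coe_fn_mk, List.length_cons, Nat.add_lt_add_iff_right, g, List.map_cons,
        List.prod_cons, mul_ite, mul_zero, ENNReal.ofReal_mul (hf i)]
  have hTb : ∀ M, T M ≤ ENNReal.ofReal (1 - q)⁻¹ := by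
    intro M
    induction M with
    | zero => simp [T]
    | succ M ih =>
      rw [hT]
      calc _ ≤ 1 + ENNReal.ofReal q * ENNReal.ofReal (1 - q)⁻¹ := by gcongr
        _ = ENNReal.ofReal (1 + q * (1 - q)⁻¹) := by
          rw [ENNReal.ofReal_add zero_le_one (mul_nonneg hq0 (inv_nonneg.2 (by linarith))),
            ENNReal.ofReal_mul hq0, ENNReal.ofReal_one]
        _ = _ := by
          congr 1
          have : 1 - q ≠ 0 := by linarith
          field_simp; ring
  have hfin : ∑' l, g l ≤ ENNReal.ofReal (1 - q)⁻¹ := by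
    rw [ENNReal.tsum_eq_iSup_sum]
    refine iSup_le fun u => ?_
    refine le_trans ?_ (hTb (u.sup List.length + 1))
    refine le_trans ?_ (ENNReal.sum_le_tsum u)
    refine Finset.sum_le_sum fun l hl => ?_
    rw [if_pos (Nat.lt_succ_of_le (Finset.le_sup (f := List.length) hl))]
  have hne : ∑' l, g l ≠ ⊤ := ne_top_of_le_ne_top ENNReal.ofReal_ne_top hfin
  have := ENNReal.summable_toReal hne
  refine this.congr fun l => ?_
  exact (ENNReal.toReal_ofReal (hprod l))

lemma exp_Lf {ι : Type*} (lam : ι → ℝ) (σ : ℝ) (l : List ι) :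
    Real.exp (-σ * Lf lam l) = (l.map (fun i => Real.exp (-σ * lam i))).prod := by
  induction l with
  | nil => simp [Lf_nil]
  | cons i l ih => rw [Lf_cons, List.map_cons, List.prod_cons, ← ih, ← Real.exp_add]; congr 1; ring

section abs
variable {ι : Type*} (lam : ι → ℝ) (c : ℝ) (hc : 0 < c) (hlam : ∀ i, c ≤ lam i)
  (r ρ : ℝ) (hr : r < ρ) (hs : Summable fun i => Real.exp (-r * lam i))
  (h1 : ∑' i, Real.exp (-ρ * lam i) = 1) (μ : ℝ)

include hc hlam hr hs h1

lemma summable_exp_Lf (σ : ℝ) (hσ : ρ < σ) : Summable fun l => Real.exp (-σ * Lf lam l) := by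
  simp_rw [exp_Lf]
  have h0 : ∀ i, 0 ≤ lam i := fun i => hc.le.trans (hlam i)
  have hsρ : Summable fun i => Real.exp (-ρ * lam i) := by
    simpa using summable_base lam h0 r ρ hr hs 0
  have hsσ : Summable fun i => Real.exp (-σ * lam i) := by
    simpa using summable_base lam h0 r σ (hr.trans hσ) hs 0
  refine list_summable _ (fun i => (Real.exp_pos _).le) hsσ ?_
  rw [← h1]
  have hne : Nonempty ι := by
    by_contra hh
    rw [not_nonempty_iff] at hh
    simp at h1
  obtain ⟨i⟩ := hne
  have hlt : ∀ i, Real.exp (-σ * lam i) < Real.exp (-ρ * lam i) := fun i => by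
    apply Real.exp_lt_exp.2
    have := hc.trans_le (hlam i)
    nlinarith
  exact Summable.tsum_lt_tsum (i := i) (fun i => (hlt i).le) (hlt i) hsσ hsρ

lemma summable_words (k j : ℕ) (σ : ℝ) (hσ : ρ < σ) :
    Summable fun l => |Xf lam μ l| ^ k * Lf lam l ^ j * Real.exp (-σ * Lf lam l) := by
  obtain ⟨C, hC, hb⟩ := pow_le_exp (k + j) ((σ - ρ) / 2) (by linarith)
  have hsum := summable_exp_Lf lam c hc hlam r ρ hr hs h1 ((σ + ρ) / 2) (by linarith)
  refine Summable.of_nonneg_of_le (fun l => ?_) (fun l => ?_)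
    (hsum.mul_left ((1 / c + |μ|) ^ k * C))
  · have := Lf_nonneg lam c hc hlam l
    positivity
  · have h0 := Lf_nonneg lam c hc hlam l
    have hX := abs_Xf_le lam μ c hc hlam l
    calc _ ≤ ((1 / c + |μ|) * Lf lam l) ^ k * Lf lam l ^ j * Real.exp (-σ * Lf lam l) := by gcongr
      _ = (1 / c + |μ|) ^ k * (Lf lam l ^ (k + j)) * Real.exp (-σ * Lf lam l) := by rw [mul_pow]; ring
      _ ≤ (1 / c + |μ|) ^ k * (C * Real.exp ((σ - ρ) / 2 * Lf lam l)) * Real.exp (-σ * Lf lam l) := by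
        gcongr; exact hb _ h0
      _ = (1 / c + |μ|) ^ k * C * (Real.exp ((σ - ρ) / 2 * Lf lam l) * Real.exp (-σ * Lf lam l)) := by
        ring
      _ = _ := by rw [← Real.exp_add]; congr 2; ring

omit hr hs h1 in
lemma norm_Tf (k j : ℕ) (s : ℂ) (l : List ι) :
    ‖Tf lam μ k j s l‖ = |Xf lam μ l| ^ k * Lf lam l ^ j * Real.exp (-s.re * Lf lam l) := by
  have h0 := Lf_nonneg lam c hc hlam l
  simp [Tf, Complex.norm_exp, abs_of_nonneg h0]

lemma summable_Tf (k j : ℕ) (s : ℂ) (hσ : ρ < s.re) : Summable fun l => ‖Tf lam μ k j s l‖ := by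
  simp_rw [norm_Tf lam c hc hlam]
  exact summable_words lam c hc hlam r ρ hr hs h1 μ k j s.re hσ

omit hr hs h1 in
lemma norm_tf_le (a b : ℕ) (s : ℂ) (hσ : ρ ≤ s.re) (i : ι) :
    ‖tf lam μ a b s i‖ ≤ (1 / c + |μ|) ^ a * (lam i ^ (a + b) * Real.exp (-ρ * lam i)) := by
  have h0 := hc.trans_le (hlam i)
  have e1 : ‖((1 - μ * lam i : ℝ) : ℂ)‖ ≤ (1 / c + |μ|) * lam i := by
    have := abs_Xf_le lam μ c hc hlam [i]
    rw [Xf_cons, Lf_cons, Xf_nil, Lf_nil, add_zero, add_zero] at this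
    rwa [Complex.norm_real, Real.norm_eq_abs]
  have e2 : ‖Complex.exp (-s * lam i)‖ ≤ Real.exp (-ρ * lam i) := by
    rw [Complex.norm_exp]; apply Real.exp_le_exp.2
    simp; nlinarith
  have e3 : ‖(lam i : ℂ)‖ = lam i := by rw [Complex.norm_real, Real.norm_eq_abs, abs_of_pos h0]
  rw [tf, norm_mul, norm_mul, norm_pow, norm_pow, e3]
  calc _ ≤ ((1 / c + |μ|) * lam i) ^ a * lam i ^ b * Real.exp (-ρ * lam i) := by gcongr
    _ = _ := by rw [mul_pow]; ring

omit h1 in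
lemma summable_tf (a b : ℕ) (s : ℂ) (hσ : ρ ≤ s.re) : Summable fun i => ‖tf lam μ a b s i‖ :=
  Summable.of_nonneg_of_le (fun _ => norm_nonneg _) (norm_tf_le lam c hc hlam ρ μ a b s hσ)
    ((summable_base lam (fun i => hc.le.trans (hlam i)) r ρ hr hs (a + b)).mul_left _)

omit h1 in
lemma pf_bdd (a b : ℕ) : ∃ C : ℝ, ∀ s : ℂ, ρ ≤ s.re → ‖pf lam μ a b s‖ ≤ C := by
  refine ⟨_, fun s hσ => tsum_of_norm_bounded
    ((summable_base lam (fun i => hc.le.trans (hlam i)) r ρ hr hs (a + b)).mul_left _).hasSum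
    (norm_tf_le lam c hc hlam ρ μ a b s hσ)⟩

omit hc hlam hr hs h1 in
lemma Tf_cons (k j : ℕ) (s : ℂ) (i : ι) (l : List ι) :
    Tf lam μ k j s (i :: l) = ∑ p ∈ Finset.range (k + 1) ×ˢ Finset.range (j + 1),
      ((k.choose p.1 * j.choose p.2 : ℕ) : ℂ) *
        (tf lam μ p.1 p.2 s i * Tf lam μ (k - p.1) (j - p.2) s l) := by
  rw [Finset.sum_product]
  have e : Complex.exp (-s * ((lam i + Lf lam l : ℝ) : ℂ)) =
      Complex.exp (-s * lam i) * Complex.exp (-s * Lf lam l) := by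
    rw [← Complex.exp_add]; congr 1; push_cast; ring
  rw [Tf, Xf_cons, Lf_cons, e, Complex.ofReal_add, Complex.ofReal_add, add_pow, add_pow,
    Finset.sum_mul_sum, Finset.sum_mul]
  refine Finset.sum_congr rfl fun a _ => ?_
  rw [Finset.sum_mul]
  refine Finset.sum_congr rfl fun b _ => ?_
  simp only [tf, Tf]; push_cast; ring

lemma Hf_rec (k j : ℕ) (s : ℂ) (hσ : ρ < s.re) :
    Hf lam μ k j s = Tf lam μ k j s [] +
      ∑ p ∈ Finset.range (k + 1) ×ˢ Finset.range (j + 1),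
      ((k.choose p.1 * j.choose p.2 : ℕ) : ℂ) *
        (pf lam μ p.1 p.2 s * Hf lam μ (k - p.1) (j - p.2) s) := by
  have hS := (summable_Tf lam c hc hlam r ρ hr hs h1 μ k j s hσ).of_norm
  have hS' : Summable (fun x => Tf lam μ k j s (lEq ι x)) := (lEq ι).summable_iff.2 hS
  rw [Hf, ← (lEq ι).tsum_eq, Summable.tsum_sum]
  · congr 1
    · simp [lEq]
    · have : ∀ x : ι × List ι, Tf lam μ k j s (lEq ι (Sum.inr x)) =
        ∑ p ∈ Finset.range (k + 1) ×ˢ Finset.range (j + 1),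
          ((k.choose p.1 * j.choose p.2 : ℕ) : ℂ) *
          (tf lam μ p.1 p.2 s x.1 * Tf lam μ (k - p.1) (j - p.2) s x.2) := fun x =>
        Tf_cons lam μ k j s x.1 x.2
      simp_rw [this]
      have hsum := fun p : ℕ × ℕ => summable_mul_of_summable_norm
        (summable_tf lam c hc hlam r ρ hr hs μ p.1 p.2 s hσ.le)
        (summable_Tf lam c hc hlam r ρ hr hs h1 μ (k - p.1) (j - p.2) s hσ)
      rw [Summable.tsum_finsetSum (fun p _ => (hsum p).mul_left _)]
      refine Finset.sum_congr rfl fun p _ => ?_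
      rw [tsum_mul_left, pf, Hf, tsum_mul_tsum_of_summable_norm
        (summable_tf lam c hc hlam r ρ hr hs μ p.1 p.2 s hσ.le)
        (summable_Tf lam c hc hlam r ρ hr hs h1 μ (k - p.1) (j - p.2) s hσ)]
  · exact hS'.comp_injective Sum.inl_injective
  · exact hS'.comp_injective Sum.inr_injective

omit hc hlam hr hs h1 in
lemma exp_bd1 (z : ℂ) (hz : z.re ≤ 0) : ‖Complex.exp z - 1‖ ≤ 2 * ‖z‖ := by
  rcases le_total ‖z‖ 1 with h | h
  · exact Complex.norm_exp_sub_one_le h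
  · have : ‖Complex.exp z‖ ≤ 1 := by rw [Complex.norm_exp]; exact Real.exp_le_one_iff.2 hz
    calc _ ≤ ‖Complex.exp z‖ + ‖(1 : ℂ)‖ := norm_sub_le _ _
      _ ≤ _ := by rw [norm_one]; linarith

omit hc hlam hr hs h1 in
lemma exp_bd2 (z : ℂ) (hz : z.re ≤ 0) : ‖Complex.exp z - 1 - z‖ ≤ 3 * ‖z‖ ^ 2 := by
  rcases le_total ‖z‖ 1 with h | h
  · have := Complex.norm_exp_sub_one_sub_id_le h
    nlinarith [sq_nonneg ‖z‖]
  · have h1 := exp_bd1 z hz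
    calc _ ≤ ‖Complex.exp z - 1‖ + ‖z‖ := norm_sub_le _ _
      _ ≤ 3 * ‖z‖ := by linarith
      _ ≤ _ := by nlinarith

omit hc hlam hr hs h1 in
lemma tf_add (a b : ℕ) (w : ℂ) (i : ι) :
    tf lam μ a b (ρ + w) i = tf lam μ a b ρ i * Complex.exp (-w * lam i) := by
  simp only [tf]
  rw [mul_assoc _ (Complex.exp _) (Complex.exp _), ← Complex.exp_add]
  congr 2; ring

omit hc hlam hr hs h1 in
lemma tf_zero_zero (i : ι) : tf lam μ 0 0 ρ i = ((Real.exp (-ρ * lam i) : ℝ) : ℂ) := by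
  simp [tf]

variable (hμ : μ * ∑' i, lam i * Real.exp (-ρ * lam i) = 1)
include hμ

lemma pf_one_zero : pf lam μ 1 0 ρ = 0 := by
  have h0 : ∀ i, 0 ≤ lam i := fun i => hc.le.trans (hlam i)
  have s0 := summable_base lam h0 r ρ hr hs 0
  have s1 := summable_base lam h0 r ρ hr hs 1
  simp only [pow_zero, one_mul, pow_one] at s0 s1
  have : ∀ i, tf lam μ 1 0 ρ i =
      ((Real.exp (-ρ * lam i) - μ * (lam i * Real.exp (-ρ * lam i)) : ℝ) : ℂ) := by
    intro i; simp [tf]; ring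
  rw [pf]
  simp_rw [this]
  rw [← Complex.ofReal_tsum, s0.tsum_sub (s1.mul_left μ), tsum_mul_left, hμ, h1]
  simp

lemma pf_one_zero_bd : ∃ C : ℝ, ∀ w : ℂ, 0 < w.re → ‖pf lam μ 1 0 (ρ + w)‖ ≤ C * ‖w‖ := by
  have h0 : ∀ i, 0 ≤ lam i := fun i => hc.le.trans (hlam i)
  have s2 := summable_base lam h0 r ρ hr hs 2
  refine ⟨∑' i, (2 * (1 / c + |μ|)) * (lam i ^ 2 * Real.exp (-ρ * lam i)), fun w hw => ?_⟩
  have e : pf lam μ 1 0 (ρ + w) = ∑' i, (tf lam μ 1 0 (ρ + w) i - tf lam μ 1 0 ρ i) := by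
    rw [Summable.tsum_sub]
    · have := pf_one_zero lam c hc hlam r ρ hr hs h1 μ hμ
      rw [pf] at this
      rw [this, sub_zero, pf]
    · exact (summable_tf lam c hc hlam r ρ hr hs μ 1 0 _ (by simpa using hw.le)).of_norm
    · exact (summable_tf lam c hc hlam r ρ hr hs μ 1 0 _ (by simp)).of_norm
  rw [e]
  refine tsum_of_norm_bounded ((s2.mul_left _).hasSum.mul_right ‖w‖) fun i => ?_
  rw [tf_add]
  have e1 := norm_tf_le lam c hc hlam ρ μ 1 0 ρ (by simp) i
  have e2 := exp_bd1 (-w * lam i) (by simp; have := h0 i; positivity)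
  have e3 : ‖-w * (lam i : ℂ)‖ = ‖w‖ * lam i := by simp [abs_of_nonneg (h0 i)]
  rw [e3] at e2
  simp only [pow_one, add_zero] at e1
  have := h0 i
  calc _ = ‖tf lam μ 1 0 ρ i‖ * ‖Complex.exp (-w * lam i) - 1‖ := by rw [← norm_mul]; congr 1; ring
    _ ≤ ((1 / c + |μ|) * (lam i * Real.exp (-ρ * lam i))) * (2 * (‖w‖ * lam i)) := by gcongr
    _ = _ := by ring

lemma pf_zero_zero_bd : ∃ m δ : ℝ, 0 < m ∧ 0 < δ ∧ ∀ w : ℂ, 0 < w.re → ‖w‖ < δ →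
    m * ‖w‖ ≤ ‖1 - pf lam μ 0 0 (ρ + w)‖ := by
  have h0 : ∀ i, 0 ≤ lam i := fun i => hc.le.trans (hlam i)
  have s0 := summable_base lam h0 r ρ hr hs 0
  have s1 := summable_base lam h0 r ρ hr hs 1
  have s2 := summable_base lam h0 r ρ hr hs 2
  simp only [pow_zero, one_mul, pow_one] at s0 s1
  set M := ∑' i, lam i * Real.exp (-ρ * lam i) with hM
  set S := ∑' i, lam i ^ 2 * Real.exp (-ρ * lam i) with hS
  have hM0 : 0 < M := by
    have : 0 ≤ M := tsum_nonneg fun i => mul_nonneg (h0 i) (Real.exp_pos _).le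
    rcases this.lt_or_eq with h | h
    · exact h
    · rw [← h] at hμ; simp at hμ
  have hS0 : 0 ≤ S := tsum_nonneg fun i => by positivity
  have key : ∀ w : ℂ, 0 < w.re → ‖pf lam μ 0 0 (ρ + w) - 1 + w * M‖ ≤ (3 * S) * ‖w‖ ^ 2 := by
    intro w hw
    have H0 : HasSum (fun i => tf lam μ 0 0 (ρ + w) i) (pf lam μ 0 0 (ρ + w)) :=
      (summable_tf lam c hc hlam r ρ hr hs μ 0 0 _ (by simpa using hw.le)).of_norm.hasSum
    have H1 : HasSum (fun i => ((Real.exp (-ρ * lam i) : ℝ) : ℂ)) ((1 : ℝ) : ℂ) :=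
      Complex.hasSum_ofReal.2 (h1 ▸ s0.hasSum)
    have H2 : HasSum (fun i => ((lam i * Real.exp (-ρ * lam i) : ℝ) : ℂ)) ((M : ℝ) : ℂ) :=
      Complex.hasSum_ofReal.2 s1.hasSum
    have H := (H0.sub H1).add (H2.mul_left w)
    rw [Complex.ofReal_one] at H
    rw [← H.tsum_eq]
    refine tsum_of_norm_bounded ((s2.hasSum.mul_left 3).mul_right (‖w‖ ^ 2)) fun i => ?_
    rw [tf_add, tf_zero_zero]
    have e2 := exp_bd2 (-w * lam i) (by simp; have := h0 i; positivity)
    have e3 : ‖-w * (lam i : ℂ)‖ = ‖w‖ * lam i := by simp [abs_of_nonneg (h0 i)]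
    rw [e3] at e2
    calc _ = ‖((Real.exp (-ρ * lam i) : ℝ) : ℂ) * (Complex.exp (-w * lam i) - 1 - -w * lam i)‖ := by
            congr 1; push_cast; ring
      _ = Real.exp (-ρ * lam i) * ‖Complex.exp (-w * lam i) - 1 - -w * lam i‖ := by
            rw [norm_mul, Complex.norm_real, Real.norm_of_nonneg (Real.exp_pos _).le]
      _ ≤ Real.exp (-ρ * lam i) * (3 * (‖w‖ * lam i) ^ 2) := by gcongr
      _ = _ := by ring
  refine ⟨M / 2, M / (6 * S + 1), by positivity, by positivity, fun w hw hwd => ?_⟩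
  have k1 := key w hw
  have k2 : ‖w‖ * M ≤ ‖1 - pf lam μ 0 0 (ρ + w)‖ + ‖pf lam μ 0 0 (ρ + w) - 1 + w * M‖ := by
    calc ‖w‖ * M = ‖w * M‖ := by simp [abs_of_pos hM0]
      _ = ‖(1 - pf lam μ 0 0 (ρ + w)) + (pf lam μ 0 0 (ρ + w) - 1 + w * M)‖ := by congr 1; ring
      _ ≤ _ := norm_add_le _ _
  rw [lt_div_iff₀ (by positivity)] at hwd
  have k3 : (3 * S) * ‖w‖ ^ 2 ≤ ‖w‖ * (M / 2) := by
    nlinarith [norm_nonneg w]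
  linarith

lemma Hf_bigO (n : ℕ) : ∀ k j : ℕ, k + j ≤ n →
    (fun w : ℂ => Hf lam μ k j (ρ + w)) =O[nhdsWithin 0 {w : ℂ | 0 < w.re}]
      fun w => (‖w‖⁻¹) ^ (k / 2 + j + 1) := by
  have hpos : ∀ᶠ w : ℂ in nhdsWithin 0 {w : ℂ | 0 < w.re}, 0 < w.re := self_mem_nhdsWithin
  have hsm : ∀ d : ℝ, 0 < d → ∀ᶠ w : ℂ in nhdsWithin 0 {w : ℂ | 0 < w.re}, ‖w‖ < d := by
    intro d hd
    filter_upwards [mem_nhdsWithin_of_mem_nhds (Metric.ball_mem_nhds (0 : ℂ) hd)] with w hw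
    simpa using hw
  have hv : ∀ᶠ w : ℂ in nhdsWithin 0 {w : ℂ | 0 < w.re}, 1 ≤ ‖w‖⁻¹ := by
    filter_upwards [hpos, hsm 1 one_pos] with w hw hw1
    have : 0 < ‖w‖ := norm_pos_iff.2 (by rintro rfl; simp at hw)
    exact (one_le_inv₀ this).2 hw1.le
  have hmono : ∀ a b : ℕ, a ≤ b → (fun w : ℂ => (‖w‖⁻¹) ^ a)
      =O[nhdsWithin 0 {w : ℂ | 0 < w.re}] fun w => (‖w‖⁻¹) ^ b := by
    intro a b hab
    refine IsBigO.of_bound 1 ?_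
    filter_upwards [hv] with w hw
    rw [one_mul, norm_pow, norm_pow, norm_inv, norm_norm]
    exact pow_le_pow_right₀ hw hab
  have hp : ∀ a b : ℕ, (fun w : ℂ => pf lam μ a b (ρ + w))
      =O[nhdsWithin 0 {w : ℂ | 0 < w.re}] fun _ => (1 : ℝ) := by
    intro a b
    obtain ⟨C, hC⟩ := pf_bdd lam c hc hlam r ρ hr hs μ a b
    refine IsBigO.of_bound C ?_
    filter_upwards [hpos] with w hw
    simpa using hC (ρ + w) (by simpa using hw.le)
  have hp1 : (fun w : ℂ => pf lam μ 1 0 (ρ + w))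
      =O[nhdsWithin 0 {w : ℂ | 0 < w.re}] fun w => ‖w‖ := by
    obtain ⟨C, hC⟩ := pf_one_zero_bd lam c hc hlam r ρ hr hs h1 μ hμ
    refine IsBigO.of_bound C ?_
    filter_upwards [hpos] with w hw
    simpa using hC w hw
  obtain ⟨m, δ, hm, hδ, hmδ⟩ := pf_zero_zero_bd lam c hc hlam r ρ hr hs h1 μ hμ
  have hne : ∀ᶠ w : ℂ in nhdsWithin 0 {w : ℂ | 0 < w.re}, 1 - pf lam μ 0 0 (ρ + w) ≠ 0 := by
    filter_upwards [hpos, hsm δ hδ] with w hw hw1 h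
    have := hmδ w hw hw1
    have h2 : 0 < ‖w‖ := norm_pos_iff.2 (by rintro rfl; simp at hw)
    rw [h, norm_zero] at this
    nlinarith [mul_pos hm h2]
  have hinv : (fun w : ℂ => (1 - pf lam μ 0 0 (ρ + w))⁻¹)
      =O[nhdsWithin 0 {w : ℂ | 0 < w.re}] fun w => ‖w‖⁻¹ := by
    refine IsBigO.of_bound m⁻¹ ?_
    filter_upwards [hpos, hsm δ hδ] with w hw hw1
    have := hmδ w hw hw1
    have h2 : 0 < ‖w‖ := norm_pos_iff.2 (by rintro rfl; simp at hw)
    rw [norm_inv, norm_inv, norm_norm, ← mul_inv]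
    exact inv_anti₀ (by positivity) this
  induction n using Nat.strong_induction_on with
  | _ n ih =>
  intro k j hkj
  set I := (Finset.range (k + 1) ×ˢ Finset.range (j + 1)).erase (0, 0) with hI
  have hrec : (fun w : ℂ => Hf lam μ k j (ρ + w)) =ᶠ[nhdsWithin 0 {w : ℂ | 0 < w.re}]
      fun w => (1 - pf lam μ 0 0 (ρ + w))⁻¹ * (Tf lam μ k j (ρ + w) [] +
        ∑ p ∈ I, ((k.choose p.1 * j.choose p.2 : ℕ) : ℂ) *
        (pf lam μ p.1 p.2 (ρ + w) * Hf lam μ (k - p.1) (j - p.2) (ρ + w))) := by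
    filter_upwards [hpos, hne] with w hw hw1
    rw [eq_inv_mul_iff_mul_eq₀ hw1]
    have := Hf_rec lam c hc hlam r ρ hr hs h1 μ k j (ρ + w) (by simpa using hw)
    rw [← Finset.add_sum_erase _ _ (show ((0, 0) : ℕ × ℕ) ∈
      Finset.range (k + 1) ×ˢ Finset.range (j + 1) by simp)] at this
    simp only [Nat.choose_zero_right, mul_one, Nat.cast_one, one_mul, Nat.sub_zero] at this
    linear_combination this
  refine hrec.trans_isBigO ?_
  have hbr : (fun w : ℂ => Tf lam μ k j (ρ + w) [] +
        ∑ p ∈ I, ((k.choose p.1 * j.choose p.2 : ℕ) : ℂ) *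
        (pf lam μ p.1 p.2 (ρ + w) * Hf lam μ (k - p.1) (j - p.2) (ρ + w)))
      =O[nhdsWithin 0 {w : ℂ | 0 < w.re}] fun w => (‖w‖⁻¹) ^ (k / 2 + j) := by
    refine IsBigO.add ?_ ?_
    · have : (fun w : ℂ => Tf lam μ k j (ρ + w) []) = fun _ => (0 : ℂ) ^ k * 0 ^ j := by
        funext w; simp [Tf, Xf_nil, Lf_nil]
      rw [this]
      refine IsBigO.trans (isBigO_const_const _ (one_ne_zero (α := ℝ)) _) ?_
      simpa using hmono 0 (k / 2 + j) (Nat.zero_le _)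
    · refine IsBigO.fun_sum fun p hp' => ?_
      obtain ⟨a, b⟩ := p
      simp only [hI, Finset.mem_erase, Finset.mem_product, Finset.mem_range, ne_eq, Prod.mk.injEq] at hp'
      refine IsBigO.const_mul_left ?_ _
      have hH := ih (k - a + (j - b)) (by omega) (k - a) (j - b) le_rfl
      by_cases hab : a = 1 ∧ b = 0
      · obtain ⟨rfl, rfl⟩ := hab
        refine (hp1.mul hH).trans ?_
        have := hmono ((k - 1) / 2 + (j - 0)) (k / 2 + j) (by omega)
        refine IsBigO.trans (EventuallyEq.isBigO ?_) this
        filter_upwards [hpos] with w hw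
        have h2 : ‖w‖ ≠ 0 := norm_ne_zero_iff.2 (by rintro rfl; simp at hw)
        rw [pow_succ]; field_simp
      · refine ((hp a b).mul hH).trans ?_
        simpa using hmono ((k - a) / 2 + (j - b) + 1) (k / 2 + j) (by omega)
  refine (hinv.mul hbr).trans (EventuallyEq.isBigO ?_)
  filter_upwards with w
  ring

lemma Hf_unif (q : ℕ) : ∃ C δ : ℝ, 0 < C ∧ 0 < δ ∧ ∀ w : ℂ, 0 < w.re → ‖w‖ < δ → ∀ t : ℝ, 0 < t →
    ‖Hf lam μ (2 * q + 1) (q + 1) (ρ + w + t)‖ ≤ C * ((max ‖w‖ t)⁻¹) ^ (2 * q + 2) := by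
  have hO := Hf_bigO lam c hc hlam r ρ hr hs h1 μ hμ _ (2 * q + 1) (q + 1) le_rfl
  rw [show (2 * q + 1) / 2 + (q + 1) + 1 = 2 * q + 2 by omega] at hO
  obtain ⟨C0, hC0, hb⟩ := hO.exists_pos
  rw [isBigOWith_iff, Filter.Eventually, Metric.mem_nhdsWithin_iff] at hb
  obtain ⟨ε, hε, hball⟩ := hb
  have hnear : ∀ w : ℂ, 0 < w.re → ‖w‖ < ε →
      ‖Hf lam μ (2 * q + 1) (q + 1) (ρ + w)‖ ≤ C0 * (‖w‖⁻¹) ^ (2 * q + 2) := by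
    intro w hw hwε
    have := hball ⟨by simpa using hwε, hw⟩
    simpa using this
  obtain ⟨K, hK, hKb⟩ := pow_le_exp (2 * q + 2) (c / 2) (by positivity)
  have hsum := summable_words lam c hc hlam r ρ hr hs h1 μ (2 * q + 1) (q + 1) (ρ + ε / 4)
    (by linarith)
  set S := ∑' l, |Xf lam μ l| ^ (2 * q + 1) * Lf lam l ^ (q + 1) *
    Real.exp (-(ρ + ε / 4) * Lf lam l) with hS
  have hS0 : 0 ≤ S := tsum_nonneg fun l => by
    have := Lf_nonneg lam c hc hlam l
    positivity
  refine ⟨C0 + K * S, ε / 2, by positivity, by positivity, fun w hw hwε t ht => ?_⟩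
  have hw0 : 0 < ‖w‖ := norm_pos_iff.2 (by rintro rfl; simp at hw)
  have hmax : 0 < max ‖w‖ t := lt_max_of_lt_right ht
  have hP : 0 ≤ ((max ‖w‖ t)⁻¹) ^ (2 * q + 2) := by positivity
  rcases lt_or_ge t (ε / 2) with h | h
  · have e1 : ‖w + (t : ℂ)‖ < ε := by
      calc _ ≤ ‖w‖ + ‖(t : ℂ)‖ := norm_add_le _ _
        _ = ‖w‖ + t := by rw [Complex.norm_real, Real.norm_of_nonneg ht.le]
        _ < ε := by linarith
    have e2 : max ‖w‖ t ≤ ‖w + (t : ℂ)‖ := by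
      apply max_le
      · apply (sq_le_sq₀ (norm_nonneg _) (norm_nonneg _)).1
        rw [← Complex.normSq_eq_norm_sq, ← Complex.normSq_eq_norm_sq, Complex.normSq_apply,
          Complex.normSq_apply]
        simp; nlinarith [mul_pos hw ht]
      · calc t ≤ (w + (t : ℂ)).re := by simp [hw.le]
          _ ≤ _ := Complex.re_le_norm _
    have := hnear (w + t) (by simp; linarith) e1
    rw [← add_assoc] at this
    calc _ ≤ C0 * (‖w + (t : ℂ)‖⁻¹) ^ (2 * q + 2) := this
      _ ≤ C0 * ((max ‖w‖ t)⁻¹) ^ (2 * q + 2) := by gcongr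
      _ ≤ _ := by nlinarith [mul_nonneg (mul_nonneg hK.le hS0) hP]
  · have hm : max ‖w‖ t = t := max_eq_right (by linarith)
    rw [hm] at hP ⊢
    have : ‖Hf lam μ (2 * q + 1) (q + 1) (ρ + w + t)‖ ≤ S * (K * (t⁻¹) ^ (2 * q + 2)) := by
      refine tsum_of_norm_bounded (hsum.hasSum.mul_right _) fun l => ?_
      rw [norm_Tf lam c hc hlam]
      have hL := Lf_nonneg lam c hc hlam l
      rcases l with _ | ⟨i, l⟩
      · simp [Lf_nil, Xf_nil]
      · set L := Lf lam (i :: l)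
        have hcL : c ≤ L := by
          have := Lf_ge lam c hlam (i :: l)
          rw [List.length_cons] at this
          push_cast at this
          have h3 : 0 ≤ c * (l.length : ℝ) := by positivity
          change _ ≤ L at this
          linarith
        have e1 : Real.exp (-(ρ + w + t : ℂ).re * L) ≤
            Real.exp (-(ρ + ε / 4) * L) * Real.exp (-(c / 2 * t)) := by
          rw [← Real.exp_add]; apply Real.exp_le_exp.2
          simp
          nlinarith [mul_nonneg hw.le hL, mul_nonneg ht.le (sub_nonneg.2 hcL),
            mul_nonneg (sub_nonneg.2 h) hL]
        have e2 : Real.exp (-(c / 2 * t)) ≤ K * (t⁻¹) ^ (2 * q + 2) := by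
          have := hKb t ht.le
          rw [Real.exp_neg, inv_pow, ← div_eq_mul_inv, le_div_iff₀ (by positivity),
            inv_mul_le_iff₀ (Real.exp_pos _)]
          linarith
        calc _ ≤ |Xf lam μ (i :: l)| ^ (2 * q + 1) * L ^ (q + 1) *
              (Real.exp (-(ρ + ε / 4) * L) * (K * (t⁻¹) ^ (2 * q + 2))) := by
              gcongr
              exact e1.trans (by gcongr)
          _ = _ := by ring
    calc _ ≤ _ := this
      _ ≤ _ := by nlinarith [mul_nonneg hC0.le hP]

omit hc hlam hr hs h1 hμ in
lemma int_bd (n : ℕ) (hn : 2 ≤ n) (a : ℝ) (ha : 0 < a) :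
    MeasureTheory.IntegrableOn (fun t : ℝ => t ^ ((1 / 2 : ℝ) - 1) * ((max a t)⁻¹) ^ n) (Set.Ioi 0) ∧
    ∫ t in Set.Ioi (0 : ℝ), t ^ ((1 / 2 : ℝ) - 1) * ((max a t)⁻¹) ^ n ≤ 4 * a ^ ((1 / 2 : ℝ) - n) := by
  have hn' : (2 : ℝ) ≤ n := by exact_mod_cast hn
  have hU : Set.Ioi (0 : ℝ) = Set.Ioc 0 a ∪ Set.Ioi a := (Set.Ioc_union_Ioi_eq_Ioi ha.le).symm
  have E1 : Set.EqOn (fun t : ℝ => t ^ ((1 / 2 : ℝ) - 1) * ((max a t)⁻¹) ^ n)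
      (fun t : ℝ => t ^ ((1 / 2 : ℝ) - 1) * (a⁻¹) ^ n) (Set.Ioc 0 a) := by
    intro t ht
    simp only [max_eq_left ht.2]
  have E2 : Set.EqOn (fun t : ℝ => t ^ ((1 / 2 : ℝ) - 1) * ((max a t)⁻¹) ^ n)
      (fun t : ℝ => t ^ ((1 / 2 : ℝ) - 1 - n)) (Set.Ioi a) := by
    intro t ht
    have ht' : a < t := ht
    have ht0 : 0 < t := ha.trans ht'
    simp only [max_eq_right ht'.le]
    rw [Real.rpow_sub ht0 _ (n : ℝ), Real.rpow_natCast, inv_pow]; exact (div_eq_mul_inv _ _).symm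
  have I1' : MeasureTheory.IntegrableOn (fun t : ℝ => t ^ ((1 / 2 : ℝ) - 1) * (a⁻¹) ^ n)
      (Set.Ioc 0 a) := by
    have := (intervalIntegral.intervalIntegrable_rpow' (a := 0) (b := a)
      (show (-1 : ℝ) < 1 / 2 - 1 by norm_num))
    rw [intervalIntegrable_iff_integrableOn_Ioc_of_le ha.le] at this
    exact this.mul_const _
  have I2' := integrableOn_Ioi_rpow_of_lt (show (1 / 2 : ℝ) - 1 - n < -1 by linarith) ha
  have I1 := I1'.congr_fun E1.symm measurableSet_Ioc
  have I2 := I2'.congr_fun E2.symm measurableSet_Ioi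
  refine ⟨by rw [hU]; exact I1.union I2, ?_⟩
  rw [hU, MeasureTheory.setIntegral_union
    (show Disjoint (Set.Ioc 0 a) (Set.Ioi a) from
      Set.disjoint_left.2 fun x hx hx' => absurd hx.2 (not_le.2 hx')) measurableSet_Ioi I1 I2,
    MeasureTheory.setIntegral_congr_fun measurableSet_Ioc E1,
    MeasureTheory.setIntegral_congr_fun measurableSet_Ioi E2,
    integral_Ioi_rpow_of_lt (show (1 / 2 : ℝ) - 1 - n < -1 by linarith) ha,
    MeasureTheory.integral_mul_const, ← intervalIntegral.integral_of_le ha.le,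
    integral_rpow (Or.inl (by norm_num))]
  have z : (0 : ℝ) ^ ((1 / 2 : ℝ) - 1 + 1) = 0 := Real.zero_rpow (by norm_num)
  rw [z]
  have e1 : a ^ ((1 / 2 : ℝ) - 1 - n + 1) = a ^ ((1 / 2 : ℝ) - n) := by congr 1; ring
  have e2 : a ^ ((1 / 2 : ℝ) - 1 + 1) * (a⁻¹) ^ n = a ^ ((1 / 2 : ℝ) - n) := by
    rw [show (1 / 2 : ℝ) - 1 + 1 = 1 / 2 by ring, Real.rpow_sub ha _ (n : ℝ), Real.rpow_natCast,
      inv_pow]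
    exact (div_eq_mul_inv _ _).symm
  rw [e1]
  have hA : 0 ≤ a ^ ((1 / 2 : ℝ) - n) := by positivity
  have e3 : (a ^ ((1 / 2 : ℝ) - 1 + 1) - 0) / (1 / 2 - 1 + 1) * a⁻¹ ^ n
      = 2 * a ^ ((1 / 2 : ℝ) - n) := by rw [← e2]; ring
  rw [e3]
  have e4 : -a ^ ((1 / 2 : ℝ) - n) / (1 / 2 - 1 - n + 1) ≤ 2 * a ^ ((1 / 2 : ℝ) - n) := by
    rw [div_le_iff_of_neg (by linarith)]
    nlinarith
  linarith

omit hc hlam hr hs h1 hμ in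
lemma rpow_half_le (k : ℕ) (x : ℝ) (hx : 0 ≤ x) : x ^ ((k : ℝ) / 2) ≤ 1 + x ^ k := by
  rcases le_total x 1 with h | h
  · have := Real.rpow_le_one hx h (show 0 ≤ (k : ℝ) / 2 by positivity)
    have : 0 ≤ x ^ k := by positivity
    linarith
  · have := Real.rpow_le_rpow_of_exponent_le h (show (k : ℝ) / 2 ≤ k by
      have : (0 : ℝ) ≤ k := by positivity
      linarith)
    rw [Real.rpow_natCast] at this
    linarith

omit hc hlam hr hs h1 hμ r ρ c in
/-- the word form of the terms of `D₃` -/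
def df (k : ℕ) (s : ℂ) (l : List ι) : ℂ :=
  (Xf lam μ l : ℂ) ^ k * ((Lf lam l ^ ((k : ℝ) / 2) : ℝ) : ℂ) * Complex.exp (-s * Lf lam l)

omit hμ in
lemma summable_df (k : ℕ) (s : ℂ) (hσ : ρ < s.re) : Summable fun l => ‖df lam μ k s l‖ := by
  have s0 := summable_words lam c hc hlam r ρ hr hs h1 μ k 0 s.re hσ
  have s1 := summable_words lam c hc hlam r ρ hr hs h1 μ k k s.re hσ
  refine Summable.of_nonneg_of_le (fun _ => norm_nonneg _) (fun l => ?_) (s0.add s1)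
  have h0 := Lf_nonneg lam c hc hlam l
  have h2 := rpow_half_le k _ h0
  have : ‖df lam μ k s l‖ =
      |Xf lam μ l| ^ k * Lf lam l ^ ((k : ℝ) / 2) * Real.exp (-s.re * Lf lam l) := by
    have h3 : 0 ≤ Lf lam l ^ ((k : ℝ) / 2) := by positivity
    rw [df, norm_mul, norm_mul, norm_pow, Complex.norm_real, Complex.norm_real,
      Real.norm_of_nonneg h3, Complex.norm_exp, Real.norm_eq_abs]
    simp
  rw [this]
  calc _ ≤ |Xf lam μ l| ^ k * (1 + Lf lam l ^ k) * Real.exp (-s.re * Lf lam l) := by gcongr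
    _ = _ := by ring

omit hμ in
lemma df_integral [Countable ι] (q : ℕ) (s : ℂ) (hσ : ρ < s.re) :
    (Real.Gamma (1 / 2) : ℂ) * ∑' l, df lam μ (2 * q + 1) s l =
      ∫ t in Set.Ioi (0 : ℝ), ((t ^ ((1 / 2 : ℝ) - 1) : ℝ) : ℂ) *
        Hf lam μ (2 * q + 1) (q + 1) (s + t) := by
  let F : List ι → ℝ → ℂ := fun l t =>
    ((t ^ ((1 / 2 : ℝ) - 1) * Real.exp (-(Lf lam l * t)) : ℝ) : ℂ) * Tf lam μ (2 * q + 1) (q + 1) s l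
  have hF0 : ∀ l, Lf lam l = 0 → Tf lam μ (2 * q + 1) (q + 1) s l = 0 := by
    intro l hl; simp [Tf, hl]
  have hpow : ∀ x : ℝ, 0 < x → x ^ (q + 1) * (1 / x) ^ (1 / 2 : ℝ) =
      x ^ (((2 * q + 1 : ℕ) : ℝ) / 2) := by
    intro x hx
    rw [one_div x, Real.inv_rpow hx.le, ← Real.rpow_neg hx.le, ← Real.rpow_natCast,
      ← Real.rpow_add hx]
    congr 1; push_cast; ring
  have hdT : ∀ l, 0 < Lf lam l → (((1 / Lf lam l) ^ (1 / 2 : ℝ) : ℝ) : ℂ) *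
      Tf lam μ (2 * q + 1) (q + 1) s l = df lam μ (2 * q + 1) s l := by
    intro l hl
    rw [Tf, df, ← hpow _ hl]
    push_cast; ring
  have hd0 : ∀ l, Lf lam l = 0 → df lam μ (2 * q + 1) s l = 0 := by
    intro l hl
    rw [df, hl, Real.zero_rpow (by positivity)]
    simp
  have hInt : ∀ l, MeasureTheory.Integrable (F l) (MeasureTheory.volume.restrict (Set.Ioi 0)) := by
    intro l
    rcases (Lf_nonneg lam c hc hlam l).eq_or_lt with h | h
    · have : F l = fun _ => 0 := by funext t; simp [F, hF0 l h.symm]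
      rw [this]; exact MeasureTheory.integrable_zero _ _ _
    · have := integrableOn_rpow_mul_exp_neg_mul_rpow (p := 1) (s := (1 / 2 : ℝ) - 1) (b := Lf lam l)
        (by norm_num) one_pos h
      simp only [Real.rpow_one, neg_mul] at this
      exact (this.ofReal (𝕜 := ℂ)).mul_const _
  have hI : ∀ l, ∫ t in Set.Ioi (0 : ℝ), F l t = (Real.Gamma (1 / 2) : ℂ) * df lam μ (2 * q + 1) s l := by
    intro l
    rcases (Lf_nonneg lam c hc hlam l).eq_or_lt with h | h
    · simp [F, hF0 l h.symm, hd0 l h.symm]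
    · simp only [F]
      rw [MeasureTheory.integral_mul_const, integral_complex_ofReal,
        Real.integral_rpow_mul_exp_neg_mul_Ioi (by norm_num) h, ← hdT l h]
      push_cast; ring
  have hN : ∀ l, ∫ t in Set.Ioi (0 : ℝ), ‖F l t‖ = Real.Gamma (1 / 2) * ‖df lam μ (2 * q + 1) s l‖ := by
    intro l
    rcases (Lf_nonneg lam c hc hlam l).eq_or_lt with h | h
    · simp [F, hF0 l h.symm, hd0 l h.symm]
    · have : Set.EqOn (fun t => ‖F l t‖) (fun t => t ^ ((1 / 2 : ℝ) - 1) * Real.exp (-(Lf lam l * t))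
        * ‖Tf lam μ (2 * q + 1) (q + 1) s l‖) (Set.Ioi 0) := by
        intro t ht
        have ht' : 0 < t := ht
        simp only [F]
        rw [norm_mul, Complex.norm_real, Real.norm_of_nonneg (by positivity)]
      rw [MeasureTheory.setIntegral_congr_fun measurableSet_Ioi this,
        MeasureTheory.integral_mul_const,
        Real.integral_rpow_mul_exp_neg_mul_Ioi (by norm_num) h, ← hdT l h, norm_mul,
        Complex.norm_real, Real.norm_of_nonneg (by positivity)]
      ring
  have hsum := summable_df lam c hc hlam r ρ hr hs h1 μ (2 * q + 1) s hσ
  have key := MeasureTheory.hasSum_integral_of_summable_integral_norm hInt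
    (by simp_rw [hN]; exact hsum.mul_left _)
  simp_rw [hI] at key
  rw [← tsum_mul_left, key.tsum_eq]
  refine MeasureTheory.setIntegral_congr_fun measurableSet_Ioi fun t ht => ?_
  simp only [F, Hf]
  rw [← tsum_mul_left]
  congr 1; ext l
  simp only [Tf]
  rw [show -(s + (t : ℂ)) * (Lf lam l : ℂ) = -s * Lf lam l + -(Lf lam l * t) by ring, Complex.exp_add]
  push_cast; ring

lemma df_bound [Countable ι] (q : ℕ) : ∃ C δ : ℝ, 0 < C ∧ 0 < δ ∧ ∀ w : ℂ, 0 < w.re → ‖w‖ < δ →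
    ‖∑' l, df lam μ (2 * q + 1) (ρ + w) l‖ ≤ C * ‖w‖ ^ (-((2 * q + 1 : ℕ) : ℝ) - 1 / 2) := by
  obtain ⟨C, δ, hC, hδ, hb⟩ := Hf_unif lam c hc hlam r ρ hr hs h1 μ hμ q
  have hG : 0 < Real.Gamma (1 / 2) := Real.Gamma_pos_of_pos (by norm_num)
  refine ⟨C * 4 / Real.Gamma (1 / 2), δ, by positivity, hδ, fun w hw hwδ => ?_⟩
  have hw0 : 0 < ‖w‖ := norm_pos_iff.2 (by rintro rfl; simp at hw)
  obtain ⟨i1, i2⟩ := int_bd (2 * q + 2) (by omega) ‖w‖ hw0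
  have h2 := df_integral lam c hc hlam r ρ hr hs h1 μ q (ρ + w) (by simpa using hw)
  have h3 : ‖(Real.Gamma (1 / 2) : ℂ) * ∑' l, df lam μ (2 * q + 1) (ρ + w) l‖ ≤
      C * (4 * ‖w‖ ^ ((1 / 2 : ℝ) - (2 * q + 2 : ℕ))) := by
    rw [h2]
    refine (MeasureTheory.norm_integral_le_of_norm_le (i1.const_mul C) ?_).trans ?_
    · filter_upwards [MeasureTheory.ae_restrict_mem measurableSet_Ioi] with t ht
      have ht' : 0 < t := ht
      rw [norm_mul, Complex.norm_real, Real.norm_of_nonneg (by positivity)]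
      have := hb w hw hwδ t ht'
      calc _ ≤ t ^ ((1 / 2 : ℝ) - 1) * (C * ((max ‖w‖ t)⁻¹) ^ (2 * q + 2)) := by gcongr
        _ = _ := by ring
    · rw [MeasureTheory.integral_const_mul]
      gcongr
  rw [norm_mul, Complex.norm_real, Real.norm_of_nonneg hG.le] at h3
  rw [show -((2 * q + 1 : ℕ) : ℝ) - 1 / 2 = (1 / 2 : ℝ) - (2 * q + 2 : ℕ) by push_cast; ring,
    div_mul_eq_mul_div, le_div_iff₀ hG]
  linarith

end abs

/-- words as pairs (product, length, tuple) -/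
def eqW (P : Set ℕ) : (Σ n : ℕ, Σ m : ℕ, {t : Fin m → ℕ // (∀ i, t i ∈ P) ∧ ∏ i, t i = n}) ≃
    (Σ m : ℕ, Fin m → P) where
  toFun := fun x => ⟨x.2.1, fun i => ⟨x.2.2.1 i, x.2.2.2.1 i⟩⟩
  invFun := fun y => ⟨∏ i, (y.2 i : ℕ), y.1, fun i => (y.2 i : ℕ), fun i => (y.2 i).2, rfl⟩
  left_inv := by
    rintro ⟨n, m, t, h1, rfl⟩
    rfl
  right_inv := by
    rintro ⟨m, t⟩
    rfl

def eqL (P : Set ℕ) : (Σ n : ℕ, Σ m : ℕ, {t : Fin m → ℕ // (∀ i, t i ∈ P) ∧ ∏ i, t i = n}) ≃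
    List P := (eqW P).trans List.equivSigmaTuple.symm

def lamP (P : Set ℕ) (n : P) : ℝ := Real.log (n : ℕ)

lemma Lf_eqL (P : Set ℕ) (hP : ∀ n ∈ P, 2 ≤ n) (n m : ℕ)
    (t : {t : Fin m → ℕ // (∀ i, t i ∈ P) ∧ ∏ i, t i = n}) :
    Lf (lamP P) (eqL P ⟨n, m, t⟩) = Real.log n := by
  obtain ⟨t, h1, rfl⟩ := t
  have : eqL P ⟨∏ i, t i, m, t, h1, rfl⟩ = List.ofFn (fun i => (⟨t i, h1 i⟩ : P)) := rfl
  rw [this, Lf, List.map_ofFn, List.sum_ofFn]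
  push_cast
  rw [Real.log_prod (fun i _ => by have := hP _ (h1 i); positivity)]
  rfl

lemma Xf_eqL (P : Set ℕ) (hP : ∀ n ∈ P, 2 ≤ n) (μ : ℝ) (n m : ℕ)
    (t : {t : Fin m → ℕ // (∀ i, t i ∈ P) ∧ ∏ i, t i = n}) :
    Xf (lamP P) μ (eqL P ⟨n, m, t⟩) = m - μ * Real.log n := by
  rw [Xf, Lf_eqL P hP]
  congr 2
  exact List.length_ofFn

lemma df_eqL (P : Set ℕ) (hP : ∀ n ∈ P, 2 ≤ n) (μ : ℝ) (k : ℕ) (s : ℂ) (n m : ℕ)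
    (t : {t : Fin m → ℕ // (∀ i, t i ∈ P) ∧ ∏ i, t i = n}) :
    df (lamP P) μ k s (eqL P ⟨n, m, t⟩) =
      (((m : ℝ) - μ * Real.log n) ^ k : ℝ) * (((Real.log n ^ ((k : ℝ) / 2) : ℝ) : ℂ) * (n : ℂ) ^ (-s)) := by
  have hn : n ≠ 0 := by
    obtain ⟨t, h1, rfl⟩ := t
    exact Finset.prod_ne_zero_iff.2 fun i _ => by have := hP _ (h1 i); omega
  rw [df, Xf_eqL P hP, Lf_eqL P hP, Complex.cpow_def_of_ne_zero (by exact_mod_cast hn),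
    ← Complex.natCast_log]
  rw [mul_comm (-s)]
  push_cast; ring

lemma D3_words (P : Set ℕ) (hP : ∀ n ∈ P, 2 ≤ n) (μ : ℝ) (k : ℕ) (s : ℂ)
    (hs : Summable fun l => ‖df (lamP P) μ k s l‖) :
    Summable (fun n : ℕ =>
        ‖((bCoef P μ k n * (Real.log n) ^ ((k : ℝ) / 2) : ℝ) : ℂ) * (n : ℂ) ^ (-s)‖) ∧
    D3 P μ k s = ∑' l, df (lamP P) μ k s l := by
  have hs' : Summable fun x => ‖df (lamP P) μ k s (eqL P x)‖ :=
    hs.comp_injective (eqL P).injective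
  have hs1 := hs'.of_norm
  have hterm : ∀ n : ℕ, ∑' y, df (lamP P) μ k s (eqL P ⟨n, y⟩) =
      ((bCoef P μ k n * (Real.log n) ^ ((k : ℝ) / 2) : ℝ) : ℂ) * (n : ℂ) ^ (-s) := by
    intro n
    rw [(show Summable (fun y => df (lamP P) μ k s (eqL P ⟨n, y⟩)) from
      hs1.comp_injective sigma_mk_injective).tsum_sigma]
    simp_rw [df_eqL P hP, tsum_const]
    rw [bCoef, Complex.ofReal_mul, Complex.ofReal_tsum, mul_assoc, ← tsum_mul_right]
    congr 1; ext m
    simp only [af, nsmul_eq_mul]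
    push_cast; ring
  constructor
  · refine Summable.of_nonneg_of_le (fun _ => norm_nonneg _) (fun n => ?_) hs'.sigma
    rw [← hterm]
    exact norm_tsum_le_tsum_norm (hs'.comp_injective sigma_mk_injective)
  · rw [← (eqL P).tsum_eq, hs1.tsum_sigma, D3]
    congr 1; ext n
    exact (hterm n).symm

/-- **Bound on the auxiliary Dirichlet series `D₃`.** Under the stated assumptions,
including non-periodicity, for every odd `k ≥ 1`: `D₃(s)` converges absolutely for
`Re s > ρ`, and for `w` with `Re w > 0` and `|w|` small,
`D₃(ρ + w) = O(|w|^{-k-1/2})`; in particular `D₃(ρ + w) = o(|w|^{-k-1})` as `w → 0`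
within `Re w > 0`. -/
theorem D3_bound
    (P : Set ℕ) (hP : ∀ n ∈ P, 2 ≤ n) (hP2 : P.Nontrivial)
    (hκ : 1 < PvalE P (kappa P))
    (ρ : ℝ) (hρ0 : 0 < ρ) (hρκ : kappa P < (ρ : EReal)) (hρ1 : Pval P ρ = 1)
    (μ : ℝ) (hμ : μ = -1 / Pderiv1 P ρ)
    (hnp : ∀ d : ℕ, 2 ≤ d → ¬ P ⊆ {n : ℕ | ∃ k : ℕ, 1 ≤ k ∧ n = d ^ k})
    (k : ℕ) (hk : Odd k) :
    (∀ s : ℂ, ρ < s.re →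
      Summable (fun n : ℕ =>
        ‖((bCoef P μ k n * (Real.log n) ^ ((k : ℝ) / 2) : ℝ) : ℂ) * (n : ℂ) ^ (-s)‖)) ∧
    (∃ C δ : ℝ, 0 < C ∧ 0 < δ ∧ ∀ w : ℂ, 0 < w.re → ‖w‖ < δ →
      ‖D3 P μ k ((ρ : ℂ) + w)‖ ≤ C * ‖w‖ ^ (-(k : ℝ) - 1 / 2)) ∧
    ((fun w : ℂ => D3 P μ k ((ρ : ℂ) + w))
      =o[nhdsWithin 0 {w : ℂ | 0 < w.re}] fun w : ℂ => ‖w‖ ^ (-(k : ℝ) - 1)) := by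
  have hpos : ∀ n : P, (0 : ℝ) < ((n : ℕ) : ℝ) := fun n => by
    have := hP n n.2
    positivity
  have hconv : ∀ (x : ℝ) (n : P), ((n : ℕ) : ℝ) ^ (-x) = Real.exp (-x * lamP P n) := by
    intro x n
    rw [Real.rpow_def_of_pos (hpos n), mul_comm]; rfl
  obtain ⟨x, ⟨r, rfl, hsr⟩, hxr⟩ := sInf_lt_iff.1 hρκ
  have hr : r < ρ := EReal.coe_lt_coe_iff.1 hxr
  simp_rw [hconv] at hsr
  have hc : 0 < Real.log 2 := Real.log_pos one_lt_two
  have hlam : ∀ n : P, Real.log 2 ≤ lamP P n := fun n =>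
    Real.log_le_log two_pos (by exact_mod_cast hP n n.2)
  have h1 : ∑' n : P, Real.exp (-ρ * lamP P n) = 1 := by
    rw [← hρ1, Pval]; simp_rw [hconv]
  have hμ' : μ * ∑' n : P, lamP P n * Real.exp (-ρ * lamP P n) = 1 := by
    have e : Pderiv1 P ρ = -∑' n : P, lamP P n * Real.exp (-ρ * lamP P n) := by
      rw [Pderiv1]; simp_rw [hconv, mul_comm (Real.exp _)]; rfl
    have s1 := summable_base (lamP P) (fun n => hc.le.trans (hlam n)) r ρ hr hsr 1
    simp only [pow_one] at s1
    obtain ⟨n0, hn0⟩ := hP2.nonempty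
    have hM : 0 < ∑' n : P, lamP P n * Real.exp (-ρ * lamP P n) :=
      s1.tsum_pos (fun n => mul_nonneg (hc.le.trans (hlam n)) (Real.exp_pos _).le) ⟨n0, hn0⟩
        (mul_pos (hc.trans_le (hlam _)) (Real.exp_pos _))
    rw [hμ, e, neg_div_neg_eq, one_div_mul_cancel hM.ne']
  have hW : ∀ s : ℂ, ρ < s.re → _ := fun s hs => D3_words P hP μ k s
    (summable_df (lamP P) _ hc hlam r ρ hr hsr h1 μ k s hs)
  have hB : ∃ C δ : ℝ, 0 < C ∧ 0 < δ ∧ ∀ w : ℂ, 0 < w.re → ‖w‖ < δ →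
      ‖D3 P μ k ((ρ : ℂ) + w)‖ ≤ C * ‖w‖ ^ (-(k : ℝ) - 1 / 2) := by
    obtain ⟨q, rfl⟩ := hk
    obtain ⟨C, δ, hC, hδ, hb⟩ := df_bound (lamP P) _ hc hlam r ρ hr hsr h1 μ hμ' q
    refine ⟨C, δ, hC, hδ, fun w hw hwδ => ?_⟩
    rw [(hW (ρ + w) (by simpa using hw)).2]
    exact hb w hw hwδ
  refine ⟨fun s hs => (hW s hs).1, hB, ?_⟩
  obtain ⟨C, δ, hC, hδ, hb⟩ := hB
  rw [isLittleO_iff]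
  intro ε hε
  have hd : 0 < min δ ((ε / C) ^ 2) := lt_min hδ (by positivity)
  filter_upwards [self_mem_nhdsWithin,
    mem_nhdsWithin_of_mem_nhds (Metric.ball_mem_nhds (0 : ℂ) hd)] with w hw hwb
  have hw' : 0 < w.re := hw
  have hw0 : 0 < ‖w‖ := norm_pos_iff.2 (by rintro rfl; simp at hw')
  have hwb' : ‖w‖ < min δ ((ε / C) ^ 2) := by simpa using hwb
  obtain ⟨hb1, hb2⟩ := lt_min_iff.1 hwb'
  refine (hb w hw' hb1).trans ?_
  rw [Real.norm_of_nonneg (by positivity), show -(k : ℝ) - 1 / 2 = 1 / 2 + (-(k : ℝ) - 1) by ring,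
    Real.rpow_add hw0, ← mul_assoc, ← Real.sqrt_eq_rpow]
  gcongr
  have : √‖w‖ ≤ ε / C := by
    rw [Real.sqrt_le_left (by positivity)]; exact hb2.le
  rw [le_div_iff₀ hC] at this
  linarith
end
end

section
/- Under the stated assumptions including non-periodicity, for every fixed integer k ≥ 0, (1/A(N)) Σ_{1≤n≤N} a(n) (log(N/n))^{k} = O(1) as N → ∞; that is, the k-th moment of log N − log ν_N is bounded, where ν_N is the random integer being factorized. -/
open scoped BigOperators ENNReal
open Filter Asymptotics

noncomputable section

open Classical in
/-- tuples with product at most `N` -/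
def LL (P : Set ℕ) (m N : ℕ) : Finset (Fin m → ℕ) :=
  (Fintype.piFinset (fun _ => Finset.Icc 1 N)).filter (fun t => (∀ i, t i ∈ P) ∧ ∏ i, t i ≤ N)

lemma mem_LL (P : Set ℕ) (hP : ∀ n ∈ P, 2 ≤ n) (m N : ℕ) (t : Fin m → ℕ) :
    t ∈ LL P m N ↔ (∀ i, t i ∈ P) ∧ ∏ i, t i ≤ N := by
  classical
  unfold LL
  rw [Finset.mem_filter]
  refine ⟨fun h => h.2, fun h => ⟨?_, h⟩⟩
  rw [Fintype.mem_piFinset]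
  intro i
  rw [Finset.mem_Icc]
  have h1 : ∀ i, 1 ≤ t i := fun i => le_trans (by norm_num) (hP _ (h.1 i))
  exact ⟨h1 i, le_trans (Nat.le_of_dvd (Finset.prod_pos fun i _ => h1 i)
    (Finset.dvd_prod_of_mem t (Finset.mem_univ i))) h.2⟩

lemma sum_af (P : Set ℕ) (hP : ∀ n ∈ P, 2 ≤ n) (m N : ℕ) :
    ∑ n ∈ Finset.Icc 1 N, af P m n = (LL P m N).card := by
  rw [Finset.card_eq_sum_card_fiberwise (f := fun t : Fin m → ℕ => ∏ i, t i)
    (t := Finset.Icc 1 N)]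
  · refine Finset.sum_congr rfl fun n hn => ?_
    unfold af
    rw [Finset.mem_Icc] at hn
    apply Nat.subtype_card
    intro t
    rw [Finset.mem_filter, mem_LL P hP]
    constructor
    · rintro ⟨h, h'⟩
      exact ⟨h.1, h'⟩
    · rintro ⟨h, h'⟩
      exact ⟨⟨h, h'.trans_le hn.2⟩, h'⟩
  · intro t ht
    have ht' := (mem_LL P hP m N t).1 ht
    simp only [Finset.coe_Icc, Set.mem_Icc]
    exact ⟨Finset.prod_pos fun i _ => lt_of_lt_of_le (by norm_num) (hP _ (ht'.1 i)), ht'.2⟩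

lemma card_LL_succ (P : Set ℕ) (hP : ∀ n ∈ P, 2 ≤ n) (m N p q : ℕ) (hp : p ∈ P) (hq : q ∈ P)
    (hpq : p ≠ q) :
    (LL P m (N / p)).card + (LL P m (N / q)).card ≤ (LL P (m+1) N).card := by
  classical
  have inj : ∀ r : ℕ, Function.Injective (fun t : Fin m → ℕ => (Fin.cons r t : Fin (m+1) → ℕ)) :=
    fun r => Fin.cons_right_injective (α := fun _ => ℕ) r
  rw [← Finset.card_image_of_injective (LL P m (N / p)) (inj p),
    ← Finset.card_image_of_injective (LL P m (N / q)) (inj q), ← Finset.card_union_of_disjoint]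
  · apply Finset.card_le_card
    have key : ∀ r ∈ P, (LL P m (N / r)).image
        (fun t : Fin m → ℕ => (Fin.cons r t : Fin (m+1) → ℕ)) ⊆ LL P (m+1) N := by
      intro r hr x hx
      obtain ⟨t, ht, rfl⟩ := Finset.mem_image.1 hx
      rw [mem_LL P hP] at ht ⊢
      refine ⟨fun i => ?_, ?_⟩
      · refine Fin.cases ?_ (fun j => ?_) i
        · simpa using hr
        · simpa using ht.1 j
      · rw [Fin.prod_univ_succ]
        simp only [Fin.cons_zero, Fin.cons_succ]
        exact le_trans (Nat.mul_le_mul_left r ht.2) (Nat.mul_div_le N r)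
    exact Finset.union_subset (key p hp) (key q hq)
  · rw [Finset.disjoint_left]
    intro x hx hx'
    obtain ⟨t, ht, rfl⟩ := Finset.mem_image.1 hx
    obtain ⟨t', ht', h⟩ := Finset.mem_image.1 hx'
    have := congrFun h 0
    simp at this
    exact hpq this.symm

lemma af_zero (P : Set ℕ) (hP : ∀ n ∈ P, 2 ≤ n) (m n : ℕ) (hn : n ≤ m) (h1 : 1 ≤ n) :
    af P m n = 0 := by
  unfold af
  have : IsEmpty {t : Fin m → ℕ // (∀ i, t i ∈ P) ∧ ∏ i, t i = n} := by
    refine ⟨fun ⟨t, ht, h⟩ => ?_⟩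
    have h2 : 2 ^ m ≤ ∏ i, t i := by
      have := Finset.prod_le_prod' (s := Finset.univ) (f := fun _ : Fin m => 2) (g := t)
        (fun i _ => hP _ (ht i))
      simpa using this
    have := Nat.lt_two_pow_self (n := m)
    omega
  exact Nat.card_of_isEmpty

lemma aTot_eq (P : Set ℕ) (hP : ∀ n ∈ P, 2 ≤ n) (M n : ℕ) (hn : n ≤ M) (h1 : 1 ≤ n) :
    aTot P n = ∑ m ∈ Finset.range M, (af P m n : ℝ) := by
  unfold aTot
  apply tsum_eq_sum
  intro m hm
  rw [Finset.mem_range, not_lt] at hm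
  rw [af_zero P hP m n (hn.trans hm) h1, Nat.cast_zero]

lemma Acum_eq (P : Set ℕ) (hP : ∀ n ∈ P, 2 ≤ n) (M N : ℕ) (hN : N ≤ M) :
    Acum P N = ∑ m ∈ Finset.range M, ((LL P m N).card : ℝ) := by
  unfold Acum
  have : ∀ n ∈ Finset.Icc 1 N, aTot P n = ∑ m ∈ Finset.range M, (af P m n : ℝ) := by
    intro n hn
    rw [Finset.mem_Icc] at hn
    exact aTot_eq P hP M n (hn.2.trans hN) hn.1
  rw [Finset.sum_congr rfl this, Finset.sum_comm]
  refine Finset.sum_congr rfl fun m _ => ?_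
  rw [← sum_af P hP]
  push_cast
  rfl

lemma aTot_nonneg (P : Set ℕ) (n : ℕ) : 0 ≤ aTot P n := tsum_nonneg fun _ => Nat.cast_nonneg _

lemma Acum_nonneg (P : Set ℕ) (n : ℕ) : 0 ≤ Acum P n := Finset.sum_nonneg fun _ _ => aTot_nonneg _ _

lemma Acum_mono (P : Set ℕ) {a b : ℕ} (h : a ≤ b) : Acum P a ≤ Acum P b :=
  Finset.sum_le_sum_of_subset_of_nonneg (Finset.Icc_subset_Icc_right h)
    fun _ _ _ => aTot_nonneg _ _

lemma Acum_two (P : Set ℕ) (hP : ∀ n ∈ P, 2 ≤ n) (N p q : ℕ) (hp : p ∈ P) (hq : q ∈ P)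
    (hpq : p < q) : 2 * Acum P (N / q) ≤ Acum P N := by
  have h1 : Acum P (N / p) + Acum P (N / q) ≤ Acum P N := by
    rw [Acum_eq P hP N (N / p) (Nat.div_le_self _ _), Acum_eq P hP N (N / q) (Nat.div_le_self _ _),
      Acum_eq P hP (N+1) N (Nat.le_succ _), ← Finset.sum_add_distrib, Finset.sum_range_succ']
    refine le_trans (Finset.sum_le_sum (g := fun m => ((LL P (m+1) N).card : ℝ)) fun m _ => ?_)
      (le_add_of_nonneg_right (Nat.cast_nonneg _))
    exact_mod_cast card_LL_succ P hP m N p q hp hq hpq.ne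
  have h2 : Acum P (N / q) ≤ Acum P (N / p) :=
    Acum_mono P (Nat.div_le_div_left hpq.le (lt_of_lt_of_le (by norm_num) (hP p hp)))
  linarith

lemma F_bound (P : Set ℕ) (hP : ∀ n ∈ P, 2 ≤ n) (p q : ℕ) (hp : p ∈ P) (hq : q ∈ P)
    (hpq : p < q) (ε : ℝ) (hε : 0 < ε) (hqε : (q : ℝ) ^ ε = 3 / 2) (N : ℕ) :
    ∀ x : ℝ, 0 ≤ x → x ≤ N + 1 →
      ∑ n ∈ Finset.Icc 1 N, aTot P n * (x / n) ^ ε ≤ 6 * Acum P N := by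
  have hq2 := hP q hq
  have hq0 : (0:ℝ) < q := by positivity
  induction N using Nat.strong_induction_on with
  | _ N ih =>
    intro x hx hxN
    rcases Nat.eq_zero_or_pos N with rfl | hN
    · simp [Acum]
    have hlt : N / q < N := Nat.div_lt_self hN (by omega)
    have hdiv : N + 1 ≤ q * (N / q + 1) := by
      have := Nat.lt_mul_div_succ N (b := q) (by omega)
      omega
    have hdivR : (N : ℝ) + 1 ≤ q * ((N / q : ℕ) + 1) := by exact_mod_cast hdiv
    have ih' := ih (N / q) hlt (x / q) (by positivity) (by
      rw [div_le_iff₀ hq0]; linarith)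
    have h2 := Acum_two P hP N p q hp hq hpq
    have hpt : ∀ n ∈ Finset.Icc 1 N, aTot P n * (x / n) ^ ε ≤ 3 / 2 * aTot P n +
        (if n ≤ N / q then 3 / 2 * (aTot P n * (x / q / n) ^ ε) else 0) := by
      intro n hn
      rw [Finset.mem_Icc] at hn
      have hn0 : (0:ℝ) < n := by exact_mod_cast hn.1
      have ha := aTot_nonneg P n
      split_ifs with h
      · have : (x / n) ^ ε = 3 / 2 * (x / q / n) ^ ε := by
          rw [← hqε, ← Real.mul_rpow hq0.le (by positivity)]
          congr 1
          field_simp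
        rw [this]
        nlinarith
      · have : (x / n) ^ ε ≤ 3 / 2 := by
          rw [← hqε]
          apply Real.rpow_le_rpow (by positivity) _ hε.le
          rw [div_le_iff₀ hn0]
          have : ((N / q : ℕ) : ℝ) + 1 ≤ n := by exact_mod_cast not_le.1 h
          nlinarith
        nlinarith
    have hs := Finset.sum_le_sum hpt
    rw [Finset.sum_add_distrib, ← Finset.mul_sum, ← Finset.sum_filter, ← Finset.mul_sum] at hs
    have hf : (Finset.Icc 1 N).filter (fun n => n ≤ N / q) = Finset.Icc 1 (N / q) := by
      ext n
      simp only [Finset.mem_filter, Finset.mem_Icc]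
      omega
    rw [hf] at hs
    change _ ≤ 3 / 2 * Acum P N + _ at hs
    linarith

/-- **Boundedness of the moments of `log N - log ν_N`.** Under the stated assumptions,
including non-periodicity, for each fixed `k ≥ 0`,
`(1/A(N)) Σ_{n ≤ N} a(n) (log(N/n))^k = O(1)` as `N → ∞`. -/
theorem log_ratio_moments_bounded
    (P : Set ℕ) (hP : ∀ n ∈ P, 2 ≤ n) (hP2 : P.Nontrivial)
    (hκ : 1 < PvalE P (kappa P))
    (ρ : ℝ) (hρ0 : 0 < ρ) (hρκ : kappa P < (ρ : EReal)) (hρ1 : Pval P ρ = 1)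
    (hnp : ∀ d : ℕ, 2 ≤ d → ¬ P ⊆ {n : ℕ | ∃ k : ℕ, 1 ≤ k ∧ n = d ^ k})
    (k : ℕ) :
    (fun N : ℕ =>
        (∑ n ∈ Finset.Icc 1 N, aTot P n * (Real.log ((N : ℝ) / n)) ^ k) / Acum P N)
      =O[atTop] fun _ : ℕ => (1 : ℝ) := by
  obtain ⟨p, hp, q, hq, hpq⟩ : ∃ p ∈ P, ∃ q ∈ P, p < q := by
    obtain ⟨a, ha, b, hb, hab⟩ := hP2
    rcases lt_or_gt_of_ne hab with h | h
    · exact ⟨a, ha, b, hb, h⟩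
    · exact ⟨b, hb, a, ha, h⟩
  have hq2 : (1:ℝ) < q := by exact_mod_cast (hP q hq)
  have hlq : 0 < Real.log q := Real.log_pos hq2
  obtain ⟨ε, hε, hqε⟩ : ∃ ε : ℝ, 0 < ε ∧ (q:ℝ) ^ ε = 3 / 2 := by
    refine ⟨Real.log (3/2) / Real.log q, div_pos (Real.log_pos (by norm_num)) hlq, ?_⟩
    rw [Real.rpow_def_of_pos (by linarith), mul_div_cancel₀ _ hlq.ne',
      Real.exp_log (by norm_num)]
  set δ : ℝ := ε / (k + 1) with hδ
  have hδ0 : 0 < δ := by positivity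
  have hδk : δ * k ≤ ε := by
    rw [hδ, div_mul_eq_mul_div, div_le_iff₀ (by positivity)]
    nlinarith
  have hlog : ∀ y : ℝ, 1 ≤ y → Real.log y ^ k ≤ y ^ ε / δ ^ k := by
    intro y hy
    calc Real.log y ^ k ≤ (y ^ δ / δ) ^ k :=
          pow_le_pow_left₀ (Real.log_nonneg hy) (Real.log_le_rpow_div (by linarith) hδ0) k
      _ = y ^ (δ * k) / δ ^ k := by
          rw [div_pow, Real.rpow_mul (by linarith), Real.rpow_natCast]
      _ ≤ y ^ ε / δ ^ k := by
          gcongr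
  refine IsBigO.of_bound (6 / δ ^ k) (Eventually.of_forall fun N => ?_)
  have hle : ∀ n ∈ Finset.Icc 1 N, (1:ℝ) ≤ (N:ℝ) / n := by
    intro n hn
    rw [Finset.mem_Icc] at hn
    rw [le_div_iff₀ (by exact_mod_cast hn.1), one_mul]
    exact_mod_cast hn.2
  have hnn : 0 ≤ ∑ n ∈ Finset.Icc 1 N, aTot P n * (Real.log ((N : ℝ) / n)) ^ k :=
    Finset.sum_nonneg fun n hn =>
      mul_nonneg (aTot_nonneg P n) (pow_nonneg (Real.log_nonneg (hle n hn)) k)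
  have hA := Acum_nonneg P N
  rw [Real.norm_of_nonneg (div_nonneg hnn hA), norm_one, mul_one]
  apply div_le_of_le_mul₀ hA (by positivity)
  calc ∑ n ∈ Finset.Icc 1 N, aTot P n * (Real.log ((N : ℝ) / n)) ^ k
      ≤ ∑ n ∈ Finset.Icc 1 N, aTot P n * ((N : ℝ) / n) ^ ε / δ ^ k := by
        refine Finset.sum_le_sum fun n hn => ?_
        rw [mul_div_assoc]
        exact mul_le_mul_of_nonneg_left (hlog _ (hle n hn)) (aTot_nonneg P n)
    _ = (∑ n ∈ Finset.Icc 1 N, aTot P n * ((N : ℝ) / n) ^ ε) / δ ^ k := by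
        rw [Finset.sum_div]
    _ ≤ (6 * Acum P N) / δ ^ k := by
        gcongr
        exact F_bound P hP p q hp hq hpq ε hε hqε N N (Nat.cast_nonneg _) (by linarith)
    _ = 6 / δ ^ k * Acum P N := by ring
end
end

section
/- Under the stated assumptions, for every real β ≥ 0, the absolute central moments of Y_N satisfy E|Y_N − μ log N|^{β} ∼ 2^{β/2} π^{−1/2} Γ((β+1)/2) σ^{β} (log N)^{β/2} as N → ∞, where E|Y_N − μ log N|^{β} = (1/A(N)) Σ_{1≤n≤N} Σ_{m≥0} a_m(n) |m − μ log N|^{β}. -/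
open scoped BigOperators ENNReal
open Filter Asymptotics

noncomputable section


namespace Ren

open MeasureTheory ProbabilityTheory Topology

/-- the basic recursion -/
def B (π : Measure ℝ) (ρ : ℝ) : ℕ → ℝ → ℝ
  | 0 => fun x => if 0 ≤ x then Real.exp (-ρ * x) else 0
  | m + 1 => fun x => ∫ s, B π ρ m (x - s) ∂π

/-- structure of the assumptions -/
structure Hyp (π : Measure ℝ) (ρ ℓ : ℝ) : Prop where
  prob : IsProbabilityMeasure π
  hρ : 0 < ρ
  hℓ : 0 < ℓ
  hπ : ∀ᵐ s ∂π, ℓ ≤ s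

variable {π : Measure ℝ} {ρ ℓ : ℝ}

lemma integrable_bdd [IsFiniteMeasure π] {f : ℝ → ℝ} (hf : Measurable f) {C : ℝ}
    (h : ∀ x, |f x| ≤ C) : Integrable f π :=
  Integrable.of_bound hf.aestronglyMeasurable C (Eventually.of_forall (by simpa using h))

structure BP (ρ ℓ : ℝ) (m : ℕ) (f : ℝ → ℝ) : Prop where
  meas : Measurable f
  nn : ∀ x, 0 ≤ f x
  le1 : ∀ x, f x ≤ 1
  mono : Monotone (fun x => Real.exp (ρ * x) * f x)
  zero : ∀ x, x < m * ℓ → f x = 0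

lemma meas_of_mono {f : ℝ → ℝ} (h : Monotone (fun x => Real.exp (ρ * x) * f x)) :
    Measurable f := by
  have h1 := h.measurable
  have : f = fun x => Real.exp (-(ρ * x)) * (Real.exp (ρ * x) * f x) := by
    funext x
    rw [← mul_assoc, ← Real.exp_add]; simp
  rw [this]
  exact (by fun_prop : Measurable fun x => Real.exp (-(ρ * x))).mul h1

lemma BP.integrable [IsFiniteMeasure π] {m : ℕ} {f : ℝ → ℝ} (hf : BP ρ ℓ m f) (x : ℝ) :
    Integrable (fun s => f (x - s)) π :=
  integrable_bdd (hf.meas.comp (by fun_prop)) (C := 1) fun s => by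
    rw [abs_of_nonneg (hf.nn _)]; exact hf.le1 _

lemma B_props (H : Hyp π ρ ℓ) (m : ℕ) : BP ρ ℓ m (B π ρ m) := by
  have := H.prob
  induction m with
  | zero =>
    have hm : Monotone (fun x => Real.exp (ρ * x) * B π ρ 0 x) := by
      intro x y hxy
      simp only [B]
      split_ifs with h1 h2
      · rw [← Real.exp_add, ← Real.exp_add]; simp
      · exact absurd (h1.trans hxy) h2
      · rw [mul_zero]; positivity
      · simp
    refine ⟨meas_of_mono hm, ?_, ?_, hm, ?_⟩
    · intro x; simp only [B]; split_ifs <;> positivity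
    · intro x; simp only [B]; split_ifs with h
      · rw [Real.exp_le_one_iff]; have := mul_nonneg H.hρ.le h; linarith
      · norm_num
    · intro x hx; simp only [B]; rw [if_neg]; simpa using hx
  | succ m ih =>
    have hm : Monotone (fun x => Real.exp (ρ * x) * B π ρ (m+1) x) := by
      intro x y hxy
      simp only [B]
      rw [← integral_const_mul, ← integral_const_mul]
      refine integral_mono ((ih.integrable x).const_mul _) ((ih.integrable y).const_mul _) ?_
      intro s
      have h := ih.mono (show x - s ≤ y - s by linarith)
      simp only at h ⊢
      have e : ∀ z, Real.exp (ρ * z) = Real.exp (ρ * s) * Real.exp (ρ * (z - s)) := by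
        intro z; rw [← Real.exp_add]; ring_nf
      rw [e x, e y, mul_assoc, mul_assoc]
      gcongr
    refine ⟨meas_of_mono hm, ?_, ?_, hm, ?_⟩
    · intro x; exact integral_nonneg fun s => ih.nn _
    · intro x
      calc ∫ s, B π ρ m (x - s) ∂π ≤ ∫ s, (1:ℝ) ∂π :=
            integral_mono (ih.integrable x) (integrable_const _) fun s => ih.le1 _
        _ = 1 := by simp
    · intro x hx
      simp only [B]
      refine integral_eq_zero_of_ae ?_
      filter_upwards [H.hπ] with s hs
      apply ih.zero
      push_cast at hx
      linarith

lemma B_neg (H : Hyp π ρ ℓ) (m : ℕ) {x : ℝ} (hx : x < 0) : B π ρ m x = 0 :=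
  (B_props H m).zero x (hx.trans_le (by have := H.hℓ; positivity))

lemma tilt_bound (H : Hyp π ρ ℓ) {θ : ℝ} (hθ : θ < ρ)
    (hi : Integrable (fun s => Real.exp (θ * s)) π) (k : ℕ) (x : ℝ) (hx : 0 ≤ x) :
    ∑ m ∈ Finset.range k, (∫ s, Real.exp (θ * s) ∂π)⁻¹ ^ m * B π ρ m x ≤
      Real.exp (-θ * x) * ((1 / (Real.exp ((ρ - θ) * ℓ) - 1)) *
        (Real.exp ((ρ - θ) * ℓ) - Real.exp (-(ρ - θ) * x))) := by
  have := H.prob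
  set M := ∫ s, Real.exp (θ * s) ∂π with hM
  have hMpos : 0 < M := by
    apply integral_exp_pos hi
  set r := ρ - θ with hr
  have hr0 : 0 < r := by linarith
  set E := Real.exp (r * ℓ) with hE
  have hE1 : 1 < E := by
    rw [hE, Real.one_lt_exp_iff]; exact mul_pos hr0 H.hℓ
  set K := 1 / (E - 1) with hK
  have hK0 : 0 < K := by rw [hK]; apply one_div_pos.2; linarith
  have hKE : K * (E - 1) = 1 := by rw [hK]; field_simp; rw [div_self]; linarith
  have hW0 : ∀ k x, x < 0 → ∑ m ∈ Finset.range k, M⁻¹ ^ m * B π ρ m x = 0 := by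
    intro k x hx
    exact Finset.sum_eq_zero fun m _ => by rw [B_neg H m hx, mul_zero]
  induction k generalizing x with
  | zero =>
    simp only [Finset.range_zero, Finset.sum_empty]
    have : Real.exp (-r * x) ≤ 1 := by
      rw [Real.exp_le_one_iff]; nlinarith
    have : 0 ≤ E - Real.exp (-r * x) := by linarith
    positivity
  | succ k ih =>
    rw [Finset.sum_range_succ']
    have h1 : ∑ m ∈ Finset.range k, M⁻¹ ^ (m+1) * B π ρ (m+1) x
        = M⁻¹ * ∫ s, ∑ m ∈ Finset.range k, M⁻¹ ^ m * B π ρ m (x - s) ∂π := by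
      rw [integral_finsetSum _ fun m _ => ((B_props H m).integrable x).const_mul _, Finset.mul_sum]
      refine Finset.sum_congr rfl fun m _ => ?_
      rw [integral_const_mul, pow_succ]
      simp only [B]; ring
    have h2 : ∫ s, ∑ m ∈ Finset.range k, M⁻¹ ^ m * B π ρ m (x - s) ∂π ≤
        ∫ s, Real.exp (θ * s) * (Real.exp (-θ * x) * (K * (E - E * Real.exp (-r * x)))) ∂π := by
      refine integral_mono_ae (integrable_finsetSum _ fun m _ =>
        ((B_props H m).integrable x).const_mul _) (hi.mul_const _) ?_
      filter_upwards [H.hπ] with s hs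
      have hEx : Real.exp (-r * x) ≤ 1 := by
        rw [Real.exp_le_one_iff]; nlinarith
      rcases lt_or_ge x s with h | h
      · rw [hW0 k _ (by linarith)]
        have : 0 ≤ E - E * Real.exp (-r * x) := by nlinarith
        positivity
      · refine (ih (x - s) (by linarith)).trans ?_
        have e1 : Real.exp (-θ * (x - s)) = Real.exp (θ * s) * Real.exp (-θ * x) := by
          rw [← Real.exp_add]; ring_nf
        have e2 : E * Real.exp (-r * x) ≤ Real.exp (-r * (x - s)) := by
          rw [hE, ← Real.exp_add, Real.exp_le_exp]; nlinarith
        rw [e1, mul_assoc]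
        gcongr
    rw [integral_mul_const, ← hM] at h2
    rw [h1]
    have h3 : M⁻¹ * ∫ s, ∑ m ∈ Finset.range k, M⁻¹ ^ m * B π ρ m (x - s) ∂π ≤
        Real.exp (-θ * x) * (K * (E - E * Real.exp (-r * x))) := by
      calc _ ≤ M⁻¹ * (M * (Real.exp (-θ * x) * (K * (E - E * Real.exp (-r * x))))) := by gcongr
        _ = _ := by rw [← mul_assoc, inv_mul_cancel₀ hMpos.ne', one_mul]
    have h4 : M⁻¹ ^ 0 * B π ρ 0 x = Real.exp (-θ * x) * Real.exp (-r * x) := by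
      simp only [B, if_pos hx, pow_zero, one_mul]
      rw [← Real.exp_add, hr]; ring_nf
    rw [h4]
    have h5 : Real.exp (-θ * x) * (K * (E - Real.exp (-r * x))) =
      Real.exp (-θ * x) * (K * (E - E * Real.exp (-r * x))) +
        Real.exp (-θ * x) * Real.exp (-r * x) * (K * (E - 1)) := by ring
    rw [h5, hKE]; linarith

/-- bound constant -/
def CC (r ℓ : ℝ) : ℝ := (1 / (Real.exp (r * ℓ) - 1)) * Real.exp (r * ℓ)

lemma CC_nonneg {r : ℝ} (hr : 0 < r) (hℓ : 0 < ℓ) : 0 ≤ CC r ℓ := by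
  have : 1 < Real.exp (r * ℓ) := by rw [Real.one_lt_exp_iff]; positivity
  have : 0 < Real.exp (r * ℓ) - 1 := by linarith
  unfold CC; positivity

lemma tilt_bound' (H : Hyp π ρ ℓ) {θ : ℝ} (hθ : θ < ρ)
    (hi : Integrable (fun s => Real.exp (θ * s)) π) (k : ℕ) (x : ℝ) (hx : 0 ≤ x) :
    ∑ m ∈ Finset.range k, (∫ s, Real.exp (θ * s) ∂π)⁻¹ ^ m * B π ρ m x ≤
      Real.exp (-θ * x) * CC (ρ - θ) ℓ := by
  refine (tilt_bound H hθ hi k x hx).trans ?_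
  have h1 : 1 < Real.exp ((ρ - θ) * ℓ) := by
    rw [Real.one_lt_exp_iff]; exact mul_pos (by linarith) H.hℓ
  have : 0 < Real.exp ((ρ - θ) * ℓ) - 1 := by linarith
  unfold CC
  gcongr
  have := Real.exp_pos (-(ρ - θ) * x)
  linarith

/-- the total -/
def v (π : Measure ℝ) (ρ : ℝ) (x : ℝ) : ℝ := ∑' m, B π ρ m x

lemma B_zero_of_le (H : Hyp π ρ ℓ) {x : ℝ} {K m : ℕ} (hK : x < K * ℓ) (hm : K ≤ m) :
    B π ρ m x = 0 := by
  apply (B_props H m).zero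
  have h2 : (K:ℝ) ≤ m := by exact_mod_cast hm
  nlinarith [H.hℓ]

lemma exists_K (H : Hyp π ρ ℓ) (x : ℝ) : ∃ K : ℕ, x < K * ℓ := by
  obtain ⟨K, hK⟩ := exists_nat_gt (x / ℓ)
  exact ⟨K, by rwa [div_lt_iff₀ H.hℓ] at hK⟩

lemma sum_mul_eq (H : Hyp π ρ ℓ) {x : ℝ} {K : ℕ} (hK : x < K * ℓ) (g : ℕ → ℝ) :
    ∑' m, B π ρ m x * g m = ∑ m ∈ Finset.range K, B π ρ m x * g m := by
  apply tsum_eq_sum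
  intro m hm
  rw [B_zero_of_le H hK (by simpa using hm), zero_mul]

lemma summable_mul (H : Hyp π ρ ℓ) (x : ℝ) (g : ℕ → ℝ) :
    Summable fun m => B π ρ m x * g m := by
  obtain ⟨K, hK⟩ := exists_K H x
  apply summable_of_ne_finset_zero (s := Finset.range K)
  intro m hm
  rw [B_zero_of_le H hK (by simpa using hm), zero_mul]

lemma summable_B (H : Hyp π ρ ℓ) (x : ℝ) : Summable fun m => B π ρ m x := by
  simpa using summable_mul H x (fun _ => 1)

lemma v_eq (H : Hyp π ρ ℓ) {x : ℝ} {K : ℕ} (hK : x < K * ℓ) :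
    v π ρ x = ∑ m ∈ Finset.range K, B π ρ m x := by
  simpa [v] using sum_mul_eq H hK (fun _ => 1)

lemma v_nonneg (H : Hyp π ρ ℓ) (x : ℝ) : 0 ≤ v π ρ x :=
  tsum_nonneg fun m => (B_props H m).nn x

lemma v_neg (H : Hyp π ρ ℓ) {x : ℝ} (hx : x < 0) : v π ρ x = 0 := by
  simp [v, B_neg H _ hx]

lemma v_le (H : Hyp π ρ ℓ) (x : ℝ) : v π ρ x ≤ CC ρ ℓ := by
  have := H.prob
  rcases lt_or_ge x 0 with h | h
  · rw [v_neg H h]; exact CC_nonneg H.hρ H.hℓ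
  · obtain ⟨K, hK⟩ := exists_K H x
    rw [v_eq H hK]
    simpa using tilt_bound' H (θ := 0) H.hρ (by simp) K x h

lemma v_mono (H : Hyp π ρ ℓ) : Monotone (fun x => Real.exp (ρ * x) * v π ρ x) := by
  intro x y hxy
  simp only [v]
  rw [← tsum_mul_left, ← tsum_mul_left]
  exact ((summable_B H x).mul_left _).tsum_le_tsum (fun m => (B_props H m).mono hxy)
    ((summable_B H y).mul_left _)

lemma v_meas (H : Hyp π ρ ℓ) : Measurable (v π ρ) := meas_of_mono (v_mono H)

lemma v_abs (H : Hyp π ρ ℓ) (x : ℝ) : |v π ρ x| ≤ CC ρ ℓ := by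
  rw [abs_of_nonneg (v_nonneg H x)]; exact v_le H x

lemma v_renewal (H : Hyp π ρ ℓ) (x : ℝ) :
    v π ρ x = B π ρ 0 x + ∫ s, v π ρ (x - s) ∂π := by
  have := H.prob
  obtain ⟨K, hK⟩ := exists_K H x
  have hK1 : x < (K+1 : ℕ) * ℓ := by push_cast; nlinarith [H.hℓ]
  rw [v_eq H hK1, Finset.sum_range_succ', add_comm]
  congr 1
  have : ∫ s, v π ρ (x - s) ∂π = ∫ s, ∑ m ∈ Finset.range K, B π ρ m (x - s) ∂π := by
    apply integral_congr_ae
    filter_upwards [H.hπ] with s hs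
    exact v_eq H (by linarith [H.hℓ])
  rw [this, integral_finsetSum _ fun m _ => (B_props H m).integrable x]
  rfl

end Ren

namespace Ren

open MeasureTheory ProbabilityTheory Topology

variable {π : Measure ℝ} {ρ ℓ : ℝ}

lemma tail_tendsto [IsFiniteMeasure π] (T : ℝ) :
    Tendsto (fun x => π.real (Set.Ioi (x - T))) atTop (𝓝 0) := by
  have h1 : Tendsto (fun x : ℝ => π (Set.Ioi x)) atTop (𝓝 (π (⋂ x : ℝ, Set.Ioi x))) := by
    apply tendsto_measure_iInter_atTop
    · intro x; exact measurableSet_Ioi.nullMeasurableSet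
    · intro x y hxy; exact Set.Ioi_subset_Ioi hxy
    · exact ⟨0, measure_ne_top _ _⟩
  have h2 : (⋂ x : ℝ, Set.Ioi x) = ∅ := by
    ext y; simp only [Set.mem_iInter, Set.mem_Ioi, Set.mem_empty_iff_false, iff_false, not_forall]
    exact ⟨y, lt_irrefl _⟩
  rw [h2, measure_empty] at h1
  have h3 := (ENNReal.tendsto_toReal (by simp)).comp h1
  simp only [ENNReal.toReal_zero] at h3
  exact h3.comp (tendsto_atTop_add_const_right _ _ tendsto_id)

lemma shift_step [IsProbabilityMeasure π] {g e : ℝ → ℝ} {C L a : ℝ} (hg : Measurable g)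
    (hC : ∀ x, |g x| ≤ C) (he : Tendsto e atTop (𝓝 0))
    (hr : ∀ x, g x = e x + ∫ s, g (x - s) ∂π) (ha : 0 < π.real {a})
    (hL : ∀ η > 0, ∀ᶠ x in atTop, g x < L + η) (ε : ℝ) (hε : 0 < ε) :
    ∃ δ > 0, ∀ᶠ x in atTop, L - δ < g x → L - ε < g (x - a) := by
  set α := π.real {a} with hα
  have hp : 0 < ε * α / 4 := by positivity
  refine ⟨ε * α / 4, hp, ?_⟩
  obtain ⟨T, hT⟩ := eventually_atTop.1 (hL _ hp)
  set C' := C + |L| with hC'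
  have hC0 : 0 ≤ C := (abs_nonneg _).trans (hC 0)
  have h1 : ∀ᶠ x in atTop, C' * π.real (Set.Ioi (x - T)) < ε * α / 4 := by
    have := (tail_tendsto (π := π) T).const_mul C'
    rw [mul_zero] at this
    exact this.eventually_lt_const hp
  have h2 : ∀ᶠ x in atTop, e x < ε * α / 4 := he.eventually_lt_const hp
  filter_upwards [h1, h2] with x hx1 hx2 hgx
  by_contra hcon
  push Not at hcon
  have hint : Integrable (fun s => g (x - s)) π :=
    integrable_bdd (hg.comp (by fun_prop)) fun s => hC _
  have i1 : Integrable ((Set.Ioi (x - T)).indicator fun _ : ℝ => C') π :=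
    (integrable_const _).indicator measurableSet_Ioi
  have i2 : Integrable (({a} : Set ℝ).indicator fun _ : ℝ => ε) π :=
    (integrable_const _).indicator (measurableSet_singleton a)
  have hle : ∫ s, g (x - s) ∂π ≤ ∫ s, ((L + ε * α / 4) + (Set.Ioi (x - T)).indicator (fun _ => C') s
      - ({a} : Set ℝ).indicator (fun _ => ε) s) ∂π := by
    refine integral_mono hint (((integrable_const _).add i1).sub i2) ?_
    intro s
    simp only [Set.indicator, Set.mem_Ioi, Set.mem_singleton_iff]
    have hCn : 0 ≤ C' := by positivity
    by_cases hsa : s = a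
    · subst hsa
      simp only [if_true]
      split_ifs <;> linarith
    · simp only [if_neg hsa]
      split_ifs with h
      · have := (le_abs_self _).trans (hC (x - s))
        have := neg_abs_le L
        linarith
      · have := hT (x - s) (by linarith)
        linarith
  rw [integral_sub (by exact (integrable_const _).add i1) i2, integral_add (integrable_const _) i1,
    integral_indicator measurableSet_Ioi, integral_indicator (measurableSet_singleton a)] at hle
  simp only [integral_const, smul_eq_mul, probReal_univ, one_mul, measureReal_restrict_apply,
    MeasurableSet.univ, Set.univ_inter] at hle
  rw [← hα] at hle
  have := hr x
  nlinarith

lemma shift_iter [IsProbabilityMeasure π] {g e : ℝ → ℝ} {C L a : ℝ} (hg : Measurable g)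
    (hC : ∀ x, |g x| ≤ C) (he : Tendsto e atTop (𝓝 0))
    (hr : ∀ x, g x = e x + ∫ s, g (x - s) ∂π) (ha : 0 < π.real {a})
    (hL : ∀ η > 0, ∀ᶠ x in atTop, g x < L + η) (M : ℕ) (ε : ℝ) (hε : 0 < ε) :
    ∃ δ > 0, ∀ᶠ x in atTop, L - δ < g x → ∀ j ≤ M, L - ε < g (x - j * a) := by
  induction M with
  | zero =>
    refine ⟨ε, hε, Eventually.of_forall fun x hx j hj => ?_⟩
    have : j = 0 := by omega
    subst this; simpa using hx
  | succ M ih =>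
    obtain ⟨δ1, hδ1, h1⟩ := ih
    obtain ⟨δ, hδ, h2⟩ := shift_step hg hC he hr ha hL δ1 hδ1
    have h3 : ∀ᶠ x in atTop, L - δ1 < g (x - a) → ∀ j ≤ M, L - ε < g (x - a - j * a) :=
      (tendsto_atTop_add_const_right atTop (-a) tendsto_id).eventually h1
    refine ⟨min δ ε, lt_min hδ hε, ?_⟩
    filter_upwards [h2, h3] with x hx2 hx3 hx j hj
    have m1 := min_le_left δ ε
    have m2 := min_le_right δ ε
    rcases j with _ | j
    · simp; linarith
    · have := hx3 (hx2 (by linarith)) j (by omega)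
      push_cast
      convert this using 2
      ring

lemma shift_le [IsProbabilityMeasure π] {h f : ℝ → ℝ} {C a : ℝ} (hh : Measurable h)
    (hC : ∀ x, |h x| ≤ C) (hf : Tendsto f atTop (𝓝 0))
    (hr : ∀ x, h x = f x + ∫ s, h (x - s) ∂π) (ha : 0 < π.real {a}) (ε : ℝ) (hε : 0 < ε) :
    ∀ᶠ x in atTop, h x - h (x - a) < ε := by
  set g : ℝ → ℝ := fun x => h x - h (x - a) with hg
  have hgm : Measurable g := hh.sub (hh.comp (by fun_prop))
  have hgC : ∀ x, |g x| ≤ C + C := fun x => (abs_sub _ _).trans (add_le_add (hC _) (hC _))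
  have he : Tendsto (fun x => f x - f (x - a)) atTop (𝓝 0) := by
    simpa [sub_eq_add_neg] using hf.sub (hf.comp (tendsto_atTop_add_const_right atTop (-a) tendsto_id))
  have hgr : ∀ x, g x = (f x - f (x - a)) + ∫ s, g (x - s) ∂π := by
    intro x
    have i : ∀ y, Integrable (fun s => h (y - s)) π := fun y =>
      integrable_bdd (hh.comp (by fun_prop)) fun s => hC _
    simp only [hg]
    have e : ∀ s, h (x - s - a) = h (x - a - s) := fun s => by congr 1; ring
    simp only [e]
    rw [integral_sub (i x) (i (x - a)), hr x, hr (x - a)]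
    ring_nf
  have hb1 : IsBoundedUnder (· ≤ ·) atTop g :=
    isBoundedUnder_of ⟨C + C, fun x => (le_abs_self _).trans (hgC x)⟩
  have hb2 : IsBoundedUnder (· ≥ ·) atTop g :=
    isBoundedUnder_of ⟨-(C + C), fun x => (abs_le.1 (hgC x)).1⟩
  set L := limsup g atTop with hLdef
  have hL : ∀ η > 0, ∀ᶠ x in atTop, g x < L + η := fun η hη =>
    eventually_lt_of_limsup_lt (by rw [← hLdef]; linarith) hb1
  suffices hL0 : L ≤ 0 by
    filter_upwards [hL ε hε] with x hx
    simp only [hg] at hx; linarith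
  by_contra hpos
  push Not at hpos
  obtain ⟨M, hM⟩ := exists_nat_gt ((C + C) / (L / 2))
  rw [div_lt_iff₀ (by positivity)] at hM
  obtain ⟨δ, hδ, h1⟩ := shift_iter hgm hgC he hgr ha hL M (L / 2) (by positivity)
  have h2 : ∃ᶠ x in atTop, L - δ < g x :=
    frequently_lt_of_lt_limsup hb2.isCoboundedUnder_le (by rw [← hLdef]; linarith)
  obtain ⟨x, hx1, hx2⟩ := (h2.and_eventually h1).exists
  have h3 := hx2 hx1
  have h4 : ∑ j ∈ Finset.range M, g (x - j * a) = h x - h (x - M * a) := by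
    have := Finset.sum_range_sub' (fun j : ℕ => h (x - j * a)) M
    simp only [Nat.cast_zero, zero_mul, sub_zero] at this
    rw [← this]
    refine Finset.sum_congr rfl fun j _ => ?_
    simp only [hg]
    push_cast
    congr 2; ring
  have h5 : (M : ℝ) * (L / 2) ≤ ∑ j ∈ Finset.range M, g (x - j * a) := by
    have := Finset.card_nsmul_le_sum (Finset.range M) (fun j : ℕ => g (x - j * a)) (L / 2)
      fun j hj => by
        have := h3 j (by simp at hj; omega)
        linarith
    simpa using this
  have h6 := hC x
  have h7 := hC (x - M * a)
  rw [abs_le] at h6 h7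
  linarith

lemma shift_zero [IsProbabilityMeasure π] {h f : ℝ → ℝ} {C a : ℝ} (hh : Measurable h)
    (hC : ∀ x, |h x| ≤ C) (hf : Tendsto f atTop (𝓝 0))
    (hr : ∀ x, h x = f x + ∫ s, h (x - s) ∂π) (ha : 0 < π.real {a}) :
    Tendsto (fun x => h x - h (x - a)) atTop (𝓝 0) := by
  rw [tendsto_order]
  constructor
  · intro b hb
    have := shift_le (h := fun x => - h x) (f := fun x => - f x) (C := C) (a := a) hh.neg
      (by simpa using hC) (by simpa using hf.neg)
      (by intro x; rw [integral_neg]; linarith [hr x]) ha (-b) (by linarith)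
    filter_upwards [this] with x hx
    linarith
  · intro b hb
    exact shift_le hh hC hf hr ha b hb

lemma key_limit [IsProbabilityMeasure π] (hℓ : ∀ᵐ s ∂π, 0 ≤ s) (hint : Integrable id π)
    {h f : ℝ → ℝ} {C : ℝ} (hh : Measurable h) (hf : Measurable f)
    (h0 : ∀ x, 0 ≤ h x) (hC : ∀ x, h x ≤ C) (hneg : ∀ x < 0, h x = 0) (f0 : ∀ x, 0 ≤ f x)
    (hfi : Integrable f) (hr : ∀ x, h x = f x + ∫ s, h (x - s) ∂π)
    (hs : ∀ u, Tendsto (fun x => h x - h (x - u)) atTop (𝓝 0)) :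
    Tendsto (fun x => h x * ∫ s, s ∂π) atTop (𝓝 (∫ y, f y)) := by
  set H : ℝ → ℝ≥0∞ := fun x => ENNReal.ofReal (h x) with hH
  set F : ℝ → ℝ≥0∞ := fun x => ENNReal.ofReal (f x) with hF
  have mH : Measurable H := hh.ennreal_ofReal
  have mF : Measurable F := hf.ennreal_ofReal
  have hR : ∀ x, H x = F x + ∫⁻ s, H (x - s) ∂π := by
    intro x
    have i : Integrable (fun s => h (x - s)) π :=
      integrable_bdd (hh.comp (by fun_prop)) (C := C) fun s => by
        rw [abs_of_nonneg (h0 _)]; exact hC _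
    rw [hH]
    simp only
    rw [hr x, ENNReal.ofReal_add (f0 x) (integral_nonneg fun s => h0 _),
      ofReal_integral_eq_lintegral_ofReal i (Eventually.of_forall fun s => h0 _)]
  have hC0 : 0 ≤ C := (h0 0).trans (hC 0)
  have hfin : ∀ x, ∫⁻ y in Set.Iic x, H y < ∞ := by
    intro x
    calc ∫⁻ y in Set.Iic x, H y ≤ ∫⁻ y, (Set.Icc 0 x).indicator (fun _ => ENNReal.ofReal C) y := by
          rw [← lintegral_indicator measurableSet_Iic]
          apply lintegral_mono
          intro y
          simp only [Set.indicator, Set.mem_Iic, Set.mem_Icc, hH]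
          split_ifs with h1 h2 h2
          · exact ENNReal.ofReal_le_ofReal (hC y)
          · rw [hneg y (by by_contra hh; exact h2 ⟨not_lt.1 hh, h1⟩)]; simp
          · simp
          · simp
      _ < ∞ := by
          rw [lintegral_indicator measurableSet_Icc]
          simp [ENNReal.mul_lt_top_iff]
  have hcons : ∀ x, ∫⁻ y in Set.Iic x, H y * π (Set.Ioi (x - y)) = ∫⁻ y in Set.Iic x, F y := by
    intro x
    have e1 : ∫⁻ y in Set.Iic x, H y = (∫⁻ y in Set.Iic x, F y) +
        ∫⁻ y in Set.Iic x, ∫⁻ s, H (y - s) ∂π := by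
      rw [← lintegral_add_left mF]
      exact lintegral_congr fun y => hR y
    have e2 : ∫⁻ y in Set.Iic x, ∫⁻ s, H (y - s) ∂π =
        ∫⁻ y in Set.Iic x, H y * π (Set.Iic (x - y)) := by
      rw [lintegral_lintegral_swap (by
        apply Measurable.aemeasurable
        exact mH.comp (measurable_fst.sub measurable_snd))]
      have e3 : ∀ s, ∫⁻ y in Set.Iic x, H (y - s) = ∫⁻ y, (Set.Iic (x - s)).indicator H y := by
        intro s
        rw [← lintegral_indicator measurableSet_Iic,
          ← lintegral_sub_right_eq_self (fun y => (Set.Iic (x - s)).indicator H y) s]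
        apply lintegral_congr
        intro y
        simp [Set.indicator]
      simp_rw [e3]
      rw [lintegral_lintegral_swap]
      · rw [← lintegral_indicator measurableSet_Iic]
        apply lintegral_congr
        intro y
        have e4 : ∀ s, (Set.Iic (x - s)).indicator H y = (Set.Iic (x - y)).indicator (fun _ => H y) s := by
          intro s
          simp only [Set.indicator, Set.mem_Iic]
          have : y ≤ x - s ↔ s ≤ x - y := by constructor <;> intro <;> linarith
          simp [this]
        simp_rw [e4]
        rw [lintegral_indicator measurableSet_Iic]
        simp only [lintegral_const, MeasurableSet.univ, Measure.restrict_apply, Set.univ_inter]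
        simp only [Set.indicator, Set.mem_Iic]
        split_ifs with hy
        · rfl
        · have : π (Set.Iic (x - y)) = 0 := by
            refine measure_mono_null ?_ (ae_iff.1 hℓ)
            intro s hs
            simp only [Set.mem_Iic] at hs
            simp only [Set.mem_ofPred_eq, not_le]
            linarith
          rw [this, mul_zero]
      · apply Measurable.aemeasurable
        have : Function.uncurry (fun s y => (Set.Iic (x - s)).indicator H y) =
          ({p : ℝ × ℝ | p.2 ≤ x - p.1}).indicator (fun p => H p.2) := by
          ext p; simp [Set.indicator, Function.uncurry]
        rw [this]
        exact (mH.comp measurable_snd).indicator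
          (measurableSet_le measurable_snd (by fun_prop))
    have e5 : ∫⁻ y in Set.Iic x, H y = (∫⁻ y in Set.Iic x, H y * π (Set.Ioi (x - y))) +
        ∫⁻ y in Set.Iic x, H y * π (Set.Iic (x - y)) := by
      rw [← lintegral_add_right]
      · apply lintegral_congr
        intro y
        rw [← mul_add]
        have : π (Set.Ioi (x - y)) + π (Set.Iic (x - y)) = 1 := by
          rw [← Set.compl_Iic, add_comm]
          exact prob_add_prob_compl measurableSet_Iic
        rw [this, mul_one]
      · refine mH.mul ?_
        have : Monotone fun t : ℝ => π (Set.Iic t) := fun a b hab => measure_mono (Set.Iic_subset_Iic.2 hab)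
        exact this.measurable.comp (by fun_prop)
    have hfin2 : ∫⁻ y in Set.Iic x, H y * π (Set.Iic (x - y)) ≠ ∞ := by
      refine ne_of_lt (lt_of_le_of_lt ?_ (hfin x))
      rw [e5]; exact le_add_self
    rw [e1, e2] at e5
    exact ((ENNReal.add_left_inj hfin2).1 e5).symm
  have mt : Measurable fun u : ℝ => π (Set.Ioi u) := by
    have : Antitone fun t : ℝ => π (Set.Ioi t) := fun a b hab => measure_mono (Set.Ioi_subset_Ioi hab)
    exact this.measurable
  have hcons' : ∀ x, ∫ u in Set.Ici 0, h (x - u) * π.real (Set.Ioi u) = ∫ y in Set.Iic x, f y := by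
    intro x
    rw [integral_eq_lintegral_of_nonneg_ae, integral_eq_lintegral_of_nonneg_ae]
    · congr 1
      rw [← hcons x, ← lintegral_indicator measurableSet_Iic, ← lintegral_indicator measurableSet_Ici]
      rw [← lintegral_sub_left_eq_self _ x]
      apply lintegral_congr
      intro y
      simp only [Set.indicator, Set.mem_Ici, Set.mem_Iic]
      have : 0 ≤ x - y ↔ y ≤ x := by constructor <;> intro <;> linarith
      simp only [this]
      split_ifs
      · rw [sub_sub_cancel, ENNReal.ofReal_mul (h0 _)]
        simp [hH]
      · rfl
    · exact Eventually.of_forall f0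
    · exact hf.aestronglyMeasurable
    · exact Eventually.of_forall fun u => mul_nonneg (h0 _) measureReal_nonneg
    · exact ((hh.comp (by fun_prop)).mul mt.ennreal_toReal).aestronglyMeasurable
  have hlay : ∫⁻ u in Set.Ioi 0, π (Set.Ioi u) < ∞ := by
    have := lintegral_eq_lintegral_meas_lt π (f := id) hℓ aemeasurable_id
    simp only [id] at this
    have e : ∀ t : ℝ, {a | t < a} = Set.Ioi t := fun t => rfl
    simp only [e] at this
    rw [← this]
    exact hint.lintegral_lt_top
  have hti : IntegrableOn (fun u => π.real (Set.Ioi u)) (Set.Ici 0) := by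
    rw [integrableOn_Ici_iff_integrableOn_Ioi]
    exact integrable_toReal_of_lintegral_ne_top mt.aemeasurable hlay.ne
  have hmean : ∫ u in Set.Ici 0, π.real (Set.Ioi u) = ∫ s, s ∂π := by
    rw [integral_Ici_eq_integral_Ioi]
    exact (Integrable.integral_eq_integral_meas_lt hint hℓ).symm
  have hlim : Tendsto (fun x => ∫ u in Set.Ici 0, (h x - h (x - u)) * π.real (Set.Ioi u)) atTop
      (𝓝 (∫ u in Set.Ici (0:ℝ), 0)) := by
    apply tendsto_integral_filter_of_dominated_convergence
      (fun u => C * π.real (Set.Ioi u))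
    · exact Eventually.of_forall fun x =>
        ((measurable_const.sub (hh.comp (by fun_prop))).mul mt.ennreal_toReal).aestronglyMeasurable
    · refine Eventually.of_forall fun x => Eventually.of_forall fun u => ?_
      rw [norm_mul, Real.norm_of_nonneg (measureReal_nonneg (μ := π))]
      gcongr
      rw [Real.norm_eq_abs, abs_le]
      constructor <;> linarith [h0 x, hC x, h0 (x - u), hC (x - u)]
    · exact hti.const_mul C
    · refine Eventually.of_forall fun u => ?_
      simpa using (hs u).mul_const (π.real (Set.Ioi u))
  have hsplit : ∀ x, ∫ u in Set.Ici 0, (h x - h (x - u)) * π.real (Set.Ioi u) =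
      h x * ∫ s, s ∂π - ∫ y in Set.Iic x, f y := by
    intro x
    rw [← hcons' x, ← hmean, ← integral_const_mul, ← integral_sub (hti.const_mul _)]
    · simp_rw [sub_mul]
    · refine Integrable.mono' (hti.const_mul C) ((hh.comp (by fun_prop)).mul mt.ennreal_toReal).aestronglyMeasurable ?_
      refine Eventually.of_forall fun u => ?_
      rw [norm_mul, Real.norm_of_nonneg (measureReal_nonneg (μ := π)), Real.norm_of_nonneg (h0 _)]
      gcongr
      exact hC _
  simp_rw [hsplit] at hlim
  have hF2 : Tendsto (fun x => ∫ y in Set.Iic x, f y) atTop (𝓝 (∫ y, f y)) :=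
    (aecover_Iic (μ := volume) (tendsto_id (α := ℝ))).integral_tendsto_of_countably_generated hfi
  simpa using hlim.add hF2

end Ren

namespace Ren

open MeasureTheory ProbabilityTheory Topology

variable {π : Measure ℝ} {ρ ℓ : ℝ}

lemma B0_tendsto (H : Hyp π ρ ℓ) : Tendsto (B π ρ 0) atTop (𝓝 0) := by
  have h1 : Tendsto (fun x : ℝ => Real.exp (-ρ * x)) atTop (𝓝 0) := by
    apply Real.tendsto_exp_atBot.comp
    exact tendsto_id.const_mul_atTop_of_neg (by linarith [H.hρ])
  refine h1.congr' ?_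
  filter_upwards [eventually_ge_atTop 0] with x hx
  simp [B, hx]

lemma B0_int (H : Hyp π ρ ℓ) : Integrable (B π ρ 0) := by
  have h := exp_neg_integrableOn_Ioi 0 H.hρ
  rw [← integrableOn_Ici_iff_integrableOn_Ioi, ← integrable_indicator_iff measurableSet_Ici] at h
  refine h.congr (Eventually.of_forall fun x => ?_)
  simp [B, Set.indicator]

lemma B0_pos (H : Hyp π ρ ℓ) : 0 < ∫ x, B π ρ 0 x := by
  rw [integral_pos_iff_support_of_nonneg (B_props H 0).nn (B0_int H)]
  have : Set.Icc 0 1 ⊆ Function.support (B π ρ 0) := by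
    intro x hx
    simp [B, hx.1, Real.exp_ne_zero]
  refine lt_of_lt_of_le ?_ (measure_mono this)
  simp

lemma v_shift_group (H : Hyp π ρ ℓ) {D : Set ℝ} (hpos : ∀ a ∈ D, 0 < π.real {a})
    {s : ℝ} (hs : s ∈ AddSubgroup.closure D) :
    Tendsto (fun x => v π ρ x - v π ρ (x - s)) atTop (𝓝 0) := by
  have := H.prob
  induction hs using AddSubgroup.closure_induction with
  | mem a ha =>
    exact shift_zero (v_meas H) (v_abs H) (B0_tendsto H) (v_renewal H) (hpos a ha)
  | zero => simp
  | add a b _ _ ha hb =>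
    have h2 : Tendsto (fun x : ℝ => x - a) atTop atTop :=
      tendsto_atTop_add_const_right atTop (-a) tendsto_id
    have := ha.add (hb.comp h2)
    rw [add_zero] at this
    refine this.congr fun x => ?_
    simp only [Function.comp]
    rw [sub_sub x a b]; ring
  | neg a _ ha =>
    have h2 : Tendsto (fun x : ℝ => x + a) atTop atTop :=
      tendsto_atTop_add_const_right atTop a tendsto_id
    have := (ha.comp h2).neg
    rw [neg_zero] at this
    refine this.congr fun x => ?_
    simp only [Function.comp, add_sub_cancel_right, sub_neg_eq_add]; ring

lemma v_cmp (H : Hyp π ρ ℓ) {x y η : ℝ} (h : x ≤ y) (h2 : y - x ≤ η) :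
    v π ρ x ≤ v π ρ y + (Real.exp (ρ * η) - 1) * CC ρ ℓ := by
  have h1 := v_mono H h
  simp only at h1
  have h3 : v π ρ x ≤ Real.exp (ρ * (y - x)) * v π ρ y := by
    have : Real.exp (ρ * y) = Real.exp (ρ * x) * Real.exp (ρ * (y - x)) := by
      rw [← Real.exp_add]; ring_nf
    rw [this, mul_assoc] at h1
    exact le_of_mul_le_mul_left h1 (Real.exp_pos _)
  have h4 : Real.exp (ρ * (y - x)) ≤ Real.exp (ρ * η) := by
    rw [Real.exp_le_exp]; exact mul_le_mul_of_nonneg_left h2 H.hρ.le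
  have h5 := v_nonneg H y
  have h6 := v_le H y
  have h7 : 1 ≤ Real.exp (ρ * η) := by
    rw [Real.one_le_exp_iff]; exact mul_nonneg H.hρ.le (by linarith)
  nlinarith [mul_le_mul_of_nonneg_right h4 h5,
    mul_le_mul_of_nonneg_left h6 (by linarith : 0 ≤ Real.exp (ρ * η) - 1)]

lemma v_shift_dense (H : Hyp π ρ ℓ) {D : Set ℝ} (hpos : ∀ a ∈ D, 0 < π.real {a})
    (hd : Dense (AddSubgroup.closure D : Set ℝ)) (u : ℝ) :
    Tendsto (fun x => v π ρ x - v π ρ (x - u)) atTop (𝓝 0) := by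
  have hη : ∀ ε > 0, ∃ η > 0, (Real.exp (ρ * η) - 1) * CC ρ ℓ < ε := by
    intro ε hε
    have h1 : Tendsto (fun η => (Real.exp (ρ * η) - 1) * CC ρ ℓ) (𝓝[>] 0) (𝓝 0) := by
      have : ContinuousAt (fun η => (Real.exp (ρ * η) - 1) * CC ρ ℓ) 0 := by fun_prop
      have := this.tendsto
      simp at this
      exact this.mono_left nhdsWithin_le_nhds
    obtain ⟨η, h2, h3⟩ := ((h1.eventually_lt_const hε).and self_mem_nhdsWithin).exists
    exact ⟨η, h3, h2⟩
  rw [tendsto_order]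
  constructor
  · intro b hb
    obtain ⟨η, hη0, hη1⟩ := hη (-b / 2) (by linarith)
    obtain ⟨s, hs, hs1, hs2⟩ := hd.exists_between (show u - η < u by linarith)
    have := (v_shift_group H hpos hs).eventually_const_lt (show b / 2 < 0 by linarith)
    filter_upwards [this] with x hx
    have := v_cmp H (x := x - u) (y := x - s) (η := η) (by linarith) (by linarith)
    linarith
  · intro b hb
    obtain ⟨η, hη0, hη1⟩ := hη (b / 2) (by linarith)
    obtain ⟨s, hs, hs1, hs2⟩ := hd.exists_between (show u < u + η by linarith)
    have := (v_shift_group H hpos hs).eventually_lt_const (show 0 < b / 2 by linarith)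
    filter_upwards [this] with x hx
    have := v_cmp H (x := x - s) (y := x - u) (η := η) (by linarith) (by linarith)
    linarith

lemma mean_pos (H : Hyp π ρ ℓ) (hint : Integrable id π) : 0 < ∫ s, s ∂π := by
  have := H.prob
  have : ∫ s, ℓ ∂π ≤ ∫ s, s ∂π := integral_mono_ae (integrable_const _) hint H.hπ
  simp at this
  linarith [H.hℓ]

/-- conclusion of renewal theorem -/
structure Lim (π : Measure ℝ) (ρ : ℝ) (D : Set ℝ) (c φ0 : ℝ) (φ : ℝ → ℝ) : Prop where
  c0 : 0 < c
  φ00 : 0 < φ0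
  lo : ∀ x, φ0 ≤ φ x
  hi : ∀ x, φ x ≤ 1
  inv : ∀ x, ∀ s ∈ D, φ (x - s) = φ x
  lim : Tendsto (fun x => v π ρ x - c * φ x) atTop (𝓝 0)

theorem v_limit (H : Hyp π ρ ℓ) {D : Set ℝ} (hD : ∀ᵐ s ∂π, s ∈ D)
    (hpos : ∀ a ∈ D, 0 < π.real {a}) (hint : Integrable id π) :
    ∃ c φ0 φ, Lim π ρ D c φ0 φ := by
  have := H.prob
  have hm := mean_pos H hint
  have hπ0 : ∀ᵐ s ∂π, 0 ≤ s := H.hπ.mono fun s hs => H.hℓ.le.trans hs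
  rcases AddSubgroup.dense_or_cyclic (AddSubgroup.closure D) with hd | ⟨lam, hlam⟩
  · have h := key_limit hπ0 hint (v_meas H) (B_props H 0).meas (v_nonneg H) (v_le H)
      (fun x hx => v_neg H hx) (B_props H 0).nn (B0_int H) (v_renewal H)
      (v_shift_dense H hpos hd)
    refine ⟨(∫ x, B π ρ 0 x) / ∫ s, s ∂π, 1, fun _ => 1, div_pos (B0_pos H) hm, one_pos,
      fun _ => le_rfl, fun _ => le_rfl, fun _ _ _ => rfl, ?_⟩
    have h2 := h.div_const (∫ s, s ∂π)
    simp only [mul_div_assoc, div_self hm.ne', mul_one] at h2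
    simpa using h2.sub_const ((∫ x, B π ρ 0 x) / ∫ s, s ∂π)
  · have hl0 : lam ≠ 0 := by
      rintro rfl
      obtain ⟨s, hs1, hs2⟩ := (hD.and H.hπ).exists
      have : s ∈ AddSubgroup.closure {(0:ℝ)} := hlam ▸ AddSubgroup.subset_closure hs1
      obtain ⟨n, hn⟩ := AddSubgroup.mem_closure_singleton.1 this
      rw [smul_zero] at hn
      linarith [H.hℓ]
    obtain ⟨b, hb0, hb⟩ : ∃ b > 0, AddSubgroup.closure D = AddSubgroup.zmultiples b := by
      rw [hlam, ← AddSubgroup.zmultiples_eq_closure]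
      rcases lt_or_gt_of_ne hl0 with h | h
      · exact ⟨-lam, by linarith, by simp⟩
      · exact ⟨lam, h, rfl⟩
    clear hlam hl0 lam
    set fl : ℝ → ℝ := fun x => b * ⌊x / b⌋ with hfl
    have fl_le : ∀ x, fl x ≤ x := by
      intro x
      have := Int.floor_le (x / b)
      rw [le_div_iff₀ hb0] at this
      simp only [hfl]; linarith
    have fl_gt : ∀ x, x < fl x + b := by
      intro x
      have := Int.lt_floor_add_one (x / b)
      rw [div_lt_iff₀ hb0] at this
      simp only [hfl]; linarith
    have fl_nn : ∀ x, 0 ≤ fl x ↔ 0 ≤ x := by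
      intro x
      constructor
      · intro h; exact h.trans (fl_le x)
      · intro h
        have : 0 ≤ ⌊x / b⌋ := Int.floor_nonneg.2 (by positivity)
        have : (0:ℝ) ≤ ⌊x / b⌋ := by exact_mod_cast this
        simp only [hfl]; positivity
    have fl_shift : ∀ x, ∀ s ∈ D, fl (x - s) = fl x - s := by
      intro x s hs
      have : s ∈ AddSubgroup.zmultiples b := hb ▸ AddSubgroup.subset_closure hs
      obtain ⟨j, hj⟩ := AddSubgroup.mem_zmultiples_iff.1 this
      rw [zsmul_eq_mul] at hj
      simp only [hfl]
      have : (x - s) / b = x / b - j := by rw [← hj]; field_simp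
      rw [this, Int.floor_sub_intCast, ← hj]; push_cast; ring
    have fl_top : Tendsto fl atTop atTop := by
      refine tendsto_atTop_mono (fun x => (by linarith [fl_gt x] : x - b ≤ fl x)) ?_
      exact tendsto_atTop_add_const_right atTop (-b) tendsto_id
    have fl_meas : Measurable fl := by
      simp only [hfl]; fun_prop
    set φ : ℝ → ℝ := fun x => Real.exp (-ρ * (x - fl x)) with hφ
    have hB : ∀ m x, B π ρ m x = φ x * B π ρ m (fl x) := by
      intro m
      induction m with
      | zero =>
        intro x
        simp only [B, fl_nn]
        split_ifs
        · simp only [hφ]; rw [← Real.exp_add]; ring_nf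
        · simp
      | succ m ih =>
        intro x
        simp only [B]
        rw [← integral_const_mul]
        apply integral_congr_ae
        filter_upwards [hD] with s hs
        rw [ih]
        simp only [hφ]
        rw [fl_shift x s hs]
        ring_nf
    have hv : ∀ x, v π ρ x = φ x * v π ρ (fl x) := by
      intro x
      simp only [v]
      rw [← tsum_mul_left]
      exact tsum_congr fun m => hB m x
    have φ_le : ∀ x, φ x ≤ 1 := by
      intro x
      simp only [hφ, Real.exp_le_one_iff]
      nlinarith [H.hρ, fl_le x]
    have φ_ge : ∀ x, Real.exp (-ρ * b) ≤ φ x := by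
      intro x
      simp only [hφ, Real.exp_le_exp]
      nlinarith [H.hρ, fl_gt x]
    have φ_pos : ∀ x, 0 < φ x := fun x => Real.exp_pos _
    have fint : Integrable (fun x => B π ρ 0 (fl x)) := by
      refine Integrable.mono' ((B0_int H).const_mul (Real.exp (ρ * b)))
        ((B_props H 0).meas.comp fl_meas).aestronglyMeasurable (Eventually.of_forall fun x => ?_)
      rw [Real.norm_of_nonneg ((B_props H 0).nn _), hB 0 x, ← mul_assoc]
      refine le_mul_of_one_le_left ((B_props H 0).nn _) ?_
      calc (1:ℝ) = Real.exp (ρ * b) * Real.exp (-ρ * b) := by rw [← Real.exp_add]; simp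
        _ ≤ _ := by gcongr; exact φ_ge x
    have fpos : 0 < ∫ x, B π ρ 0 (fl x) := by
      refine (B0_pos H).trans_le (integral_mono (B0_int H) fint fun x => ?_)
      simp only
      rw [hB 0 x]
      exact mul_le_of_le_one_left ((B_props H 0).nn _) (φ_le x)
    have hshift : ∀ u, Tendsto (fun x => v π ρ (fl x) - v π ρ (fl (x - u))) atTop (𝓝 0) := by
      intro u
      have hg : ∀ j : ℤ, Tendsto (fun x => |v π ρ (fl x) - v π ρ (fl x - j * b)|) atTop (𝓝 0) := by
        intro j
        have hj : (j * b : ℝ) ∈ AddSubgroup.closure D := by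
          rw [hb, AddSubgroup.mem_zmultiples_iff]; exact ⟨j, by simp⟩
        have := ((v_shift_group H hpos hj).comp fl_top).abs
        simpa using this
      have hsum := (hg ⌊u / b⌋).add (hg (⌊u / b⌋ + 1))
      rw [add_zero] at hsum
      refine squeeze_zero_norm (fun x => ?_) hsum
      have hcase : ⌊(x - u) / b⌋ = ⌊x / b⌋ - ⌊u / b⌋ ∨ ⌊(x - u) / b⌋ = ⌊x / b⌋ - (⌊u / b⌋ + 1) := by
        rw [sub_div]
        have h1 := Int.le_floor_add (x / b - u / b) (u / b)
        have h2 := Int.le_floor_add_floor (x / b - u / b) (u / b)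
        rw [sub_add_cancel] at h1 h2
        omega
      rw [Real.norm_eq_abs]
      rcases hcase with h | h
      · have : fl (x - u) = fl x - ⌊u / b⌋ * b := by
          simp only [hfl]; rw [h]; push_cast; ring
        rw [this]
        exact le_add_of_nonneg_right (abs_nonneg _)
      · have : fl (x - u) = fl x - (⌊u / b⌋ + 1 : ℤ) * b := by
          simp only [hfl]; rw [h]; push_cast; ring
        rw [this]
        exact le_add_of_nonneg_left (abs_nonneg _)
    have h := key_limit (h := fun x => v π ρ (fl x)) (f := fun x => B π ρ 0 (fl x)) hπ0 hint
      ((v_meas H).comp fl_meas) ((B_props H 0).meas.comp fl_meas) (fun x => v_nonneg H _)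
      (fun x => v_le H _) (fun x hx => v_neg H ((fl_le x).trans_lt hx))
      (fun x => (B_props H 0).nn _) fint
      (fun x => by
        rw [v_renewal H]
        congr 1
        apply integral_congr_ae
        filter_upwards [hD] with s hs
        rw [fl_shift x s hs]) hshift
    refine ⟨(∫ x, B π ρ 0 (fl x)) / ∫ s, s ∂π, Real.exp (-ρ * b), φ, div_pos fpos hm,
      Real.exp_pos _, φ_ge, φ_le, ?_, ?_⟩
    · intro x s hs
      simp only [hφ]
      rw [fl_shift x s hs]; ring_nf
    · have h2 := h.div_const (∫ s, s ∂π)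
      simp only [mul_div_assoc, div_self hm.ne', mul_one] at h2
      have h3 := (h2.sub_const ((∫ x, B π ρ 0 (fl x)) / ∫ s, s ∂π)).abs
      rw [sub_self, abs_zero] at h3
      refine squeeze_zero_norm (fun x => ?_) h3
      rw [hv x, Real.norm_eq_abs]
      have : φ x * v π ρ (fl x) - (∫ x, B π ρ 0 (fl x)) / (∫ s, s ∂π) * φ x =
        φ x * (v π ρ (fl x) - (∫ x, B π ρ 0 (fl x)) / (∫ s, s ∂π)) := by ring
      rw [this, abs_mul, abs_of_pos (φ_pos x)]
      exact mul_le_of_le_one_left (abs_nonneg _) (φ_le x)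

end Ren

namespace Ren
open MeasureTheory ProbabilityTheory Topology
variable {π : Measure ℝ} {ρ ℓ : ℝ}

/-- product space -/
def Q (π : Measure ℝ) [IsProbabilityMeasure π] : Measure (ℕ → ℝ) := Measure.infinitePi (fun _ : ℕ => π)

instance [IsProbabilityMeasure π] : IsProbabilityMeasure (Q π) := by unfold Q; infer_instance

/-- partial sums -/
def S (k : ℕ) (ω : ℕ → ℝ) : ℝ := ∑ i ∈ Finset.range k, ω i

lemma S_meas (k : ℕ) : Measurable (S k) := by
  unfold S; fun_prop

lemma S_indep [IsProbabilityMeasure π] (k : ℕ) : IndepFun (S k) (fun ω : ℕ → ℝ => ω k) (Q π) := by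
  have h := iIndepFun_infinitePi (P := fun _ : ℕ => π) (X := fun _ ω => ω) (fun i => measurable_id)
  have := h.indepFun_sum_range_succ (fun i => by fun_prop) k
  convert this using 1
  · ext ω; simp [S]
  · rfl

lemma S_int [IsProbabilityMeasure π] (k : ℕ) {f : ℝ → ℝ} (hf : Measurable f) {C : ℝ} (hC : ∀ x, |f x| ≤ C) :
    ∫ ω, f (S (k+1) ω) ∂(Q π) = ∫ ω, (∫ s, f (S k ω + s) ∂π) ∂(Q π) := by
  have h1 : (Q π).map (fun ω => (S k ω, ω k)) = ((Q π).map (S k)).prod π := by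
    rw [(S_indep k).map_prod_eq_prod_map_map (S_meas k).aemeasurable (measurable_pi_apply k).aemeasurable]
    congr 1
    exact Measure.infinitePi_map_eval _ k
  have : IsProbabilityMeasure ((Q π).map (S k)) := Measure.isProbabilityMeasure_map (S_meas k).aemeasurable
  have hg : Measurable (fun p : ℝ × ℝ => f (p.1 + p.2)) := hf.comp (by fun_prop)
  calc ∫ ω, f (S (k+1) ω) ∂(Q π) = ∫ ω, (fun p : ℝ × ℝ => f (p.1 + p.2)) (S k ω, ω k) ∂(Q π) := by
        simp [S, Finset.sum_range_succ]
    _ = ∫ p, f (p.1 + p.2) ∂((Q π).map (fun ω => (S k ω, ω k))) := by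
        rw [integral_map _ hg.aestronglyMeasurable]
        exact ((S_meas k).prodMk (by fun_prop)).aemeasurable
    _ = ∫ z, ∫ s, f (z + s) ∂π ∂((Q π).map (S k)) := by
        rw [h1, integral_prod]
        exact Integrable.of_bound hg.aestronglyMeasurable C (ae_of_all _ fun p => by simpa using hC _)
    _ = _ := by
        rw [integral_map (S_meas k).aemeasurable]
        exact (hg.stronglyMeasurable.integral_prod_right).aestronglyMeasurable

lemma B_law (H : Hyp π ρ ℓ) (k : ℕ) (m : ℕ) (x : ℝ) : haveI := H.prob
    B π ρ (m + k) x = ∫ ω, B π ρ m (x - S k ω) ∂(Q π) := by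
  have := H.prob
  induction k generalizing m with
  | zero => simp [S]
  | succ k ih =>
    have h := S_int (π := π) k (f := fun z => B π ρ m (x - z)) ((B_props H m).meas.comp (by fun_prop)) (C := 1)
      (fun z => by rw [abs_of_nonneg ((B_props H m).nn _)]; exact (B_props H m).le1 _)
    rw [h, show m + (k+1) = (m+1) + k by ring, ih (m+1)]
    congr 1; ext ω
    simp only [B]
    congr 1; ext s; congr 1; ring

lemma ae_Q [IsProbabilityMeasure π] {p : ℝ → Prop} (h : ∀ᵐ s ∂π, p s) : ∀ᵐ ω ∂(Q π), ∀ i, p (ω i) := by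
  rw [ae_all_iff]
  intro i
  exact (measurePreserving_eval_infinitePi (fun _ : ℕ => π) i).quasiMeasurePreserving.ae h

lemma S_nonneg (H : Hyp π ρ ℓ) : haveI := H.prob
    ∀ᵐ ω ∂(Q π), ∀ k, 0 ≤ S k ω := by
  have := H.prob
  filter_upwards [ae_Q H.hπ] with ω h k
  exact Finset.sum_nonneg fun i _ => H.hℓ.le.trans (h i)

lemma tail_law (H : Hyp π ρ ℓ) (k : ℕ) (x : ℝ) : haveI := H.prob
    ∑' m, B π ρ (m + k) x = ∫ ω, v π ρ (x - S k ω) ∂(Q π) := by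
  have := H.prob
  obtain ⟨K, hK⟩ := exists_K H x
  have h1 : ∫ ω, v π ρ (x - S k ω) ∂(Q π) = ∫ ω, ∑ m ∈ Finset.range K, B π ρ m (x - S k ω) ∂(Q π) := by
    refine integral_congr_ae ?_
    filter_upwards [S_nonneg H] with ω h
    exact v_eq H (by linarith [h k])
  rw [h1, integral_finsetSum]
  · simp_rw [← B_law H]
    apply tsum_eq_sum
    intro m hm
    apply B_zero_of_le H hK
    simp at hm; omega
  · intro m _
    exact Integrable.of_bound ((B_props H m).meas.comp (measurable_const.sub (S_meas k))).aestronglyMeasurable 1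
      (ae_of_all _ fun z => by
        rw [Real.norm_eq_abs, abs_of_nonneg ((B_props H m).nn _)]; exact (B_props H m).le1 _)

lemma S_inv [IsProbabilityMeasure π] {D : Set ℝ} {φ : ℝ → ℝ} (hD : ∀ᵐ s ∂π, s ∈ D)
    (inv : ∀ x, ∀ s ∈ D, φ (x - s) = φ x) : ∀ᵐ ω ∂(Q π), ∀ k x, φ (x - S k ω) = φ x := by
  filter_upwards [ae_Q hD] with ω h k
  induction k with
  | zero => simp [S]
  | succ k ih =>
    intro x
    have : x - S (k+1) ω = (x - S k ω) - ω k := by simp [S, Finset.sum_range_succ]; ring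
    rw [this, inv _ _ (h k), ih]

/-- CLT for Q -/
lemma clt [IsProbabilityMeasure π] (h2 : MemLp id 2 π) :
    ∀ ζ : ℝ, Var[id; π] ≠ 0 → Tendsto (fun k : ℕ => (Q π).real {ω | S k ω ≤ k * (∫ s, s ∂π) + √k * ζ}) atTop
      (𝓝 ((gaussianReal 0 Var[id; π].toNNReal).real (Set.Iic ζ))) := by
  intro ζ hV
  have hmp (i : ℕ) := measurePreserving_eval_infinitePi (fun _ : ℕ => π) i
  have hid (i : ℕ) : IdentDistrib (fun ω : ℕ → ℝ => ω i) (id : ℝ → ℝ) (Q π) π :=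
    ⟨(measurable_pi_apply i).aemeasurable, by fun_prop, by rw [Measure.map_id]; exact (hmp i).map_eq⟩
  have hvar : Var[fun ω : ℕ → ℝ => ω 0; Q π] = Var[id; π] := (hid 0).variance_eq
  have hmean : ∫ ω : ℕ → ℝ, ω 0 ∂(Q π) = ∫ s, s ∂π := by simpa using (hid 0).integral_eq
  have hindep := iIndepFun_infinitePi (P := fun _ : ℕ => π) (X := fun _ ω => ω) (fun i => measurable_id)
  have T := tendstoInDistribution_inv_sqrt_mul_sum_sub (P := Q π) (X := fun i (ω : ℕ → ℝ) => ω i)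
    (P' := gaussianReal 0 Var[id; π].toNNReal) (Y := id) (by rw [hvar]; exact ⟨by fun_prop, by simp⟩)
    ((hid 0).memLp_iff.2 h2) hindep (fun i => (hid i).trans (hid 0).symm)
  have hne : Var[id; π].toNNReal ≠ 0 := by
    have := (variance_nonneg (id : ℝ → ℝ) π).lt_of_ne' hV
    simpa using this
  have := nullSingletonClass_gaussianReal (μ := 0) hne
  have T2 := ProbabilityMeasure.tendsto_measure_of_null_frontier_of_tendsto' T.tendsto (E := Set.Iic ζ)
    (by simp)
  simp only [ProbabilityMeasure.coe_mk, Measure.map_id] at T2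
  have T3 := (ENNReal.tendsto_toReal (measure_ne_top _ _)).comp T2
  refine Tendsto.congr' ?_ T3
  filter_upwards [eventually_gt_atTop 0] with k hk
  simp only [Function.comp_def, Measure.real]
  rw [Measure.map_apply (by fun_prop) measurableSet_Iic]
  congr 2
  ext ω
  have hk' : (0:ℝ) < √k := by simpa using hk
  simp only [Set.mem_preimage, Set.mem_Iic, Set.mem_ofPred_eq, hmean]
  rw [inv_mul_le_iff₀ hk', S]
  constructor <;> intro h <;> linarith

end Ren

namespace Ren
open MeasureTheory ProbabilityTheory Topology
variable {π : Measure ℝ} {ρ ℓ : ℝ}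

lemma cdf_cont (G : Measure ℝ) [IsProbabilityMeasure G] [NullSingletonClass G] :
    Continuous (fun ζ => G.real (Set.Iic ζ)) := by
  simp_rw [← cdf_eq_real]
  rw [continuous_iff_continuousAt]
  intro a
  rw [continuousAt_iff_continuous_left'_right']
  constructor
  · rw [(cdf G).mono.continuousWithinAt_Iio_iff_leftLim_eq]
    have h := (cdf G).measure_singleton a
    rw [measure_cdf, measure_singleton] at h
    have h1 := (cdf G).mono.leftLim_le (le_refl a)
    have := ENNReal.ofReal_eq_zero.1 h.symm
    linarith
  · exact ((cdf G).right_continuous a).mono Set.Ioi_subset_Ici_self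

lemma clt_moving [IsProbabilityMeasure π] (h2 : MemLp id 2 π) (hV : Var[id; π] ≠ 0)
    {ι : Type*} {L : Filter ι} {k : ι → ℕ} (hk : Tendsto k L atTop) {y : ι → ℝ} {ζ : ℝ}
    (hy : Tendsto (fun i => (y i - k i * (∫ s, s ∂π)) / √(k i)) L (𝓝 ζ)) :
    Tendsto (fun i => (Q π).real {ω | S (k i) ω ≤ y i}) L
      (𝓝 ((gaussianReal 0 Var[id; π].toNNReal).real (Set.Iic ζ))) := by
  have hne : Var[id; π].toNNReal ≠ 0 := by
    have := (variance_nonneg (id : ℝ → ℝ) π).lt_of_ne' hV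
    simpa using this
  have := nullSingletonClass_gaussianReal (μ := 0) hne
  have hc := (cdf_cont (gaussianReal 0 Var[id; π].toNNReal)).tendsto ζ
  rw [tendsto_order]
  constructor
  · intro a ha
    obtain ⟨ζ', h1, h2'⟩ := ((hc.mono_left nhdsWithin_le_nhds).eventually_const_lt ha |>.and
      (self_mem_nhdsWithin (a := ζ) (s := Set.Iio ζ))).exists
    filter_upwards [hk.eventually ((clt h2 ζ' hV).eventually_const_lt h1), hy.eventually_const_lt h2',
      hk.eventually_gt_atTop 0] with i h3 h4 h5
    refine h3.trans_le (measureReal_mono ?_)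
    intro ω hω
    have hk' : (0:ℝ) < √(k i) := by simpa using h5
    simp only [Set.mem_ofPred_eq] at hω ⊢
    rw [lt_div_iff₀ hk'] at h4
    linarith
  · intro a ha
    obtain ⟨ζ', h1, h2'⟩ := ((hc.mono_left nhdsWithin_le_nhds).eventually_lt_const ha |>.and
      (self_mem_nhdsWithin (a := ζ) (s := Set.Ioi ζ))).exists
    filter_upwards [hk.eventually ((clt h2 ζ' hV).eventually_lt_const h1), hy.eventually_lt_const h2',
      hk.eventually_gt_atTop 0] with i h3 h4 h5
    refine lt_of_le_of_lt (measureReal_mono ?_) h3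
    intro ω hω
    have hk' : (0:ℝ) < √(k i) := by simpa using h5
    simp only [Set.mem_ofPred_eq] at hω ⊢
    rw [div_lt_iff₀ hk'] at h4
    linarith

lemma norm_lim {ι : Type*} {L : Filter ι} {x : ι → ℝ} {k : ι → ℕ} {m1 z : ℝ} (hm : 0 < m1)
    (hx : Tendsto x L atTop)
    (hk : Tendsto (fun i => ((k i : ℝ) - x i / m1) / √(x i)) L (𝓝 z)) :
    Tendsto k L atTop ∧ ∀ A : ℝ, Tendsto (fun i => (x i - A - k i * m1) / √(k i)) L (𝓝 (- (z * m1 * √m1))) := by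
  have hs : Tendsto (fun i => √(x i)) L atTop := Real.tendsto_sqrt_atTop.comp hx
  have h1 : Tendsto (fun i => (k i : ℝ) / x i) L (𝓝 (1 / m1)) := by
    have := (hk.mul hs.inv_tendsto_atTop).add_const (1 / m1)
    rw [mul_zero, zero_add] at this
    refine this.congr' ?_
    filter_upwards [hx.eventually_gt_atTop 0] with i hi
    have h2 := Real.sq_sqrt hi.le
    have h3 := Real.sqrt_pos.2 hi
    simp only [Pi.inv_apply]
    have : ((k i : ℝ) - x i / m1) / √(x i) * (√(x i))⁻¹ = ((k i : ℝ) - x i / m1) / (√(x i))^2 := by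
      field_simp
    rw [this, h2]; field_simp; ring
  have h2 : Tendsto (fun i => (k i : ℝ)) L atTop := by
    have := Tendsto.pos_mul_atTop (by positivity) h1 hx
    refine this.congr' ?_
    filter_upwards [hx.eventually_gt_atTop 0] with i hi
    field_simp
  refine ⟨tendsto_natCast_atTop_iff.1 h2, fun A => ?_⟩
  have h3 : Tendsto (fun i => √(x i / k i)) L (𝓝 √m1) := by
    have := (h1.inv₀ (by positivity)).sqrt
    simpa using this
  have h4 : Tendsto (fun i => A / √(k i)) L (𝓝 0) :=
    (Real.tendsto_sqrt_atTop.comp h2).const_div_atTop A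
  have h5 := ((hk.mul h3).mul_const (-m1)).sub h4
  have : z * √m1 * -m1 - 0 = - (z * m1 * √m1) := by ring
  rw [this] at h5
  refine h5.congr' ?_
  filter_upwards [hx.eventually_gt_atTop 0, h2.eventually_gt_atTop 0] with i hi hi'
  have h6 := Real.sqrt_pos.2 hi
  have h7 := Real.sqrt_pos.2 hi'
  rw [Real.sqrt_div hi.le]
  field_simp
  ring

lemma clt_Y (H : Hyp π ρ ℓ) {D : Set ℝ} (hD : ∀ᵐ s ∂π, s ∈ D) (hpos : ∀ a ∈ D, 0 < π.real {a})
    (h2 : MemLp id 2 π) (hV : Var[id; π] ≠ 0)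
    {ι : Type*} {L : Filter ι} {x : ι → ℝ} {k : ι → ℕ} {z : ℝ} 
    (hx : Tendsto x L atTop)
    (hk : Tendsto (fun i => ((k i : ℝ) - x i / (∫ s, s ∂π)) / √(x i)) L (𝓝 z)) :
    Tendsto (fun i => (∑' m, B π ρ (m + k i) (x i)) / v π ρ (x i)) L
      (𝓝 ((gaussianReal 0 Var[id; π].toNNReal).real (Set.Iic (- (z * (∫ s, s ∂π) * √(∫ s, s ∂π)))))) := by
  have := H.prob
  have hint : Integrable id π := h2.integrable (by norm_num)
  have hm := mean_pos H hint
  obtain ⟨c, φ0, φ, hL⟩ := v_limit H hD hpos hint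
  obtain ⟨hk1, hk2⟩ := norm_lim hm hx hk
  set ζ := - (z * (∫ s, s ∂π) * √(∫ s, s ∂π))
  set F : ℝ → ι → ℝ := fun A i => (Q π).real {ω | S (k i) ω ≤ x i - A} with hF
  have hFl (A : ℝ) : Tendsto (F A) L (𝓝 ((gaussianReal 0 Var[id; π].toNNReal).real (Set.Iic ζ))) :=
    clt_moving h2 hV hk1 (hk2 A)
  set T : ι → ℝ := fun i => ∑' m, B π ρ (m + k i) (x i) with hT
  have hF01 (A : ℝ) (i : ι) : |F A i| ≤ 1 := by
    rw [abs_of_nonneg measureReal_nonneg]; exact measureReal_le_one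
  have hms (A : ℝ) (i : ι) : MeasurableSet {ω | S (k i) ω ≤ x i - A} := 
    measurableSet_le (S_meas _) measurable_const
  have key (ε A : ℝ) (hε : 0 < ε) (hA : 0 ≤ A) (hAv : ∀ y ≥ A, |v π ρ y - c * φ y| ≤ ε) (i : ι) :
      |T i - c * φ (x i) * F 0 i| ≤ ε + (CC ρ ℓ + c) * (F 0 i - F A i) := by
    have e1 : c * φ (x i) * F 0 i = ∫ ω, {ω | S (k i) ω ≤ x i - 0}.indicator (fun _ => c * φ (x i)) ω ∂(Q π) := by
      rw [integral_indicator_const _ (hms 0 i), smul_eq_mul, mul_comm]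
    have i1 : Integrable (fun ω => {ω | S (k i) ω ≤ x i - 0}.indicator (fun _ => c * φ (x i)) ω) (Q π) :=
      (integrable_const _).indicator (hms 0 i)
    have i2 : Integrable (fun ω => v π ρ (x i - S (k i) ω)) (Q π) :=
      Integrable.of_bound ((v_meas H).comp (measurable_const.sub (S_meas _))).aestronglyMeasurable (CC ρ ℓ)
        (ae_of_all _ fun z => v_abs H _)
    have i3 : Integrable (fun ω => (CC ρ ℓ + c) * ({ω | S (k i) ω ≤ x i - 0}.indicator (fun _ => (1:ℝ)) ω -
          {ω | S (k i) ω ≤ x i - A}.indicator (fun _ => (1:ℝ)) ω)) (Q π) := 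
      (((integrable_const _).indicator (hms 0 i)).sub ((integrable_const _).indicator (hms A i))).const_mul _
    have e2 : ε + (CC ρ ℓ + c) * (F 0 i - F A i) = ∫ ω, (ε + (CC ρ ℓ + c) * 
        ({ω | S (k i) ω ≤ x i - 0}.indicator (fun _ => (1:ℝ)) ω - {ω | S (k i) ω ≤ x i - A}.indicator (fun _ => (1:ℝ)) ω)) ∂(Q π) := by
      rw [integral_add (integrable_const _) i3, integral_const_mul, integral_sub
        ((integrable_const _).indicator (hms 0 i)) ((integrable_const _).indicator (hms A i)),
        integral_indicator_const _ (hms 0 i), integral_indicator_const _ (hms A i)]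
      simp [hF]
    rw [hT, e1, e2]
    simp only
    rw [tail_law H, ← integral_sub i2 i1]
    rw [← Real.norm_eq_abs]
    refine norm_integral_le_of_norm_le ((integrable_const _).add i3) ?_
    filter_upwards [S_inv hD hL.inv] with ω hω
    have hc := hL.c0
    have hφ0 := hL.φ00
    have hlo := hL.lo (x i)
    have hhi := hL.hi (x i)
    have hv0 := v_nonneg H (x i - S (k i) ω)
    have hv1 := v_le H (x i - S (k i) ω)
    have hcφ : c * φ (x i) ≤ c := by nlinarith
    have hcφ0 : 0 ≤ c * φ (x i) := by apply mul_nonneg <;> linarith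
    rw [Real.norm_eq_abs]
    simp only [Set.indicator, Set.mem_ofPred_eq, sub_zero]
    by_cases h1 : S (k i) ω ≤ x i - A
    · have h0 : S (k i) ω ≤ x i := by linarith
      simp only [h1, h0, if_true, sub_self, mul_zero, add_zero]
      have := hAv (x i - S (k i) ω) (by linarith)
      rwa [hω] at this
    · by_cases h0 : S (k i) ω ≤ x i
      · simp only [h1, h0, if_true, if_false, sub_zero, mul_one]
        rw [abs_le]; constructor <;> linarith
      · simp only [h1, h0, if_false, sub_zero, mul_zero, add_zero]
        rw [v_neg H (by linarith)]; simpa using hε.le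
  have hTl : Tendsto (fun i => T i - c * φ (x i) * F 0 i) L (𝓝 0) := by
    rw [Metric.tendsto_nhds]
    intro ε hε
    have h1 := (Metric.tendsto_nhds.1 hL.lim) (ε / 2) (by linarith)
    obtain ⟨A, hA⟩ := (h1.and (eventually_ge_atTop 0)).exists_forall_of_atTop
    have h3 := ((hFl 0).sub (hFl A)).const_mul (CC ρ ℓ + c)
    rw [sub_self, mul_zero] at h3
    filter_upwards [h3.eventually_lt_const (show 0 < ε / 2 by linarith)] with i hi
    have := key (ε / 2) A (by linarith) (hA A le_rfl).2 (fun y hy => by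
      have := (hA y hy).1
      rw [Real.dist_eq, sub_zero] at this; exact this.le) i
    rw [Real.dist_eq, sub_zero]
    linarith
  have hc := hL.c0
  have hφ0 := hL.φ00
  have hvx := hL.lim.comp hx
  have hvlow : ∀ᶠ i in L, c * φ0 / 2 ≤ v π ρ (x i) := by
    have : 0 < c * φ0 / 2 := by positivity
    filter_upwards [hvx.eventually_const_lt (show - (c * φ0 / 2) < 0 by linarith)] with i hi
    simp only [Function.comp] at hi
    have := mul_le_mul_of_nonneg_left (hL.lo (x i)) hc.le
    linarith
  have hdiff : Tendsto (fun i => T i / v π ρ (x i) - F 0 i) L (𝓝 0) := by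
    have hz : Tendsto (fun i => (|T i - c * φ (x i) * F 0 i| + |v π ρ (x i) - c * φ (x i)|) / (c * φ0 / 2)) L (𝓝 0) := by
      have := (hTl.abs.add hvx.abs).div_const (c * φ0 / 2)
      simpa using this
    refine squeeze_zero_norm' ?_ hz
    filter_upwards [hvlow] with i hi
    have hp : 0 < c * φ0 / 2 := by positivity
    have hv : 0 < v π ρ (x i) := hp.trans_le hi
    have : T i / v π ρ (x i) - F 0 i =
      ((T i - c * φ (x i) * F 0 i) - (v π ρ (x i) - c * φ (x i)) * F 0 i) / v π ρ (x i) := by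
      field_simp; ring
    rw [this, Real.norm_eq_abs, abs_div, abs_of_pos hv]
    apply div_le_div₀ (by positivity) _ hp hi
    refine (abs_sub _ _).trans ?_
    rw [abs_mul]
    have := mul_le_mul_of_nonneg_left (hF01 0 i) (abs_nonneg (v π ρ (x i) - c * φ (x i)))
    linarith
  have := hdiff.add (hFl 0)
  simpa using this

end Ren

namespace Ren
open MeasureTheory ProbabilityTheory Topology
variable {π : Measure ℝ} {ρ ℓ : ℝ}

lemma exp_le_quad (y : ℝ) : Real.exp y ≤ 1 + y + y^2 * Real.exp |y| := by
  rcases le_total |y| 1 with h | h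
  · have h1 := (abs_le.1 (Real.abs_exp_sub_one_sub_id_le h)).2
    have h2 : 1 ≤ Real.exp |y| := Real.one_le_exp (abs_nonneg y)
    nlinarith [sq_nonneg y]
  · have hy2 : 1 ≤ y^2 := by rw [← sq_abs]; nlinarith
    have h3 := Real.add_one_le_exp |y|
    rcases le_total 0 y with h0 | h0
    · rw [abs_of_nonneg h0] at *
      nlinarith [Real.exp_pos y]
    · rw [abs_of_nonpos h0] at *
      have : Real.exp y ≤ 1 := Real.exp_le_one_iff.2 h0
      nlinarith [Real.exp_pos (-y)]

lemma sq_le_exp {a s : ℝ} (ha : 0 < a) (hs : 0 ≤ s) : s^2 ≤ (2 / a^2) * Real.exp (a * s) := by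
  have := Real.quadratic_le_exp_of_nonneg (mul_nonneg ha.le hs)
  have h2 : (a * s)^2 / 2 ≤ Real.exp (a * s) := by nlinarith [mul_nonneg ha.le hs]
  rw [div_mul_eq_mul_div, le_div_iff₀ (by positivity)]
  nlinarith

lemma exp_int (H : Hyp π ρ ℓ) {θ θ0 : ℝ} (h : θ ≤ θ0) (hi : Integrable (fun s => Real.exp (θ0 * s)) π) :
    Integrable (fun s => Real.exp (θ * s)) π := by
  refine hi.mono' (by fun_prop) ?_
  filter_upwards [H.hπ] with s hs
  have := H.hℓ
  rw [Real.norm_eq_abs, abs_of_pos (Real.exp_pos _)]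
  apply Real.exp_le_exp.2
  nlinarith

lemma memLp_of_exp (H : Hyp π ρ ℓ) {θ0 : ℝ} (h0 : 0 < θ0) (hi : Integrable (fun s => Real.exp (θ0 * s)) π) :
    MemLp id 2 π := by
  rw [memLp_two_iff_integrable_sq (by fun_prop)]
  refine (hi.const_mul (2 / θ0^2)).mono' (by fun_prop) ?_
  filter_upwards [H.hπ] with s hs
  have := H.hℓ
  rw [Real.norm_eq_abs, abs_of_nonneg (by positivity)]
  exact sq_le_exp h0 (by simp only [id]; linarith)

lemma M_bound (H : Hyp π ρ ℓ) {θ0 : ℝ} (h0 : 0 < θ0) (hi : Integrable (fun s => Real.exp (θ0 * s)) π) :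
    ∃ C, 0 ≤ C ∧ ∀ θ, |θ| ≤ θ0 / 2 → 
      ∫ s, Real.exp (θ * s) ∂π ≤ Real.exp (θ * (∫ s, s ∂π) + C * θ^2) := by
  have := H.prob
  refine ⟨(2 / (θ0/2)^2) * ∫ s, Real.exp (θ0 * s) ∂π, mul_nonneg (by positivity) (integral_nonneg fun s => (Real.exp_pos _).le), ?_⟩
  intro θ hθ
  have hint : Integrable (fun s : ℝ => s) π := (memLp_of_exp H h0 hi).integrable (by norm_num)
  have hb : ∫ s, Real.exp (θ * s) ∂π ≤ ∫ s, (1 + θ * s + θ^2 * (2 / (θ0/2)^2) * Real.exp (θ0 * s)) ∂π := by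
    refine integral_mono_ae (exp_int H (by linarith [le_abs_self θ]) hi) 
      (((integrable_const _).add (hint.const_mul _)).add (hi.const_mul _)) ?_
    filter_upwards [H.hπ] with s hs
    have hs0 : 0 ≤ s := by linarith [H.hℓ]
    refine (exp_le_quad _).trans ?_
    have e1 : Real.exp |θ * s| ≤ Real.exp (θ0 / 2 * s) := by
      apply Real.exp_le_exp.2
      rw [abs_mul, abs_of_nonneg hs0]
      exact mul_le_mul_of_nonneg_right hθ hs0
    have e2 : Real.exp (θ0 * s) = Real.exp (θ0 / 2 * s) * Real.exp (θ0 / 2 * s) := by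
      rw [← Real.exp_add]; congr 1; ring
    have e3 := sq_le_exp (show 0 < θ0 / 2 by linarith) hs0
    have e4 : s^2 * Real.exp |θ * s| ≤ (2 / (θ0/2)^2) * Real.exp (θ0 / 2 * s) * Real.exp (θ0 / 2 * s) :=
      mul_le_mul e3 e1 (Real.exp_pos _).le (by positivity)
    have e5 := mul_le_mul_of_nonneg_left e4 (sq_nonneg θ)
    rw [e2]
    nlinarith
  have hi12 : Integrable (fun s : ℝ => 1 + θ * s) π := (integrable_const _).add (hint.const_mul _)
  rw [integral_add hi12 (hi.const_mul _), 
    integral_add (integrable_const _) (hint.const_mul _), integral_const_mul, integral_const_mul] at hb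
  simp only [integral_const, probReal_univ, smul_eq_mul, one_mul] at hb
  have := Real.add_one_le_exp (θ * (∫ s, s ∂π) + (2 / (θ0/2)^2) * (∫ s, Real.exp (θ0 * s) ∂π) * θ^2)
  linarith

lemma CC_anti {r r' : ℝ} (hr : 0 < r) (h : r ≤ r') (hℓ : 0 < ℓ) : CC r' ℓ ≤ CC r ℓ := by
  have e (q : ℝ) (hq : 0 < q) : CC q ℓ = 1 + 1 / (Real.exp (q * ℓ) - 1) := by
    have : 0 < Real.exp (q * ℓ) - 1 := by have := Real.add_one_lt_exp (show q * ℓ ≠ 0 by positivity); nlinarith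
    unfold CC; field_simp; ring
  rw [e r hr, e r' (hr.trans_le h)]
  have : 0 < Real.exp (r * ℓ) - 1 := by have := Real.add_one_lt_exp (show r * ℓ ≠ 0 by positivity); nlinarith
  have h2 : Real.exp (r * ℓ) ≤ Real.exp (r' * ℓ) := Real.exp_le_exp.2 (by gcongr)
  gcongr

lemma exp_half (H : Hyp π ρ ℓ) {θ0 : ℝ} (hi : Integrable (fun s => Real.exp (θ0 * s)) π)
    {C : ℝ} (hC : 0 ≤ C) (hM : ∀ θ, |θ| ≤ θ0 / 2 → 
      ∫ s, Real.exp (θ * s) ∂π ≤ Real.exp (θ * (∫ s, s ∂π) + C * θ^2)) {x θ : ℝ} (hx : 0 < x) 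
    (hθ : |θ| ≤ θ0 / 2) (hθ2 : |θ| ≤ ρ / 2) (hθ3 : θ^2 * x = 1) :
    ∑' m, B π ρ m x * Real.exp (θ * (x - m * (∫ s, s ∂π))) ≤ Real.exp (C / ℓ) * CC (ρ / 2) ℓ := by
  have := H.prob
  obtain ⟨K, hK⟩ := exists_K H x
  rw [sum_mul_eq H hK (fun m => Real.exp (θ * (x - m * (∫ s, s ∂π))))]
  have hρ := H.hρ
  have hℓ := H.hℓ
  have hθ' := abs_le.1 hθ2
  have hθ'' := abs_le.1 hθ
  have hint := exp_int H (show θ ≤ θ0 by linarith [abs_nonneg θ]) hi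
  have hb := tilt_bound' H (show θ < ρ by linarith) hint K x hx.le
  have hM0 : 0 < ∫ s, Real.exp (θ * s) ∂π := integral_exp_pos hint
  calc ∑ m ∈ Finset.range K, B π ρ m x * Real.exp (θ * (x - m * (∫ s, s ∂π)))
      ≤ ∑ m ∈ Finset.range K, (Real.exp (C / ℓ) * Real.exp (θ * x)) * ((∫ s, Real.exp (θ*s) ∂π)⁻¹^m * B π ρ m x) := by
        refine Finset.sum_le_sum fun m _ => ?_
        by_cases hm : x < m * ℓ
        · simp [(B_props H m).zero x hm]
        push Not at hm
        rw [← mul_assoc, mul_comm (B π ρ m x)]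
        apply mul_le_mul_of_nonneg_right _ ((B_props H m).nn x)
        have h1 : Real.exp (-(θ * (∫ s, s ∂π) + C * θ^2)) ≤ (∫ s, Real.exp (θ*s) ∂π)⁻¹ := by
          rw [Real.exp_neg]
          exact inv_anti₀ hM0 (hM θ hθ)
        have h2 := pow_le_pow_left₀ (Real.exp_pos _).le h1 m
        rw [← Real.exp_nat_mul] at h2
        refine le_trans ?_ (mul_le_mul_of_nonneg_left h2 (by positivity))
        rw [← Real.exp_add, ← Real.exp_add]
        apply Real.exp_le_exp.2
        have h3 : m * (C * θ^2) ≤ C / ℓ := by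
          rw [le_div_iff₀ hℓ]
          have : (C * θ^2) * (m * ℓ) ≤ (C * θ^2) * x := mul_le_mul_of_nonneg_left hm (by positivity)
          calc m * (C * θ^2) * ℓ = (C * θ^2) * (m * ℓ) := by ring
            _ ≤ _ := this
            _ = C * (θ^2 * x) := by ring
            _ = C := by rw [hθ3, mul_one]
        linarith
    _ = (Real.exp (C / ℓ) * Real.exp (θ * x)) * ∑ m ∈ Finset.range K, ((∫ s, Real.exp (θ*s) ∂π)⁻¹^m * B π ρ m x) := by
        rw [Finset.mul_sum]
    _ ≤ (Real.exp (C / ℓ) * Real.exp (θ * x)) * (Real.exp (-θ*x) * CC (ρ - θ) ℓ) := by gcongr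
    _ = Real.exp (C / ℓ) * CC (ρ - θ) ℓ * (Real.exp (θ * x) * Real.exp (-θ*x)) := by ring
    _ = Real.exp (C / ℓ) * CC (ρ - θ) ℓ := by
        rw [← Real.exp_add]; simp
    _ ≤ _ := by
        gcongr
        exact CC_anti (by linarith) (by linarith) hℓ

lemma exp_moment (H : Hyp π ρ ℓ) {θ0 : ℝ} (h0 : 0 < θ0) (hi : Integrable (fun s => Real.exp (θ0 * s)) π) :
    ∃ C, 0 ≤ C ∧ ∀ᶠ x in atTop, ∑' m, B π ρ m x * 
      Real.exp ((∫ s, s ∂π) * (|m - x / (∫ s, s ∂π)| / √x)) ≤ C := by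
  have := H.prob
  obtain ⟨C, hC, hM⟩ := M_bound H h0 hi
  have hint : Integrable id π := (memLp_of_exp H h0 hi).integrable (by norm_num)
  have hm := mean_pos H hint
  have hρ := H.hρ
  have hCC := CC_nonneg (show 0 < ρ / 2 by linarith) H.hℓ
  refine ⟨2 * (Real.exp (C / ℓ) * CC (ρ / 2) ℓ), by positivity, ?_⟩
  have ht : Tendsto (fun x : ℝ => (√x)⁻¹) atTop (𝓝 0) := Real.tendsto_sqrt_atTop.inv_tendsto_atTop
  filter_upwards [eventually_gt_atTop 0, ht.eventually_le_const (show 0 < θ0 / 2 by linarith),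
    ht.eventually_le_const (show 0 < ρ / 2 by linarith)] with x hx h1 h2
  have hs := Real.sqrt_pos.2 hx
  have habs : |(√x)⁻¹| = (√x)⁻¹ := abs_of_pos (by positivity)
  have hsq : ((√x)⁻¹)^2 * x = 1 := by
    rw [inv_pow, Real.sq_sqrt hx.le]; field_simp
  have b1 := exp_half H hi hC hM hx (θ := (√x)⁻¹) (by rwa [habs]) (by rwa [habs]) hsq
  have b2 := exp_half H hi hC hM hx (θ := -(√x)⁻¹) (by rwa [abs_neg, habs]) (by rwa [abs_neg, habs]) (by rwa [neg_sq])
  have s1 := summable_mul H x (fun m => Real.exp ((√x)⁻¹ * (x - m * (∫ s, s ∂π))))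
  have s2 := summable_mul H x (fun m => Real.exp (-(√x)⁻¹ * (x - m * (∫ s, s ∂π))))
  have s3 := summable_mul H x (fun m => Real.exp ((∫ s, s ∂π) * (|m - x / (∫ s, s ∂π)| / √x)))
  rw [two_mul]
  refine le_trans ?_ (add_le_add b1 b2)
  rw [← s1.tsum_add s2]
  refine s3.tsum_le_tsum (fun m => ?_) (s1.add s2)
  rw [← mul_add]
  refine mul_le_mul_of_nonneg_left ?_ ((B_props H m).nn x)
  have e : (∫ s, s ∂π) * (|m - x / (∫ s, s ∂π)| / √x) = |(√x)⁻¹ * (x - m * (∫ s, s ∂π))| := by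
    rw [abs_mul, habs, abs_sub_comm, show x - m * (∫ s, s ∂π) = (x / (∫ s, s ∂π) - m) * (∫ s, s ∂π) by field_simp,
      abs_mul, abs_of_pos hm]
    ring
  rw [e, neg_mul]
  rcases abs_cases ((√x)⁻¹ * (x - m * (∫ s, s ∂π))) with h | h <;> rw [h.1]
  · linarith [Real.exp_pos (-((√x)⁻¹ * (x - m * (∫ s, s ∂π))))]
  · linarith [Real.exp_pos (((√x)⁻¹ * (x - m * (∫ s, s ∂π))))]

end Ren

namespace Ren
open MeasureTheory ProbabilityTheory Topology
variable {π : Measure ℝ} {ρ ℓ : ℝ}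

lemma gauss_moment {V β : ℝ} (hV : 0 < V) (hβ : 0 ≤ β) :
    ∫ z, |z|^β ∂(gaussianReal 0 V.toNNReal) =
      (2 * V)^(β/2) * Real.pi^(-(1:ℝ)/2) * Real.Gamma ((β+1)/2) := by
  have hne : V.toNNReal ≠ 0 := by simpa using hV
  rw [integral_gaussianReal_eq_integral_smul hne]
  simp only [gaussianPDFReal, sub_zero, Real.coe_toNNReal _ hV.le, smul_eq_mul]
  have e : ∀ z : ℝ, (√(2 * Real.pi * V))⁻¹ * Real.exp (-z^2 / (2*V)) * |z|^β =
      (fun y => (√(2 * Real.pi * V))⁻¹ * (y^β * Real.exp (-(1/(2*V)) * y^(2:ℝ)))) |z| := by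
    intro z
    simp only [Real.rpow_two, sq_abs]
    rw [show -z^2/(2*V) = -(1/(2*V)) * z^2 by ring]; ring
  rw [integral_congr_ae (ae_of_all _ e), 
    integral_comp_abs (f := fun y => (√(2 * Real.pi * V))⁻¹ * (y^β * Real.exp (-(1/(2*V)) * y^(2:ℝ)))), integral_const_mul, integral_rpow_mul_exp_neg_mul_rpow (by norm_num) (by linarith) (by positivity)]
  have e1 : (1 / (2*V))^(-(β+1)/2) = (2*V)^(β/2) * (2*V)^((1:ℝ)/2) := by
    rw [← Real.rpow_add (by positivity), one_div, Real.inv_rpow (by positivity), ← Real.rpow_neg (by positivity)]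
    congr 1; ring
  have e2 : (√(2 * Real.pi * V))⁻¹ = (2*V)^(-(1:ℝ)/2) * Real.pi^(-(1:ℝ)/2) := by
    rw [← Real.mul_rpow (by positivity) (by positivity), Real.sqrt_eq_rpow, ← Real.rpow_neg (by positivity)]
    congr 1
    · ring
    · norm_num
  have e3 : (2*V)^(-(1:ℝ)/2) * (2*V)^((1:ℝ)/2) = 1 := by
    rw [← Real.rpow_add (by positivity)]; norm_num
  rw [e1, e2]
  linear_combination ((2 * V) ^ (β / 2) * Real.pi ^ (-(1:ℝ) / 2) * Real.Gamma ((β + 1) / 2)) * e3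

lemma v_pos (H : Hyp π ρ ℓ) {x : ℝ} (hx : 0 ≤ x) : 0 < v π ρ x := by
  have h := (summable_B H x).le_tsum 0 (fun m _ => (B_props H m).nn x)
  refine lt_of_lt_of_le ?_ h
  simp [B, hx, Real.exp_pos]

lemma v_low (H : Hyp π ρ ℓ) {D : Set ℝ} (hD : ∀ᵐ s ∂π, s ∈ D) (hpos : ∀ a ∈ D, 0 < π.real {a})
    (hint : Integrable id π) : ∃ c, 0 < c ∧ ∀ᶠ x in atTop, c ≤ v π ρ x := by
  obtain ⟨c, φ0, φ, hL⟩ := v_limit H hD hpos hint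
  have hc := hL.c0
  have hφ0 := hL.φ00
  have hp : 0 < c * φ0 / 2 := by positivity
  refine ⟨c * φ0 / 2, hp, ?_⟩
  filter_upwards [hL.lim.eventually_const_lt (show - (c * φ0 / 2) < 0 by linarith)] with x hi
  have := mul_le_mul_of_nonneg_left (hL.lo x) hc.le
  linarith

/-- the law of the number of factors -/
def nu (π : Measure ℝ) (ρ x : ℝ) : Measure ℕ :=
  Measure.sum fun m => ENNReal.ofReal (B π ρ m x / v π ρ x) • Measure.dirac m

lemma nu_lint (H : Hyp π ρ ℓ) (x : ℝ) {g : ℕ → ℝ} (hg : ∀ m, 0 ≤ g m) :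
    ∫⁻ m, ENNReal.ofReal (g m) ∂(nu π ρ x) = ENNReal.ofReal ((∑' m, B π ρ m x * g m) / v π ρ x) := by
  rw [nu, lintegral_sum_measure]
  simp only [lintegral_smul_measure, lintegral_dirac, smul_eq_mul]
  have e (m : ℕ) : ENNReal.ofReal (B π ρ m x / v π ρ x) * ENNReal.ofReal (g m) =
      ENNReal.ofReal (B π ρ m x * g m / v π ρ x) := by
    rw [← ENNReal.ofReal_mul (div_nonneg ((B_props H m).nn x) (v_nonneg H x))]
    congr 1; ring
  simp_rw [e]
  rw [← ENNReal.ofReal_tsum_of_nonneg, tsum_div_const]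
  · intro m
    exact div_nonneg (mul_nonneg ((B_props H m).nn x) (hg m)) (v_nonneg H x)
  · exact (summable_mul H x g).div_const _

open Classical in
lemma nu_set (H : Hyp π ρ ℓ) (x : ℝ) (p : ℕ → Prop) :
    nu π ρ x {m | p m} = ENNReal.ofReal ((∑' m, B π ρ m x * (if p m then 1 else 0)) / v π ρ x) := by
  rw [← nu_lint H x (g := fun m => if p m then 1 else 0) (fun m => by split_ifs <;> simp),
    ← lintegral_indicator_one (by trivial)]
  congr 1; ext m
  by_cases h : p m <;> simp [h]

open Classical in
lemma tsum_ge (H : Hyp π ρ ℓ) (x : ℝ) (k : ℕ) :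
    ∑' m, B π ρ m x * (if k ≤ m then 1 else 0) = ∑' m, B π ρ (m + k) x := by
  have h := (summable_mul H x (fun m => if k ≤ m then 1 else 0)).sum_add_tsum_nat_add k
  rw [← h, Finset.sum_eq_zero]
  · simp
  · intro m hm
    have : ¬ k ≤ m := by simpa using hm
    simp [this]

open Classical in
lemma tail_split (H : Hyp π ρ ℓ) {x M t : ℝ} (hx : 0 < x) (hM : 0 < M) (ht : 0 < t) :
    (∑' m, B π ρ m x * (if t < |(m:ℝ) - x / M| / √x then 1 else 0)) / v π ρ x =
      (∑' m, B π ρ (m + (⌊x / M + t * √x⌋₊ + 1)) x) / v π ρ x +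
      (1 - (∑' m, B π ρ (m + ⌈x / M - t * √x⌉₊) x) / v π ρ x) := by
  have hs := Real.sqrt_pos.2 hx
  have hv := v_pos H hx.le
  rw [← tsum_ge H, ← tsum_ge H]
  have e (m : ℕ) : B π ρ m x * (if t < |(m:ℝ) - x / M| / √x then 1 else 0) =
      (B π ρ m x * (if ⌊x / M + t * √x⌋₊ + 1 ≤ m then 1 else 0) + B π ρ m x)
        - B π ρ m x * (if ⌈x / M - t * √x⌉₊ ≤ m then 1 else 0) := by
    have h1 : ⌊x / M + t * √x⌋₊ + 1 ≤ m ↔ x / M + t * √x < m := by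
      rw [Nat.add_one_le_iff, Nat.floor_lt (by positivity)]
    have h2 : ⌈x / M - t * √x⌉₊ ≤ m ↔ x / M - t * √x ≤ m := Nat.ceil_le
    have h3 : t < |(m:ℝ) - x / M| / √x ↔ (x / M + t * √x < m ∨ ¬ (x / M - t * √x ≤ m)) := by
      rw [lt_div_iff₀ hs, lt_abs]
      constructor
      · rintro (h | h)
        · left; linarith
        · right; linarith
      · rintro (h | h)
        · left; linarith
        · right; linarith
    simp only [h1, h2, h3]
    have hp : 0 < t * √x := by positivity
    by_cases a : x / M + t * √x < m
    · have b : x / M - t * √x ≤ m := by linarith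
      simp [a, b]
    · by_cases b : x / M - t * √x ≤ m
      · simp [a, b]
      · simp [a, b]
  simp_rw [e]
  rw [Summable.tsum_sub ((summable_mul H x _).add (summable_B H x)) (summable_mul H x _),
    Summable.tsum_add (summable_mul H x _) (summable_B H x)]
  change (_ + v π ρ x - _) / _ = _
  field_simp
  ring

lemma nu_lim (H : Hyp π ρ ℓ) {D : Set ℝ} (hD : ∀ᵐ s ∂π, s ∈ D) (hpos : ∀ a ∈ D, 0 < π.real {a})
    (h2 : MemLp id 2 π) (hV : Var[id; π] ≠ 0) {t : ℝ} (ht : 0 < t) :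
    Tendsto (fun x => nu π ρ x {m | t < |(m:ℝ) - x / (∫ s, s ∂π)| / √x}) atTop
      (𝓝 (gaussianReal 0 Var[id; π].toNNReal {z | t < |z| / ((∫ s, s ∂π) * √(∫ s, s ∂π))})) := by
  classical
  have := H.prob
  have hm := mean_pos H (h2.integrable (by norm_num))
  set M := ∫ s, s ∂π
  have hne : Var[id; π].toNNReal ≠ 0 := by
    have := (variance_nonneg (id : ℝ → ℝ) π).lt_of_ne' hV
    simpa using this
  have := nullSingletonClass_gaussianReal (μ := 0) hne
  set G := gaussianReal 0 Var[id; π].toNNReal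
  set q := M * √M with hq
  have hq0 : 0 < q := by positivity
  have eG : G {z | t < |z| / q} = ENNReal.ofReal (G.real (Set.Iic (-(t * M * √M))) + (1 - G.real (Set.Iic (-(-t * M * √M))))) := by
    have e1 : {z | t < |z| / q} = Set.Iio (-(t * q)) ∪ Set.Ioi (t * q) := by
      ext z
      simp only [Set.mem_ofPred_eq, Set.mem_union, Set.mem_Iio, Set.mem_Ioi, lt_div_iff₀ hq0, lt_abs]
      constructor <;> rintro (h | h)
      · right; linarith
      · left; linarith
      · right; linarith
      · left; linarith
    have e2 : G.real (Set.Iio (-(t * q)) ∪ Set.Ioi (t * q)) = G.real (Set.Iic (-(t * q))) + (1 - G.real (Set.Iic (t * q))) := by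
      rw [measureReal_union _ measurableSet_Ioi, measureReal_congr (Iio_ae_eq_Iic (μ := G)), 
        ← probReal_compl_eq_one_sub measurableSet_Iic, Set.compl_Iic]
      rw [Set.disjoint_left]
      intro z hz hz'
      simp only [Set.mem_Iio, Set.mem_Ioi] at hz hz'
      have : 0 < t * q := by positivity
      linarith
    rw [e1, ← ofReal_measureReal, e2, hq]
    congr 4
    · ring_nf
    · ring_nf
  rw [eG]
  have hs : Tendsto (fun x : ℝ => √x) atTop atTop := Real.tendsto_sqrt_atTop
  have hinv : Tendsto (fun x : ℝ => 1 / √x) atTop (𝓝 0) := hs.const_div_atTop 1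
  have l1 := clt_Y H hD hpos h2 hV (L := atTop) (x := fun x : ℝ => x) (k := fun x => ⌊x / M + t * √x⌋₊ + 1) (z := t)
    tendsto_id (by
      have hz : Tendsto (fun x : ℝ => t + 1 / √x) atTop (𝓝 t) := by simpa using hinv.const_add t
      refine tendsto_of_tendsto_of_tendsto_of_le_of_le' tendsto_const_nhds hz ?_ ?_
      · filter_upwards [eventually_gt_atTop 0] with x hx
        have hs := Real.sqrt_pos.2 hx
        have := Nat.lt_floor_add_one (x / M + t * √x)
        rw [le_div_iff₀ hs]
        push_cast
        change t * √x ≤ _ - x / M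
        linarith
      · filter_upwards [eventually_gt_atTop 0] with x hx
        have hs := Real.sqrt_pos.2 hx
        have := Nat.floor_le (show 0 ≤ x / M + t * √x by positivity)
        rw [div_le_iff₀ hs, add_mul, one_div, inv_mul_cancel₀ hs.ne']
        push_cast
        change _ - x / M ≤ _
        linarith)
  have l2 := clt_Y H hD hpos h2 hV (L := atTop) (x := fun x : ℝ => x) (k := fun x => ⌈x / M - t * √x⌉₊) (z := -t)
    tendsto_id (by
      have hz : Tendsto (fun x : ℝ => -t + 1 / √x) atTop (𝓝 (-t)) := by simpa using hinv.const_add (-t)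
      refine tendsto_of_tendsto_of_tendsto_of_le_of_le' tendsto_const_nhds hz ?_ ?_
      · filter_upwards [eventually_gt_atTop 0] with x hx
        have hs := Real.sqrt_pos.2 hx
        have := Nat.le_ceil (x / M - t * √x)
        rw [le_div_iff₀ hs]
        change -t * √x ≤ _ - x / M
        linarith
      · filter_upwards [eventually_gt_atTop 0, hs.eventually_ge_atTop (t * M)] with x hx hx2
        have hs := Real.sqrt_pos.2 hx
        have h0 : 0 ≤ x / M - t * √x := by
          rw [sub_nonneg, le_div_iff₀ hm]
          calc t * √x * M = (t * M) * √x := by ring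
            _ ≤ √x * √x := by gcongr
            _ = x := Real.mul_self_sqrt hx.le
        have := Nat.ceil_lt_add_one h0
        rw [div_le_iff₀ hs, add_mul, one_div, inv_mul_cancel₀ hs.ne']
        change _ - x / M ≤ _
        linarith)
  have l3 := (ENNReal.continuous_ofReal.tendsto _).comp (l1.add (l2.const_sub 1))
  refine l3.congr' ?_
  filter_upwards [eventually_gt_atTop 0] with x hx
  rw [nu_set H, tail_split H hx hm ht]
  rfl

lemma nu_tail (H : Hyp π ρ ℓ) {D : Set ℝ} (hD : ∀ᵐ s ∂π, s ∈ D) (hpos : ∀ a ∈ D, 0 < π.real {a})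
    {θ0 : ℝ} (h0 : 0 < θ0) (hi : Integrable (fun s => Real.exp (θ0 * s)) π) :
    ∃ C, 0 ≤ C ∧ ∀ᶠ x in atTop, ∀ t, nu π ρ x {m | t < |(m:ℝ) - x / (∫ s, s ∂π)| / √x} ≤ 
      ENNReal.ofReal (C * Real.exp (-(∫ s, s ∂π) * t)) := by
  classical
  have := H.prob
  have hint : Integrable id π := (memLp_of_exp H h0 hi).integrable (by norm_num)
  have hm := mean_pos H hint
  obtain ⟨c, hc, hv⟩ := v_low H hD hpos hint
  obtain ⟨C, hC, hC'⟩ := exp_moment H h0 hi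
  refine ⟨C / c, by positivity, ?_⟩
  filter_upwards [hv, hC', eventually_gt_atTop 0] with x h1 h2 hx t
  rw [nu_set H]
  apply ENNReal.ofReal_le_ofReal
  set M := ∫ s, s ∂π
  have b : ∑' m, B π ρ m x * (if t < |(m:ℝ) - x / M| / √x then 1 else 0) ≤ C * Real.exp (-M * t) := by
    calc _ ≤ ∑' m, B π ρ m x * Real.exp (M * (|m - x / M| / √x)) * Real.exp (-M * t) := by
          refine (summable_mul H x _).tsum_le_tsum (fun m => ?_) ((summable_mul H x _).mul_right _)
          rw [mul_assoc]
          refine mul_le_mul_of_nonneg_left ?_ ((B_props H m).nn x)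
          split_ifs with h
          · rw [← Real.exp_add]
            apply Real.one_le_exp
            nlinarith
          · positivity
      _ = (∑' m, B π ρ m x * Real.exp (M * (|m - x / M| / √x))) * Real.exp (-M * t) := tsum_mul_right
      _ ≤ _ := by gcongr
  rw [div_mul_eq_mul_div]
  exact div_le_div₀ (by positivity) b hc h1

theorem moment_limit (H : Hyp π ρ ℓ) {D : Set ℝ} (hD : ∀ᵐ s ∂π, s ∈ D) (hpos : ∀ a ∈ D, 0 < π.real {a})
    {θ0 : ℝ} (h0 : 0 < θ0) (hi : Integrable (fun s => Real.exp (θ0 * s)) π) (hV : Var[id; π] ≠ 0)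
    {β σ : ℝ} (hβ : 0 ≤ β) (hσ0 : 0 ≤ σ) (hσ : σ^2 = Var[id; π] / (∫ s, s ∂π)^3) :
    Tendsto (fun x => (∑' m, B π ρ m x * |(m:ℝ) - x / (∫ s, s ∂π)|^β) / v π ρ x / x^(β/2)) atTop
      (𝓝 (2^(β/2) * Real.pi^(-(1:ℝ)/2) * Real.Gamma ((β+1)/2) * σ^β)) := by
  have := H.prob
  have hM2 := memLp_of_exp H h0 hi
  have hint : Integrable id π := hM2.integrable (by norm_num)
  have hm := mean_pos H hint
  have hVp : 0 < Var[id; π] := (variance_nonneg (id : ℝ → ℝ) π).lt_of_ne' hV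
  set M := ∫ s, s ∂π with hMdef
  rcases hβ.eq_or_lt with rfl | hβ
  · have : (2:ℝ)^((0:ℝ)/2) * Real.pi^(-(1:ℝ)/2) * Real.Gamma ((0+1)/2) * σ^(0:ℝ) = 1 := by
      rw [zero_add, Real.Gamma_one_half_eq, Real.sqrt_eq_rpow]
      have : Real.pi^(-(1:ℝ)/2) * Real.pi^((1:ℝ)/2) = 1 := by
        rw [← Real.rpow_add Real.pi_pos]; norm_num
      simpa using this
    rw [this]
    refine tendsto_const_nhds.congr' ?_
    filter_upwards [eventually_ge_atTop 0] with x hx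
    have hv := v_pos H hx
    simp only [Real.rpow_zero, mul_one, zero_div, div_one]
    change 1 = v π ρ x / v π ρ x
    field_simp
  set G := gaussianReal 0 Var[id; π].toNNReal
  set q := M * √M with hq
  have hq0 : 0 < q := by positivity
  have main : Tendsto (fun x => ∫⁻ m, ENNReal.ofReal ((|(m:ℝ) - x / M| / √x)^β) ∂(nu π ρ x)) atTop
      (𝓝 (∫⁻ z, ENNReal.ofReal ((|z| / q)^β) ∂G)) := by
    have l1 (x : ℝ) := lintegral_rpow_eq_lintegral_meas_lt_mul (nu π ρ x) (f := fun m : ℕ => |(m:ℝ) - x / M| / √x)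
      (ae_of_all _ fun m => by positivity) (by fun_prop) hβ
    have l2 := lintegral_rpow_eq_lintegral_meas_lt_mul G (f := fun z => |z| / q)
      (ae_of_all _ fun m => by positivity) (by fun_prop) hβ
    simp_rw [l1]
    rw [l2]
    refine ENNReal.Tendsto.const_mul ?_ (Or.inr ENNReal.ofReal_ne_top)
    obtain ⟨C, hC, hC'⟩ := nu_tail H hD hpos h0 hi
    refine tendsto_lintegral_filter_of_dominated_convergence' 
      (fun t => ENNReal.ofReal (C * Real.exp (-M * t)) * ENNReal.ofReal (t^(β-1))) ?_ ?_ ?_ ?_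
    · refine Eventually.of_forall fun x => ?_
      refine AEMeasurable.mul ?_ (by fun_prop)
      apply Measurable.aemeasurable
      apply Antitone.measurable
      intro a b hab
      apply measure_mono
      intro m hm
      exact lt_of_le_of_lt hab hm
    · filter_upwards [hC'] with x hx
      refine ae_of_all _ fun t => ?_
      gcongr
      exact hx t
    · have hI : IntegrableOn (fun t : ℝ => C * (t^(β-1) * Real.exp (-M * t^(1:ℝ)))) (Set.Ioi 0) :=
        (integrableOn_rpow_mul_exp_neg_mul_rpow (by linarith) (by norm_num) hm).const_mul C
      have := hI.lintegral_lt_top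
      refine ne_of_lt (lt_of_le_of_lt (le_of_eq ?_) this)
      refine setLIntegral_congr_fun measurableSet_Ioi fun t ht => ?_
      simp only [Real.rpow_one]
      rw [← ENNReal.ofReal_mul (by positivity)]
      congr 1; ring
    · filter_upwards [ae_restrict_mem measurableSet_Ioi] with t ht
      exact ENNReal.Tendsto.mul_const (nu_lim H hD hpos hM2 hV ht) (Or.inr ENNReal.ofReal_ne_top)
  have hG : ∫⁻ z, ENNReal.ofReal ((|z| / q)^β) ∂G = 
      ENNReal.ofReal (2^(β/2) * Real.pi^(-(1:ℝ)/2) * Real.Gamma ((β+1)/2) * σ^β) := by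
    have hint2 : Integrable (fun z : ℝ => |z|^β) G := by
      have := (memLp_id_gaussianReal (μ := 0) (v := Var[id; π].toNNReal) β.toNNReal).integrable_norm_rpow 
        (by simpa using hβ) (by simp)
      simpa [Real.coe_toNNReal _ hβ.le] using this
    have e (z : ℝ) : (|z| / q)^β = |z|^β / q^β := Real.div_rpow (abs_nonneg z) hq0.le β
    simp_rw [e]
    rw [← ofReal_integral_eq_lintegral_ofReal (hint2.div_const _) (ae_of_all _ fun z => by positivity),
      integral_div, gauss_moment hVp hβ.le]
    congr 1
    have e1 : σ^β = (Var[id; π])^(β/2) / q^β := by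
      have : σ = √(Var[id; π]) / q := by
        rw [← sq_eq_sq₀ hσ0 (by positivity), hσ, div_pow, Real.sq_sqrt hVp.le, hq, mul_pow, Real.sq_sqrt hm.le]
        ring
      rw [this, Real.div_rpow (by positivity) hq0.le, Real.sqrt_eq_rpow, ← Real.rpow_mul hVp.le]
      congr 2; ring
    rw [e1, Real.mul_rpow (by norm_num) hVp.le]
    ring
  rw [hG] at main
  have hnn : 0 ≤ 2^(β/2) * Real.pi^(-(1:ℝ)/2) * Real.Gamma ((β+1)/2) * σ^β := by
    have := Real.Gamma_pos_of_pos (show 0 < (β+1)/2 by linarith)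
    positivity
  have m2 := (ENNReal.tendsto_toReal ENNReal.ofReal_ne_top).comp main
  rw [ENNReal.toReal_ofReal hnn] at m2
  refine m2.congr' ?_
  filter_upwards [eventually_gt_atTop 0] with x hx
  have hs := Real.sqrt_pos.2 hx
  simp only [Function.comp]
  rw [nu_lint H x (fun m => by positivity), ENNReal.toReal_ofReal]
  · rw [div_right_comm]
    congr 1
    rw [← tsum_div_const]
    refine tsum_congr fun m => ?_
    rw [Real.div_rpow (abs_nonneg _) hs.le, Real.sqrt_eq_rpow, ← Real.rpow_mul hx.le, mul_div_assoc]
    congr 3; ring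
  · exact div_nonneg (tsum_nonneg fun m => mul_nonneg ((B_props H m).nn x) (by positivity)) (v_nonneg H x)

end Ren

namespace Ren
open MeasureTheory ProbabilityTheory Topology

/-- cumulative counts -/
def cnt (P : Set ℕ) (m N : ℕ) : ℕ := ∑ n ∈ Finset.Icc 1 N, af P m n

open Classical in
/-- tuples with product at most `N` -/
def tup (P : Set ℕ) (m N : ℕ) : Finset (Fin m → ℕ) :=
  (Fintype.piFinset (fun _ => (Finset.Icc 1 N).filter (· ∈ P))).filter (fun t => ∏ i, t i ≤ N)

lemma mem_tup {P : Set ℕ} (hP : ∀ n ∈ P, 2 ≤ n) {m N : ℕ} {t : Fin m → ℕ} :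
    t ∈ tup P m N ↔ (∀ i, t i ∈ P) ∧ ∏ i, t i ≤ N := by
  classical
  simp only [tup, Finset.mem_filter, Fintype.mem_piFinset, Finset.mem_Icc]
  constructor
  · rintro ⟨h1, h2⟩; exact ⟨fun i => (h1 i).2, h2⟩
  · rintro ⟨h1, h2⟩
    refine ⟨fun i => ⟨⟨by linarith [hP _ (h1 i)], ?_⟩, h1 i⟩, h2⟩
    refine le_trans (Nat.le_of_dvd ?_ (Finset.dvd_prod_of_mem t (Finset.mem_univ i))) h2
    exact Finset.prod_pos fun j _ => by linarith [hP _ (h1 j)]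

lemma cnt_eq_card {P : Set ℕ} (hP : ∀ n ∈ P, 2 ≤ n) (m N : ℕ) : cnt P m N = (tup P m N).card := by
  classical
  rw [Finset.card_eq_sum_card_fiberwise (f := fun t => ∏ i, t i) (t := Finset.Icc 1 N), cnt]
  · refine Finset.sum_congr rfl fun n hn => ?_
    rw [af]
    apply Nat.subtype_card
    intro t
    rw [Finset.mem_filter, mem_tup hP]
    constructor
    · rintro ⟨⟨h1, _⟩, h3⟩; exact ⟨h1, h3⟩
    · rintro ⟨h1, h3⟩; exact ⟨⟨h1, by rw [h3]; exact (Finset.mem_Icc.1 hn).2⟩, h3⟩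
  · intro t ht
    have ht := (mem_tup hP).1 (Finset.mem_coe.1 ht)
    simp only [Finset.coe_Icc, Set.mem_Icc]
    refine ⟨Nat.one_le_iff_ne_zero.2 (Finset.prod_pos fun j _ => ?_).ne', ht.2⟩
    linarith [hP _ (ht.1 j)]

open Classical in
lemma cnt_succ {P : Set ℕ} (hP : ∀ n ∈ P, 2 ≤ n) (m N : ℕ) :
    cnt P (m+1) N = ∑ p ∈ (Finset.Icc 1 N).filter (· ∈ P), cnt P m (N / p) := by
  rw [cnt_eq_card hP, Finset.card_eq_sum_card_fiberwise (f := fun t => t 0) (t := (Finset.Icc 1 N).filter (· ∈ P))]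
  · refine Finset.sum_congr rfl fun p hp => ?_
    rw [Finset.mem_filter, Finset.mem_Icc] at hp
    rw [cnt_eq_card hP]
    symm
    refine Finset.card_bij (fun t _ => Fin.cons p t) ?_ ?_ ?_
    · intro t ht
      rw [mem_tup hP] at ht
      rw [Finset.mem_filter, mem_tup hP]
      refine ⟨⟨fun i => ?_, ?_⟩, by simp⟩
      · refine Fin.cases ?_ (fun j => ?_) i
        · simpa using hp.2
        · simpa using ht.1 j
      · rw [Fin.prod_cons, mul_comm]
        exact (Nat.le_div_iff_mul_le (by omega)).1 ht.2
    · intro t _ t' _ h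
      exact Fin.cons_right_injective (α := fun _ => ℕ) p h
    · intro u hu
      rw [Finset.mem_filter, mem_tup hP] at hu
      obtain ⟨⟨h1, h2⟩, h3⟩ := hu
      refine ⟨Fin.tail u, ?_, ?_⟩
      · rw [mem_tup hP]
        refine ⟨fun i => h1 _, ?_⟩
        rw [Nat.le_div_iff_mul_le (by omega), mul_comm, ← h3]
        rw [Fin.prod_univ_succ] at h2
        exact h2
      · rw [← h3]; exact Fin.cons_self_tail u
  · intro t ht
    have := (Finset.mem_filter.1 (Finset.mem_coe.1 ht)).1
    exact Finset.mem_coe.2 (by simpa using (Fintype.mem_piFinset.1 this) 0)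

lemma cnt_zero_right (P : Set ℕ) (m : ℕ) : cnt P m 0 = 0 := by simp [cnt]

lemma cnt_zero (P : Set ℕ) (hP : ∀ n ∈ P, 2 ≤ n) (N : ℕ) : cnt P 0 N = if 1 ≤ N then 1 else 0 := by
  rw [cnt_eq_card hP, tup]
  split_ifs with h
  · rw [Finset.filter_true_of_mem]
    · simp
    · intro t _; simpa using h
  · simp at h; simp [h]

lemma cnt_succ_tsum {P : Set ℕ} (hP : ∀ n ∈ P, 2 ≤ n) (m N : ℕ) :
    (cnt P (m+1) N : ℝ) = ∑' p : P, (cnt P m (N / (p:ℕ)) : ℝ) := by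
  classical
  rw [cnt_succ hP, tsum_subtype P (fun p => (cnt P m (N / p) : ℝ)), tsum_eq_sum (s := Finset.Icc 1 N)]
  · rw [Finset.sum_filter]; push_cast
    refine Finset.sum_congr rfl fun p _ => ?_
    by_cases h : p ∈ P <;> simp [h]
  · intro p hp
    by_cases h : p ∈ P
    · have : N < p := by
        have := hP p h
        simp only [Finset.mem_Icc, not_and, not_le] at hp
        exact hp (by omega)
      simp [h, Nat.div_eq_of_lt this, cnt_zero_right]
    · simp [h]

/-- the step distribution -/
def pim (P : Set ℕ) (ρ : ℝ) : Measure ℝ :=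
  Measure.sum fun p : P => ENNReal.ofReal (((p:ℕ):ℝ)^(-ρ)) • Measure.dirac (Real.log (p:ℕ))

lemma pim_integrable {P : Set ℕ} {ρ : ℝ} {f : ℝ → ℝ} (hf : Measurable f)
    (hs : Summable fun p : P => ((p:ℕ):ℝ)^(-ρ) * |f (Real.log (p:ℕ))|) : Integrable f (pim P ρ) := by
  refine ⟨hf.aestronglyMeasurable, ?_⟩
  rw [hasFiniteIntegral_iff_norm, pim, lintegral_sum_measure]
  simp only [lintegral_smul_measure, lintegral_dirac, smul_eq_mul]
  have e (p : P) : ENNReal.ofReal (((p:ℕ):ℝ)^(-ρ)) * ENNReal.ofReal ‖f (Real.log (p:ℕ))‖ =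
      ENNReal.ofReal (((p:ℕ):ℝ)^(-ρ) * |f (Real.log (p:ℕ))|) := by
    rw [← ENNReal.ofReal_mul (by positivity), Real.norm_eq_abs]
  simp_rw [e]
  rw [← ENNReal.ofReal_tsum_of_nonneg (fun p => by positivity) hs]
  exact ENNReal.ofReal_lt_top

lemma pim_integral {P : Set ℕ} {ρ : ℝ} {f : ℝ → ℝ} (hf : Integrable f (pim P ρ)) :
    ∫ s, f s ∂(pim P ρ) = ∑' p : P, ((p:ℕ):ℝ)^(-ρ) * f (Real.log (p:ℕ)) := by
  rw [pim, integral_sum_measure hf]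
  refine tsum_congr fun p => ?_
  rw [integral_smul_measure, integral_dirac, ENNReal.toReal_ofReal (by positivity), smul_eq_mul]

lemma pim_ae {P : Set ℕ} {ρ : ℝ} {q : ℝ → Prop} (h : ∀ p ∈ P, q (Real.log (p:ℕ))) : ∀ᵐ s ∂(pim P ρ), q s := by
  rw [pim, Measure.ae_sum_iff]
  intro p
  refine Measure.ae_smul_measure ?_ _
  rw [ae_dirac_eq]
  exact h p p.2

lemma pim_atom {P : Set ℕ} {ρ : ℝ} (hP : ∀ n ∈ P, 2 ≤ n) {p : ℕ} (hp : p ∈ P) : 0 < pim P ρ {Real.log p} := by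
  have h := Measure.le_sum (fun p : P => ENNReal.ofReal (((p:ℕ):ℝ)^(-ρ)) • Measure.dirac (Real.log (p:ℕ))) ⟨p, hp⟩
    {Real.log p}
  refine lt_of_lt_of_le ?_ h
  have : (0:ℝ) < p := by have := hP p hp; positivity
  simp only [Measure.smul_apply, smul_eq_mul]
  simp [Real.rpow_pos_of_pos this]

lemma pim_hyp {P : Set ℕ} {ρ : ℝ} (hP : ∀ n ∈ P, 2 ≤ n) (hρ : 0 < ρ) (h1 : Pval P ρ = 1) :
    Hyp (pim P ρ) ρ (Real.log 2) where
  prob := by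
    constructor
    rw [pim, Measure.sum_apply _ MeasurableSet.univ]
    simp only [Measure.smul_apply, smul_eq_mul, measure_univ, mul_one]
    rw [← ENNReal.ofReal_tsum_of_nonneg (fun p => by positivity)]
    · change ENNReal.ofReal (Pval P ρ) = 1
      rw [h1]; simp
    · by_contra hns
      rw [Pval, tsum_eq_zero_of_not_summable hns] at h1
      norm_num at h1
  hρ := hρ
  hℓ := Real.log_pos (by norm_num)
  hπ := pim_ae fun p hp => Real.log_le_log (by norm_num) (by exact_mod_cast hP p hp)

lemma B_pim {P : Set ℕ} {ρ : ℝ} (hP : ∀ n ∈ P, 2 ≤ n) (H : Hyp (pim P ρ) ρ (Real.log 2)) (m : ℕ) (x : ℝ) :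
    B (pim P ρ) ρ m x = Real.exp (-ρ * x) * cnt P m ⌊Real.exp x⌋₊ := by
  induction m generalizing x with
  | zero =>
    rw [cnt_zero P hP, B]
    have : 1 ≤ ⌊Real.exp x⌋₊ ↔ 0 ≤ x := by
      rw [Nat.one_le_floor_iff, Real.one_le_exp_iff]
    simp [this]
  | succ m ih =>
    have := H.prob
    simp only [B]
    rw [pim_integral ((B_props H m).integrable x), cnt_succ_tsum hP, ← tsum_mul_left]
    refine tsum_congr fun p => ?_
    have hp : (0:ℝ) < (p:ℕ) := by have := hP p p.2; positivity
    rw [ih, ← Nat.floor_div_natCast, Real.exp_sub, Real.exp_log hp, ← mul_assoc]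
    congr 1
    rw [Real.rpow_def_of_pos hp, ← Real.exp_add]
    congr 1; ring

lemma swap_sum {P : Set ℕ} {ρ : ℝ} (hP : ∀ n ∈ P, 2 ≤ n) (H : Hyp (pim P ρ) ρ (Real.log 2)) {N : ℕ} (hN : 1 ≤ N)
    (g : ℕ → ℝ) :
    ∑' m, B (pim P ρ) ρ m (Real.log N) * g m = Real.exp (-ρ * Real.log N) * 
      ∑ n ∈ Finset.Icc 1 N, ∑' m, (af P m n : ℝ) * g m := by
  have hs (n : ℕ) (hn : n ∈ Finset.Icc 1 N) : Summable fun m => (af P m n : ℝ) * g m := by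
    have hn1 : (1:ℝ) ≤ n := by exact_mod_cast (Finset.mem_Icc.1 hn).1
    obtain ⟨K, hK⟩ := exists_K H (Real.log n)
    refine summable_of_ne_finset_zero (s := Finset.range K) fun m hm => ?_
    have h := B_zero_of_le H hK (m := m) (by simpa using hm)
    rw [B_pim hP H, Real.exp_log (by linarith), Nat.floor_natCast] at h
    have h2 : cnt P m n = 0 := by simpa [(Real.exp_pos _).ne'] using h
    rw [cnt, Finset.sum_eq_zero_iff] at h2
    have := h2 n (Finset.mem_Icc.2 ⟨(Finset.mem_Icc.1 hn).1, le_rfl⟩)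
    simp [this]
  rw [← Summable.tsum_finsetSum hs, ← tsum_mul_left]
  refine tsum_congr fun m => ?_
  have hN' : (0:ℝ) < N := by exact_mod_cast hN
  rw [B_pim hP H, Real.exp_log hN', Nat.floor_natCast, cnt, ← Finset.sum_mul]
  push_cast; ring

end Ren

/-- **Absolute central moments.** Under the stated assumptions, for every real `β ≥ 0`,
`E|Y_N - μ log N|^β ∼ 2^{β/2} π^{-1/2} Γ((β+1)/2) σ^β (log N)^{β/2}` as `N → ∞`. -/
theorem absolute_central_moments
    (P : Set ℕ) (hP : ∀ n ∈ P, 2 ≤ n) (hP2 : P.Nontrivial)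
    (hκ : 1 < PvalE P (kappa P))
    (ρ : ℝ) (hρ0 : 0 < ρ) (hρκ : kappa P < (ρ : EReal)) (hρ1 : Pval P ρ = 1)
    (μ σ : ℝ) (hμ : μ = -1 / Pderiv1 P ρ)
    (hσ0 : 0 ≤ σ) (hσ : σ ^ 2 = μ ^ 3 * Pderiv2 P ρ - μ)
    (β : ℝ) (hβ : 0 ≤ β) :
    Asymptotics.IsEquivalent atTop
      (fun N : ℕ =>
        (∑ n ∈ Finset.Icc 1 N,
            ∑' m : ℕ, (af P m n : ℝ) * |(m : ℝ) - μ * Real.log N| ^ β) / Acum P N)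
      (fun N : ℕ =>
        (2 : ℝ) ^ (β / 2) * Real.pi ^ (-(1 : ℝ) / 2) * Real.Gamma ((β + 1) / 2)
          * σ ^ β * (Real.log N) ^ (β / 2)) := by
  open Ren MeasureTheory ProbabilityTheory Topology in
  have H := pim_hyp hP hρ0 hρ1
  have := H.prob
  have hD : ∀ᵐ s ∂(pim P ρ), s ∈ (fun p : ℕ => Real.log p) '' P := pim_ae fun p hp => ⟨p, hp, rfl⟩
  have hpos : ∀ a ∈ (fun p : ℕ => Real.log p) '' P, 0 < (pim P ρ).real {a} := by
    rintro _ ⟨p, hp, rfl⟩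
    exact ENNReal.toReal_pos (pim_atom hP hp).ne' (measure_ne_top _ _)
  have hp0 (p : P) : (0:ℝ) < (p:ℕ) := by have := hP p p.2; positivity
  obtain ⟨_, ⟨r, rfl, hr⟩, hrρ⟩ := sInf_lt_iff.1 hρκ
  have hrρ : r < ρ := by exact_mod_cast hrρ
  have h0 : 0 < ρ - r := by linarith
  have hi : Integrable (fun s => Real.exp ((ρ - r) * s)) (pim P ρ) := by
    refine pim_integrable (by fun_prop) (hr.congr fun p => ?_)
    rw [abs_of_pos (Real.exp_pos _), Real.rpow_def_of_pos (hp0 p), Real.rpow_def_of_pos (hp0 p), ← Real.exp_add]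
    congr 1; ring
  have hM2 := memLp_of_exp H h0 hi
  have hint : Integrable id (pim P ρ) := hM2.integrable (by norm_num)
  have hm := mean_pos H hint
  have hV : Var[id; pim P ρ] ≠ 0 := by
    intro hV
    have hae := ae_eq_integral_of_variance_eq_zero hM2 hV
    have key (p : ℕ) (hp : p ∈ P) : Real.log p = ∫ s, id s ∂(pim P ρ) := by
      by_contra hne
      have h1 : {Real.log p} ⊆ {s | ¬ (id s = ∫ s, id s ∂(pim P ρ))} := by
        rintro _ rfl; exact hne
      have := measure_mono_null h1 hae
      exact (pim_atom hP hp).ne' this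
    obtain ⟨p, hp, q, hq, hpq⟩ := hP2
    apply hpq
    have h := (key p hp).trans (key q hq).symm
    have := Real.log_injOn_pos (hp0 ⟨p, hp⟩) (hp0 ⟨q, hq⟩) h
    exact_mod_cast this
  have e1 : Pderiv1 P ρ = - ∫ s, s ∂(pim P ρ) := by
    rw [Pderiv1, pim_integral (f := fun s => s) hint]
  have e2 : Pderiv2 P ρ = ∫ s, s^2 ∂(pim P ρ) := by
    rw [Pderiv2, pim_integral (f := fun s => s^2) hM2.integrable_sq]
  have e3 : Var[id; pim P ρ] = Pderiv2 P ρ - (∫ s, s ∂(pim P ρ))^2 := by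
    rw [variance_eq_sub hM2, e2]; simp
  have hμ' : μ = 1 / ∫ s, s ∂(pim P ρ) := by rw [hμ, e1]; field_simp
  have hσ' : σ^2 = Var[id; pim P ρ] / (∫ s, s ∂(pim P ρ))^3 := by
    rw [hσ, hμ', e3]; field_simp
  have T := moment_limit H hD hpos h0 hi hV hβ hσ0 hσ'
  have T2 := T.comp (Real.tendsto_log_atTop.comp tendsto_natCast_atTop_atTop)
  have hσp : 0 < σ := by
    refine hσ0.lt_of_ne ?_
    rintro rfl
    have : 0 < Var[id; pim P ρ] / (∫ s, s ∂(pim P ρ))^3 :=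
      div_pos ((variance_nonneg (id : ℝ → ℝ) _).lt_of_ne' hV) (by positivity)
    rw [← hσ'] at this
    norm_num at this
  have hc : (2 : ℝ) ^ (β / 2) * Real.pi ^ (-(1 : ℝ) / 2) * Real.Gamma ((β + 1) / 2) * σ ^ β ≠ 0 := by
    have := Real.Gamma_pos_of_pos (show 0 < (β+1)/2 by linarith)
    have := Real.pi_pos
    positivity
  have E := ((isEquivalent_const_iff_tendsto hc).2 T2).mul
    (IsEquivalent.refl (u := fun N : ℕ => (Real.log N) ^ (β / 2)))
  refine E.congr_left ?_
  filter_upwards [eventually_ge_atTop 2] with N hN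
  have hN1 : (1:ℝ) < N := by exact_mod_cast hN
  have hlog := Real.log_pos hN1
  simp only [Pi.mul_apply, Function.comp]
  have hw : (Real.log N)^(β/2) ≠ 0 := (Real.rpow_pos_of_pos hlog _).ne'
  rw [div_mul_cancel₀ _ hw, swap_sum hP H (by omega) (fun m => |(m:ℝ) - Real.log N / (∫ s, s ∂(pim P ρ))|^β)]
  have hv : v (pim P ρ) ρ (Real.log N) = Real.exp (-ρ * Real.log N) * Acum P N := by
    have := swap_sum hP H (N := N) (by omega) (fun _ => 1)
    simpa [v, Acum, aTot] using this
  rw [hv, mul_div_mul_left _ _ (Real.exp_pos _).ne']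
  have : ∀ m : ℕ, Real.log N / (∫ s, s ∂(pim P ρ)) = μ * Real.log N := by
    intro m; rw [hμ']; ring
  simp only [this 0]
end
end
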